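/- Let d = 2 and, for each even integer L ≥ 2, let h_L be sampled uniformly from the set of homomorphism height functions on Λ(L) := {v ∈ ℤ² : ‖v‖₁ ≤ L} which equal zero on ∂•Λ(L). Then for each i ∈ {0, 1, 2}, the probability that h_L(0,0) ≡ i (mod 3) converges to 1/3 as L → ∞ (along even L). -/

import Mathlib

/-!
The numbers `cnt N k` of height functions on the diamond of radius `2N` with value `k` at the
origin form a symmetric and log-concave sequence over even `k` (`cnt_logconcave`, by the four
functions theorem), hence they decrease in `|k|`. It follows that the probability of each residue
class modulo `3` differs from `1/3` by at most a multiple of `p0 N = P(h(0) = 0)` (`mod3_bound`,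
`probMod3_bound`). It remains to show `p0 N → 0`, that is, delocalization of the height. The
absolute value `|h|` satisfies a lattice condition on nested domains (`abs_lattice`), so `|h|` is
positively associated (`abs_fkg`) and stochastically increasing in the domain (`abs_mono`). In
particular `p0` is decreasing, and the task is to refute `p0 N ≥ c > 0` for all `N`.

Under this assumption log-concavity bounds the variance at the origin (`var_bound`), and the laws
of `|h|` converge as the domain grows (`tv_abs`). Limits are taken along an ultrafilter (`ulim`),
so that the limiting objects are only finitely additive (`PM`); they are positively associated and
invariant under the parity-preserving automorphisms of the lattice. For such a model a planar
argument applies, in which the position of a path relative to a vertex is recorded by the parity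
of its crossings of a vertical ray. If large balls have arms to infinity with probability close to
one, then two distant balls on the horizontal axis (the `gate`) are joined with high probability
(`J_likely`), and the reflection in that axis makes it likely that they belong to a connected set
enclosing the origin (`enc_likely`).

In the first stage this is applied to the nonzero vertices. If their clusters were not tight, the
origin would be enclosed by vertices of constant sign, with high probability given that the gate
avoids the zeros. When the sign is positive, exploring the nonpositive vertices from outside
leaves a domain with boundary values at least `1`. The reflection `rho`, `(x, y) ↦ (1 - x, y)`,
exchanges the parities, so it can be combined with a shift of the heights by one; comparing the
two domains, `E[h(0)² + h(1,0)²]` would exceed its value in a smaller domain by `2` (`Phi_flip`,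
`GU_ge`). Conditioning on the gate cannot raise it beyond its supremum over domains (`Phi_mix`),
which is a contradiction (`stage1_zero`). So the nonzero clusters are tight (`stage1`), and the
law of the signed height function is asymptotically invariant as well (`inv_signed`).

In the second stage take independent copies `f`, `f'` and let `D = f + f' ∘ rho - 1`, which is
always even and has mean `-1` at the origin, even conditionally on events far away (`D_mix`). Were
the vertices with `D ≥ 0` not connected to distance, `D` would be at most `-2` around the origin,
which contradicts the mean `-1`; so these vertices have arms (`arms2`), and given positive gates
they enclose the origin with high probability. Exploring the vertices with `D < 0` from outside
then shows that the contribution to the mean of `D` on this event is nonnegative (`GV_ge`),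
contradicting the conditional mean `-1` (`p0_not_bounded`).
-/

noncomputable section

namespace Stmt6

/-- Two vertices of `ℤ²` are adjacent when their `ℓ¹`-distance is `1`. -/
def adj2 (u v : ℤ × ℤ) : Prop := |u.1 - v.1| + |u.2 - v.2| = 1

/-- The `ℓ¹`-ball `Λ(L) = {v ∈ ℤ² : ‖v‖₁ ≤ L}`. -/
def Lam (L : ℕ) : Set (ℤ × ℤ) := {v | |v.1| + |v.2| ≤ (L : ℤ)}

lemma origin_mem (L : ℕ) : ((0, 0) : ℤ × ℤ) ∈ Lam L := by
  simp [Lam]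

/-- The set of homomorphism height functions on `Λ(L)` equal to `0` on `∂•Λ(L)`. -/
def HF (L : ℕ) : Set (↥(Lam L) → ℤ) :=
  {h | (∀ u v : ↥(Lam L), adj2 u.1 v.1 → |h u - h v| = 1) ∧
       (∀ v : ↥(Lam L), Even (v.1.1 + v.1.2) → Even (h v)) ∧
       (∀ v : ↥(Lam L), (∃ w, w ∉ Lam L ∧ adj2 v.1 w) → h v = 0)}

/-- The number of configurations. -/
def total (L : ℕ) : ℝ := ∑' _h : ↥(HF L), (1 : ℝ)

/-- The height at the origin. -/
def heightAt (L : ℕ) (h : ↥(HF L)) : ℤ := h.1 ⟨((0 : ℤ), (0 : ℤ)), origin_mem L⟩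

/-- The probability, under the uniform measure on `HF L`, that the height at the origin
is congruent to `i` modulo `3`. -/
def probMod3 (L : ℕ) (i : ZMod 3) : ℝ :=
  (∑' h : ↥(HF L), if ((heightAt L h : ℤ) : ZMod 3) = i then (1 : ℝ) else 0) / total L

/-! ### Height functions and the FKG inequality -/

/-- The vertices of the square lattice. -/
abbrev V := ℤ × ℤ

/-- The nearest-neighbour graph on `ℤ²`. -/
def gr : SimpleGraph V where
  Adj u v := (u.1 - v.1).natAbs + (u.2 - v.2).natAbs = 1
  symm := ⟨fun u v h => by omega⟩
  loopless := ⟨fun u h => by omega⟩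

lemma gr_adj {u v : V} : gr.Adj u v ↔ (u.1 - v.1).natAbs + (u.2 - v.2).natAbs = 1 := Iff.rfl

/-- The `ℓ¹`-norm on `ℤ²`. -/
def nrm (v : V) : ℕ := v.1.natAbs + v.2.natAbs

/-- `h` is a homomorphism height function on the finite set `Λ` with boundary values `ξ`;
off `Λ` the function `h` is required to coincide with `ξ`. -/
def IsHom (Λ : Finset V) (ξ h : V → ℤ) : Prop :=
  (∀ v, v ∉ Λ → h v = ξ v) ∧ (∀ v ∈ Λ, (h v + v.1 + v.2) % 2 = 0) ∧
    ∀ u ∈ Λ, ∀ v, gr.Adj u v → (h u - h v).natAbs = 1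

lemma isHom_finite (Λ : Finset V) (ξ : V → ℤ) : {h | IsHom Λ ξ h}.Finite := by
  classical
  obtain ⟨M, hM⟩ : ∃ M : ℤ, ∀ v ∈ Λ, v.1 < M := by
    obtain ⟨M, hM⟩ := (Λ.image Prod.fst).bddAbove
    exact ⟨M + 1, fun v hv => by
      have := hM (Finset.mem_coe.2 (Finset.mem_image_of_mem Prod.fst hv)); omega⟩
  have key : ∀ n : ℕ, ∀ v : V, M - v.1 ≤ n → ∃ S : Finset ℤ, ∀ h, IsHom Λ ξ h → h v ∈ S := by
    intro n
    induction n with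
    | zero =>
      intro v hv
      refine ⟨{ξ v}, fun h hh => ?_⟩
      have : v ∉ Λ := fun h' => by have := hM v h'; omega
      simp [hh.1 v this]
    | succ n ih =>
      intro v hv
      by_cases hvL : v ∈ Λ
      · obtain ⟨S, hS⟩ := ih (v.1 + 1, v.2) (by push_cast at hv; simp; omega)
        refine ⟨S.image (· + 1) ∪ S.image (· - 1), fun h hh => ?_⟩
        have h1 := hS h hh
        have h2 := hh.2.2 v hvL (v.1 + 1, v.2) (by simp [gr_adj])
        rw [Finset.mem_union, Finset.mem_image, Finset.mem_image]
        have : h v = h (v.1 + 1, v.2) + 1 ∨ h v = h (v.1 + 1, v.2) - 1 := by omega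
        rcases this with h3 | h3
        · exact Or.inl ⟨_, h1, h3.symm⟩
        · exact Or.inr ⟨_, h1, h3.symm⟩
      · exact ⟨{ξ v}, fun h hh => by simp [hh.1 v hvL]⟩
  choose S hS using fun v : V => key (M - v.1).toNat v (by omega)
  have hfin : (Set.pi Set.univ fun v : Λ => (S v.1 : Set ℤ)).Finite :=
    Set.Finite.pi fun v => (S v.1).finite_toSet
  refine Set.Finite.of_finite_image (f := fun (h : V → ℤ) (v : Λ) => h v.1) (hfin.subset ?_) ?_
  · rintro _ ⟨h, hh, rfl⟩ v _
    exact hS v.1 h hh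
  · intro h hh h' hh' he
    funext v
    by_cases hv : v ∈ Λ
    · exact congrFun he ⟨v, hv⟩
    · rw [hh.1 v hv, hh'.1 v hv]

/-- The finite set of homomorphism height functions on `Λ` with boundary values `ξ`. -/
def Hom (Λ : Finset V) (ξ : V → ℤ) : Finset (V → ℤ) := (isHom_finite Λ ξ).toFinset

lemma mem_Hom {Λ : Finset V} {ξ h : V → ℤ} : h ∈ Hom Λ ξ ↔ IsHom Λ ξ h := by simp [Hom]

section FKG
open Classical FinsetFamily

/-- Average of `F` over the finite set `H`. -/
def ex {β : Type*} (H : Finset β) (F : β → ℝ) : ℝ := (∑ h ∈ H, F h) / H.card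

/-- Probability of `P` for the uniform measure on the finite set `H`. -/
def pr {β : Type*} (H : Finset β) (P : β → Prop) : ℝ := ex H fun h => if P h then 1 else 0

lemma inf_isHom {Λ : Finset V} {ξ ξ' h h' : V → ℤ} (hh : IsHom Λ ξ h) (hh' : IsHom Λ ξ' h') :
    IsHom Λ (ξ ⊓ ξ') (h ⊓ h') ∧ IsHom Λ (ξ ⊔ ξ') (h ⊔ h') := by
  obtain ⟨a1, a2, a3⟩ := hh
  obtain ⟨b1, b2, b3⟩ := hh'
  have key : ∀ u ∈ Λ, ∀ v, gr.Adj u v →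
      (min (h u) (h' u) - min (h v) (h' v)).natAbs = 1 ∧
      (max (h u) (h' u) - max (h v) (h' v)).natAbs = 1 := by
    intro u hu v huv
    have e1 := a2 u hu
    have e2 := b2 u hu
    have e3 := a3 u hu v huv
    have e4 := b3 u hu v huv
    omega
  refine ⟨⟨fun v hv => ?_, fun v hv => ?_, fun u hu v huv => (key u hu v huv).1⟩,
    fun v hv => ?_, fun v hv => ?_, fun u hu v huv => (key u hu v huv).2⟩
  · simp [a1 v hv, b1 v hv]
  · have := a2 v hv; have := b2 v hv
    change (min (h v) (h' v) + v.1 + v.2) % 2 = 0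
    omega
  · simp [a1 v hv, b1 v hv]
  · have := a2 v hv; have := b2 v hv
    change (max (h v) (h' v) + v.1 + v.2) % 2 = 0
    omega

/-- The four functions theorem for sums over four finite sets. -/
lemma four_sets {α : Type*} [DistribLattice α] (H₁ H₂ H₃ H₄ : Finset α) (F G K L : α → ℝ)
    (hF : ∀ a ∈ H₁, 0 ≤ F a) (hG : ∀ a ∈ H₂, 0 ≤ G a) (hK : ∀ a ∈ H₃, 0 ≤ K a)
    (hL : ∀ a ∈ H₄, 0 ≤ L a)
    (h : ∀ a ∈ H₁, ∀ b ∈ H₂, a ⊓ b ∈ H₃ ∧ a ⊔ b ∈ H₄ ∧ F a * G b ≤ K (a ⊓ b) * L (a ⊔ b)) :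
    (∑ a ∈ H₁, F a) * ∑ a ∈ H₂, G a ≤ (∑ a ∈ H₃, K a) * ∑ a ∈ H₄, L a := by
  have n : ∀ (H : Finset α) (F : α → ℝ), (∀ a ∈ H, 0 ≤ F a) →
      (0 : α → ℝ) ≤ fun a => if a ∈ H then F a else 0 := by
    intro H F hF a
    by_cases ha : a ∈ H <;> simp [ha]
    exact hF a ha
  have := four_functions_theorem (fun a => if a ∈ H₁ then F a else 0)
    (fun a => if a ∈ H₂ then G a else 0) (fun a => if a ∈ H₃ then K a else 0)
    (fun a => if a ∈ H₄ then L a else 0) (n _ _ hF) (n _ _ hG) (n _ _ hK) (n _ _ hL) ?_ H₁ H₂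
  · have e : ∀ (H S : Finset α) (F : α → ℝ), (∀ a ∈ H, 0 ≤ F a) →
        ∑ a ∈ S, (if a ∈ H then F a else 0) ≤ ∑ a ∈ H, F a := by
      intro H S F hF
      rw [← Finset.sum_filter]
      apply Finset.sum_le_sum_of_subset_of_nonneg
      · intro a ha; exact (Finset.mem_filter.1 ha).2
      · intro a ha _; exact hF a ha
    have e' : ∀ (H : Finset α) (F : α → ℝ),
        ∑ a ∈ H, (if a ∈ H then F a else 0) = ∑ a ∈ H, F a := fun H F =>
      Finset.sum_congr rfl fun a ha => by simp [ha]
    rw [e', e'] at this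
    refine this.trans (mul_le_mul (e _ _ _ hK) (e _ _ _ hL) ?_ (Finset.sum_nonneg hK))
    exact Finset.sum_nonneg fun a _ => n _ _ hL a
  · intro a b
    by_cases ha : a ∈ H₁
    · by_cases hb : b ∈ H₂
      · obtain ⟨h1, h2, h3⟩ := h a ha b hb
        simpa [ha, hb, h1, h2] using h3
      · simpa [hb] using mul_nonneg (n _ _ hK _) (n _ _ hL _)
    · simpa [ha] using mul_nonneg (n _ _ hK _) (n _ _ hL _)

/-- The FKG inequality on a finite sublattice. -/
lemma fkg_gen {α : Type*} [DistribLattice α] (H : Finset α)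
    (hH : ∀ a ∈ H, ∀ b ∈ H, a ⊓ b ∈ H ∧ a ⊔ b ∈ H) (F G : α → ℝ)
    (hF : ∀ a, 0 ≤ F a) (hG : ∀ a, 0 ≤ G a) (mF : Monotone F) (mG : Monotone G) :
    (∑ a ∈ H, F a) * ∑ a ∈ H, G a ≤ H.card * ∑ a ∈ H, F a * G a := by
  have := four_sets H H H H F G (fun _ => 1) (fun a => F a * G a) (fun a _ => hF a)
    (fun a _ => hG a) (fun _ _ => zero_le_one) (fun a _ => mul_nonneg (hF a) (hG a))
    (fun a ha b hb => ⟨(hH a ha b hb).1, (hH a ha b hb).2, ?_⟩)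
  · simpa using this
  · rw [one_mul]
    exact mul_le_mul (mF le_sup_left) (mG le_sup_right) (hG _) (hF _)

/-- Consequence of the four functions theorem for two images: a lattice condition for the numbers
of preimages gives a correlation inequality. -/
lemma four_push {α β γ : Type*} [DistribLattice α] (H₁ : Finset β) (H₂ : Finset γ)
    (q₁ : β → α) (q₂ : γ → α)
    (hA : ∀ a b, (H₁.filter fun h => q₁ h = a).card * (H₂.filter fun h => q₂ h = b).card ≤
      (H₂.filter fun h => q₂ h = a ⊓ b).card * (H₁.filter fun h => q₁ h = a ⊔ b).card)
    (F G : α → ℝ) (hF : ∀ a, 0 ≤ F a) (hG : ∀ a, 0 ≤ G a)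
    (mG : ∀ h ∈ H₁, ∀ h' ∈ H₂, G (q₁ h) ≤ G (q₁ h ⊔ q₂ h'))
    (mF : Monotone F) :
    (∑ h ∈ H₁, G (q₁ h)) * ∑ h ∈ H₂, F (q₂ h) ≤ H₂.card * ∑ h ∈ H₁, G (q₁ h) * F (q₁ h) := by
  have e1 : ∀ (G : α → ℝ), ∑ h ∈ H₁, G (q₁ h) =
      ∑ a ∈ H₁.image q₁, (H₁.filter fun h => q₁ h = a).card * G a := fun G => by
    rw [Finset.sum_comp]; simp
  have e2 : ∀ (G : α → ℝ), ∑ h ∈ H₂, G (q₂ h) =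
      ∑ a ∈ H₂.image q₂, (H₂.filter fun h => q₂ h = a).card * G a := fun G => by
    rw [Finset.sum_comp]; simp
  have e3 : (H₂.card : ℝ) = ∑ h ∈ H₂, (fun _ : α => (1 : ℝ)) (q₂ h) := by simp
  rw [e1 G, e2 F, e3, e2 fun _ => 1, e1 fun a => G a * F a]
  apply four_sets
  · intro a _; exact mul_nonneg (Nat.cast_nonneg _) (hG _)
  · intro a _; exact mul_nonneg (Nat.cast_nonneg _) (hF _)
  · intro a _; simp
  · intro a _; exact mul_nonneg (Nat.cast_nonneg _) (mul_nonneg (hG _) (hF _))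
  · intro a ha b hb
    obtain ⟨h, hh, rfl⟩ := Finset.mem_image.1 ha
    obtain ⟨h', hh', rfl⟩ := Finset.mem_image.1 hb
    have c := hA (q₁ h) (q₂ h')
    have p1 : 0 < (H₁.filter fun k => q₁ k = q₁ h).card :=
      Finset.card_pos.2 ⟨h, by simp [hh]⟩
    have p2 : 0 < (H₂.filter fun k => q₂ k = q₂ h').card :=
      Finset.card_pos.2 ⟨h', by simp [hh']⟩
    have p := (Nat.mul_pos p1 p2).trans_le c
    have p3 := Nat.pos_of_mul_pos_right p
    have p4 := Nat.pos_of_mul_pos_left p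
    refine ⟨?_, ?_, ?_⟩
    · obtain ⟨k, hk⟩ := Finset.card_pos.1 (Nat.pos_of_ne_zero fun h0 => by simp [h0] at p :
        0 < (H₂.filter fun k => q₂ k = q₁ h ⊓ q₂ h').card)
      rw [Finset.mem_filter] at hk
      exact Finset.mem_image.2 ⟨k, hk⟩
    · obtain ⟨k, hk⟩ := Finset.card_pos.1 (Nat.pos_of_ne_zero fun h0 => by simp [h0] at p :
        0 < (H₁.filter fun k => q₁ k = q₁ h ⊔ q₂ h').card)
      rw [Finset.mem_filter] at hk
      exact Finset.mem_image.2 ⟨k, hk⟩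
    · have c' : ((H₁.filter fun k => q₁ k = q₁ h).card : ℝ) *
          (H₂.filter fun k => q₂ k = q₂ h').card ≤
          (H₂.filter fun k => q₂ k = q₁ h ⊓ q₂ h').card *
          (H₁.filter fun k => q₁ k = q₁ h ⊔ q₂ h').card := by exact_mod_cast c
      have d : G (q₁ h) * F (q₂ h') ≤ G (q₁ h ⊔ q₂ h') * F (q₁ h ⊔ q₂ h') :=
        mul_le_mul (mG h hh h' hh') (mF le_sup_right) (hF _) (hG _)
      have := mul_le_mul c' d (mul_nonneg (hG _) (hF _)) (by positivity)
      linarith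

end FKG

/-! ### The absolute value of a height function -/

section Abs
open Classical

/-- The pointwise absolute value of a height function. -/
def absf (h : V → ℤ) : V → ℕ := fun v => (h v).natAbs

/-- The integer with absolute value `m`, positive if `P` holds and negative otherwise. -/
def sg (P : Prop) (m : ℕ) : ℤ := if P then m else -m

lemma sg_natAbs (P : Prop) (m : ℕ) : (sg P m).natAbs = m := by
  unfold sg; split_ifs <;> simp

lemma sg_mod (P : Prop) (m : ℕ) (k : ℤ) : (sg P m + k) % 2 = ((m : ℤ) + k) % 2 := by
  unfold sg; split_ifs <;> omega

lemma sg_diff {P P' : Prop} {m m' : ℕ} (h : m = m' + 1 ∨ m' = m + 1)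
    (hP : m ≠ 0 → m' ≠ 0 → (P ↔ P')) : (sg P m - sg P' m').natAbs = 1 := by
  by_cases h1 : m = 0
  · subst h1; unfold sg; split_ifs <;> omega
  · by_cases h2 : m' = 0
    · subst h2; unfold sg; split_ifs <;> omega
    · have := hP h1 h2
      by_cases hp : P
      · have hp' := this.1 hp; simp only [sg, hp, hp', if_true]; omega
      · have hp' : ¬ P' := fun h => hp (this.2 h)
        simp only [sg, hp, hp', if_false]; omega

lemma iff_of_sg {P P' : Prop} {m : ℕ} (h : sg P m = sg P' m) (hm : m ≠ 0) : P ↔ P' := by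
  unfold sg at h
  split_ifs at h with x1 x2 x2 <;> simp only [x1, x2] <;> omega

lemma sign_agree {x y : ℤ} (h : (x - y).natAbs = 1) (hx : x ≠ 0) (hy : y ≠ 0) :
    0 < x ↔ 0 < y := by omega

lemma min_step {x y x' y' : ℤ} {k : ℤ} (h1 : (x + k) % 2 = 0) (h2 : (x' + k) % 2 = 0)
    (h3 : (x - y).natAbs = 1) (h4 : (x' - y').natAbs = 1) :
    min x.natAbs x'.natAbs = min y.natAbs y'.natAbs + 1 ∨
    min y.natAbs y'.natAbs = min x.natAbs x'.natAbs + 1 := by omega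

lemma max_step {x y x' y' : ℤ} {k : ℤ} (h1 : (x + k) % 2 = 0) (h2 : (x' + k) % 2 = 0)
    (h3 : (x - y).natAbs = 1) (h4 : (x' - y').natAbs = 1) :
    max x.natAbs x'.natAbs = max y.natAbs y'.natAbs + 1 ∨
    max y.natAbs y'.natAbs = max x.natAbs x'.natAbs + 1 := by omega

lemma ne_of_zero {x x' y' a b : ℤ} (hx : x = 0) (h : max x.natAbs x'.natAbs ≠ 0)
    (p : (x + a + b) % 2 = 0) (q : (x' + a + b) % 2 = 0) (r : (x' - y').natAbs = 1) :
    x' ≠ 0 ∧ y' ≠ 0 := by omega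

lemma ne_zero_of_max {x x' : ℤ} (hx : x = 0) (h : max x.natAbs x'.natAbs ≠ 0) : x' ≠ 0 := by
  omega

lemma ne_zero_of_natAbs {x x' : ℤ} (hx : x ≠ 0) (h : x.natAbs = x'.natAbs) : x' ≠ 0 := by
  omega

lemma natAbs_comm (x y : ℤ) : (x - y).natAbs = (y - x).natAbs := by omega

lemma eq_of_sign {x y z : ℤ} (h1 : x.natAbs = y.natAbs) (h : (0 < x ↔ 0 < z) ↔ (0 < y ↔ 0 < z)) :
    x = y := by
  by_cases hz : 0 < z <;> simp only [hz, iff_true, iff_false] at h <;> omega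

lemma eq_of_agr {x y x' y' z z' : ℤ} (h1 : x.natAbs = y.natAbs) (h2 : x'.natAbs = y'.natAbs)
    (s : x ≠ 0 → x' ≠ 0 → ((0 < x ↔ 0 < z) ↔ (0 < x' ↔ 0 < z')))
    (t : y ≠ 0 → y' ≠ 0 → ((0 < y ↔ 0 < z) ↔ (0 < y' ↔ 0 < z')))
    (e : max x.natAbs x'.natAbs ≠ 0 →
      (((x ≠ 0 ∧ (0 < x ↔ 0 < z)) ∨ (x = 0 ∧ (0 < x' ↔ 0 < z'))) ↔
      ((y ≠ 0 ∧ (0 < y ↔ 0 < z)) ∨ (y = 0 ∧ (0 < y' ↔ 0 < z'))))) : x = y ∧ x' = y' := by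
  by_cases hx : x = 0
  · have hy : y = 0 := by omega
    refine ⟨by omega, ?_⟩
    by_cases hx' : x' = 0
    · omega
    · have := e (by omega)
      simp only [hx, hy, ne_eq, not_true, false_and, true_and, false_or] at this
      exact eq_of_sign h2 this
  · have hy : y ≠ 0 := by omega
    have := e (by omega)
    simp only [hx, hy, ne_eq, not_false_iff, true_and, false_and, or_false] at this
    refine ⟨eq_of_sign h1 this, ?_⟩
    by_cases hx' : x' = 0
    · omega
    · rw [s hx hx', t hy (by omega)] at this
      exact eq_of_sign h2 this

/-- The height function with absolute value `min |h| |h'|`, nonnegative where the signs of `h` and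
`h'` agree and nonpositive where they differ. -/
def mulf (h h' : V → ℤ) : V → ℤ := fun v =>
  sg (0 < h v ↔ 0 < h' v) (min (h v).natAbs (h' v).natAbs)

/-- Whether the pair `(h, h')` has the same sign at `v` as the reference pair `(h₀, h₀')`. -/
def agr (h₀ h₀' h h' : V → ℤ) (v : V) : Prop :=
  (h v ≠ 0 ∧ (0 < h v ↔ 0 < h₀ v)) ∨ (h v = 0 ∧ (0 < h' v ↔ 0 < h₀' v))

lemma agr_left {h₀ h₀' h h' : V → ℤ} {v : V} (n : h v ≠ 0) :
    agr h₀ h₀' h h' v ↔ (0 < h v ↔ 0 < h₀ v) := by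
  unfold agr; tauto

lemma agr_right {h₀ h₀' h h' : V → ℤ} {v : V} (n : h' v ≠ 0)
    (s : h v ≠ 0 → h' v ≠ 0 → ((0 < h v ↔ 0 < h₀ v) ↔ (0 < h' v ↔ 0 < h₀' v))) :
    agr h₀ h₀' h h' v ↔ (0 < h' v ↔ 0 < h₀' v) := by
  unfold agr; tauto

lemma mulf_isHom {Λ Λ' : Finset V} (hL : Λ' ⊆ Λ) {ξ h h' : V → ℤ} (hh : IsHom Λ ξ h)
    (hh' : IsHom Λ' 0 h') : IsHom Λ' 0 (mulf h h') := by
  obtain ⟨a1, a2, a3⟩ := hh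
  obtain ⟨b1, b2, b3⟩ := hh'
  refine ⟨fun v hv => ?_, fun v hv => ?_, fun u hu v huv => ?_⟩
  · have := b1 v hv
    simp only [Pi.zero_apply] at this
    simp [mulf, this, sg]
  · have e1 := b2 v hv
    have e2 := a2 v (hL hv)
    rw [mulf, add_assoc, sg_mod]
    omega
  · have e1 := b2 u hu
    have e2 := a2 u (hL hu)
    have e3 := b3 u hu v huv
    have e4 := a3 u (hL hu) v huv
    rw [add_assoc] at e1 e2
    refine sg_diff (min_step e2 e1 e4 e3) fun n1 n2 => ?_
    rw [sign_agree e4 (by omega) (by omega), sign_agree e3 (by omega) (by omega)]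

set_option maxHeartbeats 1000000 in
/-- The lattice condition for the laws of `|h|` on nested domains, the smaller one with zero and
the larger one with nonnegative boundary values. For pairs `(h, h')` with `|h| = a`, `|h'| = b`
and a given value of `mulf h h'` (which has absolute value `a ⊓ b`), fixing a reference pair turns
`(h, h')` into a single configuration with absolute value `a ⊔ b`, injectively. -/
lemma abs_lattice {Λ Λ' : Finset V} (hL : Λ' ⊆ Λ) {ξ : V → ℤ}
    (hξ : ∀ u ∈ Λ, ∀ v, v ∉ Λ → gr.Adj u v → 0 ≤ ξ v) (a b : V → ℕ) :
    ((Hom Λ ξ).filter fun h => absf h = a).card * ((Hom Λ' 0).filter fun h => absf h = b).card ≤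
      ((Hom Λ' 0).filter fun h => absf h = a ⊓ b).card *
        ((Hom Λ ξ).filter fun h => absf h = a ⊔ b).card := by
  rw [← Finset.card_product, mul_comm]
  let Φ : (V → ℤ) × (V → ℤ) → V → ℤ := fun p => mulf p.1 p.2
  refine Finset.card_le_mul_card_image_of_maps_to (f := Φ) ?_ _ ?_
  · rintro ⟨h, h'⟩ hp
    simp only [Finset.mem_product, Finset.mem_filter, mem_Hom] at hp
    obtain ⟨⟨hh, ea⟩, hh', eb⟩ := hp
    rw [Finset.mem_filter, mem_Hom]
    refine ⟨mulf_isHom hL hh hh', ?_⟩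
    funext v
    simp only [absf, Φ, ← ea, ← eb, Pi.inf_apply, mulf, sg_natAbs]
  · intro s hs
    rcases Finset.eq_empty_or_nonempty (Finset.filter (fun p => Φ p = s)
      (((Hom Λ ξ).filter fun h => absf h = a) ×ˢ ((Hom Λ' 0).filter fun h => absf h = b)))
      with h0 | ⟨⟨h0, h0'⟩, h00⟩
    · rw [h0]; simp
    simp only [Finset.mem_product, Finset.mem_filter, mem_Hom] at h00
    obtain ⟨⟨⟨⟨a1, a2, a3⟩, ea⟩, ⟨b1, b2, b3⟩, eb⟩, hs0⟩ := h00
    let Ψ : (V → ℤ) × (V → ℤ) → V → ℤ := fun p v =>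
      if v ∈ Λ then sg (agr h0 h0' p.1 p.2 v) (max (p.1 v).natAbs (p.2 v).natAbs) else ξ v
    -- in a fibre of `Φ` the relative signs of the two factors agree wherever both are visible
    have hsgn : ∀ h h' : V → ℤ, Φ (h, h') = s → absf h = a → absf h' = b →
        ∀ v, (h v).natAbs = (h0 v).natAbs ∧ (h' v).natAbs = (h0' v).natAbs ∧
        (h v ≠ 0 → h' v ≠ 0 → ((0 < h v ↔ 0 < h0 v) ↔ (0 < h' v ↔ 0 < h0' v))) := by
      intro h h' hp h1 h2 v
      have h3 : (h v).natAbs = (h0 v).natAbs := by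
        have := congrFun (h1.trans ea.symm) v; exact this
      have h4 : (h' v).natAbs = (h0' v).natAbs := by
        have := congrFun (h2.trans eb.symm) v; exact this
      refine ⟨h3, h4, fun n1 n2 => ?_⟩
      have h5 : mulf h h' v = mulf h0 h0' v := congrFun (hp.trans hs0.symm) v
      have h6 : (0 < h v ↔ 0 < h' v) ↔ (0 < h0 v ↔ 0 < h0' v) := by
        simp only [mulf, sg] at h5
        split_ifs at h5 with c1 c2 c2 <;> simp only [c1, c2] <;> omega
      tauto
    refine Finset.card_le_card_of_injOn Ψ ?_ ?_
    · rintro ⟨h, h'⟩ hp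
      simp only [Finset.coe_filter, Set.mem_ofPred_eq, Finset.mem_product, Finset.mem_filter,
        mem_Hom] at hp
      obtain ⟨⟨⟨⟨c1, c2, c3⟩, ec⟩, ⟨d1, d2, d3⟩, ed⟩, hs1⟩ := hp
      have hsg := hsgn h h' hs1 ec ed
      simp only [Pi.zero_apply] at d1 b1
      have hout : ∀ v, v ∉ Λ → 0 ≤ ξ v →
          ξ v = sg (agr h0 h0' h h' v) (max (h v).natAbs (h' v).natAbs) := by
        intro v hv hx
        have hv' : v ∉ Λ' := fun h => hv (hL h)
        rw [c1 v hv, d1 v hv']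
        by_cases h0x : ξ v = 0
        · simp [h0x, sg]
        · have : agr h0 h0' h h' v := Or.inl ⟨by rw [c1 v hv]; exact h0x,
            by rw [c1 v hv, a1 v hv]⟩
          simp only [sg, this, if_true]; omega
      simp only [Finset.coe_filter, Set.mem_ofPred_eq, mem_Hom]
      have hmx : ∀ u v, u ∈ Λ → gr.Adj u v →
          max (h u).natAbs (h' u).natAbs = max (h v).natAbs (h' v).natAbs + 1 ∨
          max (h v).natAbs (h' v).natAbs = max (h u).natAbs (h' u).natAbs + 1 := by
        intro u v hu huv
        have p1 := c2 u hu
        have p2 := c3 u hu v huv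
        rw [add_assoc] at p1
        by_cases m1 : u ∈ Λ'
        · have := d2 u m1
          rw [add_assoc] at this
          exact max_step p1 this p2 (d3 u m1 v huv)
        · by_cases m2 : v ∈ Λ'
          · have q1 := d2 v m2
            have q2 := d3 v m2 u huv.symm
            rw [add_assoc] at q1
            have q3 := c2 v (hL m2)
            rw [add_assoc] at q3
            exact (max_step q3 q1 (c3 v (hL m2) u huv.symm) q2).symm
          · rw [d1 u m1, d1 v m2]; simp; omega
      have hag : ∀ u v, u ∈ Λ → gr.Adj u v → max (h u).natAbs (h' u).natAbs ≠ 0 →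
          max (h v).natAbs (h' v).natAbs ≠ 0 → (agr h0 h0' h h' u ↔ agr h0 h0' h h' v) := by
        intro u v hu huv n1 n2
        obtain ⟨s1, s2, s3⟩ := hsg u
        obtain ⟨t1, t2, t3⟩ := hsg v
        have p1 := c2 u hu
        have p2 := c3 u hu v huv
        have p3 := a3 u hu v huv
        by_cases m : h u ≠ 0 ∧ h v ≠ 0
        · have e1 := sign_agree p2 m.1 m.2
          have e2 := sign_agree p3 (ne_zero_of_natAbs m.1 s1) (ne_zero_of_natAbs m.2 t1)
          rw [agr_left m.1, agr_left m.2, e1, e2]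
        · have claim : (h' u ≠ 0 ∧ h' v ≠ 0) ∧ (h' u - h' v).natAbs = 1 ∧
              (h0' u - h0' v).natAbs = 1 := by
            by_cases hu0 : h u = 0
            · have m1 : u ∈ Λ' := by by_contra hc; exact ne_zero_of_max hu0 n1 (d1 u hc)
              have q2 := d3 u m1 v huv
              exact ⟨ne_of_zero hu0 n1 p1 (d2 u m1) q2, q2, b3 u m1 v huv⟩
            · have hv0 : h v = 0 := by tauto
              have m2 : v ∈ Λ' := by by_contra hc; exact ne_zero_of_max hv0 n2 (d1 v hc)
              have q2 := d3 v m2 u huv.symm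
              have q3 := c2 v (hL m2)
              have q4 := b3 v m2 u huv.symm
              rw [natAbs_comm (h' u), natAbs_comm (h0' u)]
              exact ⟨(ne_of_zero hv0 n2 q3 (d2 v m2) q2).symm, q2, q4⟩
          obtain ⟨⟨n3, n4⟩, r1, r2⟩ := claim
          have e1 := sign_agree r1 n3 n4
          have e2 := sign_agree r2 (ne_zero_of_natAbs n3 s2) (ne_zero_of_natAbs n4 t2)
          rw [agr_right n3 s3, agr_right n4 t3, e1, e2]
      refine ⟨⟨fun v hv => by simp [Ψ, hv], fun v hv => ?_, fun u hu v huv => ?_⟩, ?_⟩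
      · have e1 := c2 v hv
        have e2 : v ∈ Λ' → _ := d2 v
        have e3 : v ∉ Λ' → h' v = 0 := d1 v
        simp only [Ψ, if_pos hv]
        rw [add_assoc, sg_mod]
        by_cases hv' : v ∈ Λ'
        · have := e2 hv'; omega
        · have := e3 hv'; omega
      · have key := sg_diff (hmx u v hu huv) (hag u v hu huv)
        by_cases hv : v ∈ Λ
        · simpa only [Ψ, if_pos hu, if_pos hv] using key
        · rw [← hout v hv (hξ u hu v hv huv)] at key
          simpa only [Ψ, if_pos hu, if_neg hv] using key
      · funext v
        simp only [absf, Ψ, ← ec, ← ed, Pi.sup_apply]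
        have x2 := c1 v
        have p3' : v ∉ Λ' → h' v = 0 := d1 v
        by_cases hv : v ∈ Λ
        · simp only [hv, if_true, sg_natAbs]
        · have hv' : v ∉ Λ' := fun h => hv (hL h)
          simp [hv, p3' hv', x2 hv]
    · rintro ⟨h, h'⟩ hp ⟨k, k'⟩ hq he
      simp only [Finset.coe_filter, Set.mem_ofPred_eq, Finset.mem_product, Finset.mem_filter,
        mem_Hom] at hp hq
      obtain ⟨⟨⟨⟨c1, c2, c3⟩, ec⟩, ⟨d1, d2, d3⟩, ed⟩, hs1⟩ := hp
      obtain ⟨⟨⟨⟨c1', c2', c3'⟩, ec'⟩, ⟨d1', d2', d3'⟩, ed'⟩, hs1'⟩ := hq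
      have hsg := hsgn h h' hs1 ec ed
      have hsg' := hsgn k k' hs1' ec' ed'
      have key : ∀ v, h v = k v ∧ h' v = k' v := by
        intro v
        obtain ⟨s1, s2, s3⟩ := hsg v
        obtain ⟨t1, t2, t3⟩ := hsg' v
        by_cases hv : v ∈ Λ
        · have := congrFun he v
          simp only [Ψ, hv, if_true] at this
          have e : max (h v).natAbs (h' v).natAbs ≠ 0 →
              (agr h0 h0' h h' v ↔ agr h0 h0' k k' v) := by
            rw [s1, s2] at this ⊢
            rw [t1, t2] at this
            exact iff_of_sg this
          exact eq_of_agr (s1.trans t1.symm) (s2.trans t2.symm) s3 t3 e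
        · have hv' : v ∉ Λ' := fun h => hv (hL h)
          exact ⟨by rw [c1 v hv, c1' v hv], by rw [d1 v hv', d1' v hv']⟩
      rw [Prod.mk.injEq]
      exact ⟨funext fun v => (key v).1, funext fun v => (key v).2⟩

end Abs

/-! ### Expectations and correlation inequalities -/

section Ex
open Classical

/-- Indicator of a proposition. -/
def ind (p : Prop) : ℝ := if p then 1 else 0

lemma ind_true {p : Prop} (h : p) : ind p = 1 := if_pos h
lemma ind_false {p : Prop} (h : ¬ p) : ind p = 0 := if_neg h
lemma ind_nonneg (p : Prop) : 0 ≤ ind p := by unfold ind; split_ifs <;> norm_num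
lemma ind_le_one (p : Prop) : ind p ≤ 1 := by unfold ind; split_ifs <;> norm_num
lemma ind_mono {p q : Prop} (h : p → q) : ind p ≤ ind q := by
  by_cases hp : p
  · rw [ind_true hp, ind_true (h hp)]
  · rw [ind_false hp]; exact ind_nonneg q
lemma ind_and (p q : Prop) : ind (p ∧ q) = ind p * ind q := by
  by_cases hp : p <;> by_cases hq : q <;> simp [ind, hp, hq]
lemma ind_not (p : Prop) : ind (¬ p) = 1 - ind p := by
  by_cases hp : p <;> simp [ind, hp]
lemma ind_or_le (p q : Prop) : ind (p ∨ q) ≤ ind p + ind q := by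
  by_cases hp : p <;> by_cases hq : q <;> simp [ind, hp, hq]
lemma ind_split (p q : Prop) : ind p = ind (p ∧ q) + ind (p ∧ ¬ q) := by
  rw [ind_and, ind_and, ind_not]; ring

lemma pr_def {β : Type*} (H : Finset β) (P : β → Prop) : pr H P = ex H fun h => ind (P h) := rfl

variable {β : Type*} {H : Finset β}

lemma ex_congr {F G : β → ℝ} (h : ∀ a ∈ H, F a = G a) : ex H F = ex H G := by
  unfold ex; rw [Finset.sum_congr rfl h]

lemma ex_mono {F G : β → ℝ} (h : ∀ a ∈ H, F a ≤ G a) : ex H F ≤ ex H G :=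
  div_le_div_of_nonneg_right (Finset.sum_le_sum h) (Nat.cast_nonneg _)

lemma ex_nonneg {F : β → ℝ} (h : ∀ a ∈ H, 0 ≤ F a) : 0 ≤ ex H F :=
  div_nonneg (Finset.sum_nonneg h) (Nat.cast_nonneg _)

lemma ex_add (F G : β → ℝ) : ex H (fun a => F a + G a) = ex H F + ex H G := by
  simp [ex, Finset.sum_add_distrib, add_div]

lemma ex_sub (F G : β → ℝ) : ex H (fun a => F a - G a) = ex H F - ex H G := by
  simp [ex, Finset.sum_sub_distrib, sub_div]

lemma ex_neg (F : β → ℝ) : ex H (fun a => - F a) = - ex H F := by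
  simp [ex, Finset.sum_neg_distrib, neg_div]

lemma ex_mul_left (c : ℝ) (F : β → ℝ) : ex H (fun a => c * F a) = c * ex H F := by
  simp [ex, ← Finset.mul_sum, mul_div_assoc]

lemma ex_mul_right (c : ℝ) (F : β → ℝ) : ex H (fun a => F a * c) = ex H F * c := by
  simp [ex, ← Finset.sum_mul, div_mul_eq_mul_div]

lemma ex_const (hH : H.Nonempty) (c : ℝ) : ex H (fun _ => c) = c := by
  have : (H.card : ℝ) ≠ 0 := by exact_mod_cast hH.card_ne_zero
  simp [ex]; field_simp

lemma ex_sum {ι : Type*} (s : Finset ι) (F : ι → β → ℝ) :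
    ex H (fun a => ∑ i ∈ s, F i a) = ∑ i ∈ s, ex H (F i) := by
  simp only [ex, Finset.sum_div]; rw [Finset.sum_comm]

lemma ex_abs_le (F : β → ℝ) : |ex H F| ≤ ex H fun a => |F a| := by
  unfold ex
  rw [abs_div, Nat.abs_cast]
  exact div_le_div_of_nonneg_right (Finset.abs_sum_le_sum_abs _ _) (Nat.cast_nonneg _)

lemma ex_cs (F G : β → ℝ) :
    ex H (fun a => F a * G a) ^ 2 ≤ ex H (fun a => F a ^ 2) * ex H (fun a => G a ^ 2) := by
  unfold ex
  rw [div_pow, div_mul_div_comm, ← sq]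
  exact div_le_div_of_nonneg_right (Finset.sum_mul_sq_le_sq_mul_sq _ _ _) (by positivity)

lemma pr_nonneg (P : β → Prop) : 0 ≤ pr H P := ex_nonneg fun _ _ => ind_nonneg _

lemma pr_mono {P Q : β → Prop} (h : ∀ a ∈ H, P a → Q a) : pr H P ≤ pr H Q :=
  ex_mono fun a ha => ind_mono (h a ha)

lemma pr_congr {P Q : β → Prop} (h : ∀ a ∈ H, P a ↔ Q a) : pr H P = pr H Q :=
  le_antisymm (pr_mono fun a ha => (h a ha).1) (pr_mono fun a ha => (h a ha).2)

lemma pr_le_one (P : β → Prop) : pr H P ≤ 1 := by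
  rcases H.eq_empty_or_nonempty with rfl | hH
  · simp [pr, ex]
  · exact (ex_mono fun a _ => ind_le_one _).trans (ex_const hH 1).le

lemma pr_true (hH : H.Nonempty) {P : β → Prop} (h : ∀ a ∈ H, P a) : pr H P = 1 := by
  rw [pr_def, ex_congr fun a ha => ind_true (h a ha), ex_const hH]

lemma pr_false {P : β → Prop} (h : ∀ a ∈ H, ¬ P a) : pr H P = 0 := by
  rw [pr_def, ex_congr fun a ha => ind_false (h a ha)]; simp [ex]

lemma pr_not (hH : H.Nonempty) (P : β → Prop) : pr H (fun a => ¬ P a) = 1 - pr H P := by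
  have h := ex_sub (H := H) (fun _ => (1 : ℝ)) (fun a => ind (P a))
  rw [ex_const hH] at h
  rw [pr_def, pr_def, ← h]
  exact ex_congr fun a _ => ind_not _

lemma pr_split (P Q : β → Prop) :
    pr H P = pr H (fun a => P a ∧ Q a) + pr H (fun a => P a ∧ ¬ Q a) := by
  rw [pr_def, pr_def, pr_def, ← ex_add]
  exact ex_congr fun a _ => ind_split _ _

lemma pr_or_le (P Q : β → Prop) : pr H (fun a => P a ∨ Q a) ≤ pr H P + pr H Q := by
  rw [pr_def, pr_def, pr_def, ← ex_add]
  exact ex_mono fun a _ => ind_or_le _ _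

lemma pr_pos {P : β → Prop} {a : β} (ha : a ∈ H) (hP : P a) : 0 < pr H P := by
  have h1 : 0 < (H.card : ℝ) := by exact_mod_cast Finset.card_pos.2 ⟨a, ha⟩
  refine div_pos (Finset.sum_pos' (fun _ _ => ind_nonneg _) ⟨a, ha, ?_⟩) h1
  rw [if_pos hP]; norm_num

/-- Cauchy–Schwarz for an expectation restricted to an event. -/
lemma ex_cs_ind (F : β → ℝ) (P : β → Prop) :
    ex H (fun a => F a * ind (P a)) ^ 2 ≤ ex H (fun a => F a ^ 2 * ind (P a)) * pr H P := by
  have h := ex_cs (H := H) (fun a => F a * ind (P a)) (fun a => ind (P a))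
  have i : ∀ p, ind p * ind p = ind p := fun p => by rw [← ind_and, and_self]
  have i2 : ∀ p, ind p ^ 2 = ind p := fun p => by rw [sq, i]
  simp only [mul_assoc, i, mul_pow, i2] at h
  exact h

/-- Transfer of an average along a bijection. -/
lemma ex_bij {γ : Type*} {H' : Finset γ} (i : β → γ) (j : γ → β) (hi : ∀ a ∈ H, i a ∈ H')
    (hj : ∀ a ∈ H', j a ∈ H) (l : ∀ a ∈ H, j (i a) = a) (r : ∀ a ∈ H', i (j a) = a)
    (F : γ → ℝ) : ex H' F = ex H fun a => F (i a) := by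
  unfold ex
  rw [Finset.card_nbij' (s := H) (t := H') i j hi hj l r]
  rw [Finset.sum_nbij' (s := H) (t := H') i j hi hj l r fun _ _ => rfl]

lemma pr_bij {γ : Type*} {H' : Finset γ} (i : β → γ) (j : γ → β) (hi : ∀ a ∈ H, i a ∈ H')
    (hj : ∀ a ∈ H', j a ∈ H) (l : ∀ a ∈ H, j (i a) = a) (r : ∀ a ∈ H', i (j a) = a)
    (P : γ → Prop) : pr H' P = pr H fun a => P (i a) := ex_bij i j hi hj l r _

/-- Averages over a product are iterated averages. -/
lemma ex_prod {γ : Type*} (H' : Finset γ) (F : β × γ → ℝ) :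
    ex (H ×ˢ H') F = ex H fun a => ex H' fun b => F (a, b) := by
  unfold ex
  rw [Finset.sum_product, Finset.card_product, ← Finset.sum_div, div_div, Nat.cast_mul, mul_comm]

lemma ex_comm {γ : Type*} (H' : Finset γ) (F : β → γ → ℝ) :
    ex H (fun a => ex H' fun b => F a b) = ex H' fun b => ex H fun a => F a b := by
  unfold ex
  rw [← Finset.sum_div, ← Finset.sum_div, div_div, div_div, mul_comm, Finset.sum_comm]

/-- If the sum over each class of an equivalence relation is nonnegative, so is the total sum. -/
lemma sum_nonneg_of_classes (r : Setoid β) (F : β → ℝ)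
    (h : ∀ a ∈ H, 0 ≤ ∑ b ∈ H.filter (fun b => r a b), F b) : 0 ≤ ∑ a ∈ H, F a := by
  rw [← Finset.sum_fiberwise_of_maps_to (s := H) (t := H.image fun a => (Quotient.mk r a))
    (g := fun a => (Quotient.mk r a)) (fun a ha => Finset.mem_image_of_mem _ ha)]
  refine Finset.sum_nonneg fun q hq => ?_
  obtain ⟨a, ha, rfl⟩ := Finset.mem_image.1 hq
  have e : H.filter (fun b => Quotient.mk r b = Quotient.mk r a) = H.filter (fun b => r a b) :=
    Finset.filter_congr fun b _ => by
      rw [Quotient.eq]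
      exact ⟨fun h => r.symm h, fun h => r.symm h⟩
  have h1 := h a ha
  rw [← e] at h1
  convert h1

end Ex

section Corr
open Classical

/-- The FKG inequality for the uniform measure on a finite sublattice and two increasing events.
-/
lemma pr_fkg {α : Type*} [DistribLattice α] {H : Finset α}
    (hH : ∀ a ∈ H, ∀ b ∈ H, a ⊓ b ∈ H ∧ a ⊔ b ∈ H) {F G : α → Prop}
    (mF : Monotone F) (mG : Monotone G) : pr H F * pr H G ≤ pr H fun a => F a ∧ G a := by
  have := fkg_gen H hH (fun a => ind (F a)) (fun a => ind (G a)) (fun _ => ind_nonneg _)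
    (fun _ => ind_nonneg _) (fun a b h => ind_mono (mF h)) (fun a b h => ind_mono (mG h))
  rcases H.eq_empty_or_nonempty with rfl | hn
  · simp [pr, ex]
  have h1 : 0 < (H.card : ℝ) := by exact_mod_cast Finset.card_pos.2 hn
  simp only [pr_def, ex, ind_and]
  rw [div_mul_div_comm, div_le_div_iff₀ (by positivity) h1]
  nlinarith

/-- Correlation inequality for absolute values of height functions on nested domains. -/
lemma abs_corr {Λ Λ' : Finset V} (hL : Λ' ⊆ Λ) {ξ : V → ℤ}
    (hξ : ∀ u ∈ Λ, ∀ v, v ∉ Λ → gr.Adj u v → 0 ≤ ξ v) (F G : (V → ℕ) → ℝ)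
    (hF : ∀ a, 0 ≤ F a) (hG : ∀ a, 0 ≤ G a) (mF : Monotone F)
    (mG : ∀ a b : V → ℕ, (∀ v, v ∉ Λ' → b v = 0) → G a ≤ G (a ⊔ b)) :
    ex (Hom Λ ξ) (fun h => G (absf h)) * ex (Hom Λ' 0) (fun h => F (absf h)) ≤
      ex (Hom Λ ξ) fun h => G (absf h) * F (absf h) := by
  have := four_push (Hom Λ ξ) (Hom Λ' 0) absf absf (abs_lattice hL hξ) F G hF hG
    (fun h _ h' hh' => mG _ _ fun v hv => by
      simp [absf, (mem_Hom.1 hh').1 v hv]) mF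
  rcases (Hom Λ' 0).eq_empty_or_nonempty with he | hn
  · rw [he]
    simp only [ex, Finset.sum_empty, zero_div, mul_zero]
    exact div_nonneg (Finset.sum_nonneg fun _ _ => mul_nonneg (hG _) (hF _)) (Nat.cast_nonneg _)
  rcases (Hom Λ ξ).eq_empty_or_nonempty with he | hn'
  · simp [he, ex]
  have h1 : 0 < ((Hom Λ ξ).card : ℝ) := by exact_mod_cast Finset.card_pos.2 hn'
  have h2 : 0 < ((Hom Λ' 0).card : ℝ) := by exact_mod_cast Finset.card_pos.2 hn
  unfold ex
  rw [div_mul_div_comm, div_le_div_iff₀ (by positivity) h1]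
  nlinarith

lemma abs_fkg {Λ : Finset V} {F G : (V → ℕ) → ℝ}
    (hF : ∀ a, 0 ≤ F a) (hG : ∀ a, 0 ≤ G a) (mF : Monotone F) (mG : Monotone G) :
    ex (Hom Λ 0) (fun h => G (absf h)) * ex (Hom Λ 0) (fun h => F (absf h)) ≤
      ex (Hom Λ 0) fun h => G (absf h) * F (absf h) :=
  abs_corr subset_rfl (fun _ _ _ _ _ => le_rfl) F G hF hG mF fun _ _ _ => mG le_sup_left

lemma abs_mono {Λ Λ' : Finset V} (hL : Λ' ⊆ Λ) {ξ : V → ℤ} (hn : (Hom Λ ξ).Nonempty)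
    (hξ : ∀ u ∈ Λ, ∀ v, v ∉ Λ → gr.Adj u v → 0 ≤ ξ v) {F : (V → ℕ) → ℝ}
    (hF : ∀ a, 0 ≤ F a) (mF : Monotone F) :
    ex (Hom Λ' 0) (fun h => F (absf h)) ≤ ex (Hom Λ ξ) fun h => F (absf h) := by
  have := abs_corr hL hξ F (fun _ => 1) hF (fun _ => zero_le_one) mF fun _ _ _ => le_rfl
  rw [ex_const hn] at this
  simpa using this

/-- Conditionally on an event determined by `|h|` off `Λ'`, increasing functions of `|h|` have at
least their mean in the domain `Λ'` with zero boundary values. -/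
lemma abs_mix {Λ Λ' : Finset V} (hL : Λ' ⊆ Λ) {F : (V → ℕ) → ℝ}
    (hF : ∀ a, 0 ≤ F a) (mF : Monotone F) {B : (V → ℕ) → Prop}
    (hB : ∀ a b : V → ℕ, (∀ v, v ∉ Λ' → a v = b v) → B a → B b) :
    pr (Hom Λ 0) (fun h => B (absf h)) * ex (Hom Λ' 0) (fun h => F (absf h)) ≤
      ex (Hom Λ 0) fun h => ind (B (absf h)) * F (absf h) :=
  abs_corr hL (fun _ _ _ _ _ => le_rfl) F (fun a => ind (B a)) hF (fun _ => ind_nonneg _) mF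
    fun a b hb => ind_mono (hB _ _ fun v hv => by simp [hb v hv])

lemma Hom_lattice {Λ : Finset V} {ξ : V → ℤ} :
    ∀ a ∈ Hom Λ ξ, ∀ b ∈ Hom Λ ξ, a ⊓ b ∈ Hom Λ ξ ∧ a ⊔ b ∈ Hom Λ ξ := by
  intro a ha b hb
  have := inf_isHom (mem_Hom.1 ha) (mem_Hom.1 hb)
  simpa [mem_Hom] using this

/-- Only the boundary values next to `Λ` matter. -/
lemma Hom_override {Λ : Finset V} {ξ ξ' : V → ℤ}
    (h : ∀ u ∈ Λ, ∀ v, v ∉ Λ → gr.Adj u v → ξ v = ξ' v) {f : V → ℤ} (hf : f ∈ Hom Λ ξ) :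
    (fun v => if v ∈ Λ then f v else ξ' v) ∈ Hom Λ ξ' := by
  obtain ⟨a1, a2, a3⟩ := mem_Hom.1 hf
  rw [mem_Hom]
  refine ⟨fun v hv => by simp [hv], fun v hv => by simpa [hv] using a2 v hv, fun u hu v huv => ?_⟩
  have := a3 u hu v huv
  by_cases hv : v ∈ Λ
  · simpa [hu, hv] using this
  · simpa [hu, hv, ← h u hu v hv huv, ← a1 v hv] using this

/-- Only the boundary values next to `Λ` matter. -/
lemma ex_override {Λ : Finset V} {ξ ξ' : V → ℤ}
    (h : ∀ u ∈ Λ, ∀ v, v ∉ Λ → gr.Adj u v → ξ v = ξ' v) (F : (V → ℤ) → ℝ)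
    (hF : ∀ f g : V → ℤ, (∀ v ∈ Λ, f v = g v) → F f = F g) :
    ex (Hom Λ ξ) F = ex (Hom Λ ξ') F := by
  rw [ex_bij (H := Hom Λ ξ) (H' := Hom Λ ξ') (fun f v => if v ∈ Λ then f v else ξ' v)
    (fun f v => if v ∈ Λ then f v else ξ v) (fun _ => Hom_override h)
    (fun _ => Hom_override fun u hu v hv huv => (h u hu v hv huv).symm)]
  · exact ex_congr fun f _ => hF _ _ fun v hv => by simp [hv]
  · intro f hf
    funext v
    by_cases hv : v ∈ Λ <;> simp [hv, (mem_Hom.1 hf).1]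
  · intro f hf
    funext v
    by_cases hv : v ∈ Λ <;> simp [hv, (mem_Hom.1 hf).1]

/-- The expected height is monotone in the boundary values. -/
lemma bc_mono {Λ : Finset V} {ξ ξ' : V → ℤ} (hn : (Hom Λ ξ).Nonempty) (hn' : (Hom Λ ξ').Nonempty)
    (h : ∀ u ∈ Λ, ∀ v, v ∉ Λ → gr.Adj u v → ξ v ≤ ξ' v) {x : V} (hx : x ∈ Λ) :
    ex (Hom Λ ξ) (fun f => (f x : ℝ)) ≤ ex (Hom Λ ξ') fun f => (f x : ℝ) := by
  have hF : ∀ f g : V → ℤ, (∀ v ∈ Λ, f v = g v) → (f x : ℝ) = g x := fun f g h => by rw [h x hx]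
  have hm : ∀ u ∈ Λ, ∀ v, v ∉ Λ → gr.Adj u v → ξ v = (ξ ⊓ ξ') v := fun u hu v hv huv => by
    simp [h u hu v hv huv]
  rw [ex_override hm _ hF]
  replace hn : (Hom Λ (ξ ⊓ ξ')).Nonempty := by
    obtain ⟨f, hf⟩ := hn; exact ⟨_, Hom_override hm hf⟩
  obtain ⟨K, hK⟩ : ∃ K : ℤ, ∀ f ∈ Hom Λ (ξ ⊓ ξ') ∪ Hom Λ ξ', -K ≤ f x := by
    obtain ⟨K, hK⟩ := ((Hom Λ (ξ ⊓ ξ') ∪ Hom Λ ξ').image fun f => f x).bddBelow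
    exact ⟨-K, fun f hf => by
      rw [neg_neg]; exact hK (Finset.mem_coe.2 (Finset.mem_image_of_mem (fun f => f x) hf))⟩
  have c := four_sets (Hom Λ (ξ ⊓ ξ')) (Hom Λ ξ') (Hom Λ (ξ ⊓ ξ')) (Hom Λ ξ')
    (fun f => (f x : ℝ) + K) (fun _ => 1) (fun _ => 1) (fun f => (f x : ℝ) + K)
    (fun f hf => by
      have := hK f (Finset.mem_union_left _ hf)
      have : 0 ≤ f x + K := by omega
      exact_mod_cast this) (fun _ _ => zero_le_one) (fun _ _ => zero_le_one)
    (fun f hf => by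
      have := hK f (Finset.mem_union_right _ hf)
      have : 0 ≤ f x + K := by omega
      exact_mod_cast this)
    (fun a ha b hb => by
      have := inf_isHom (mem_Hom.1 ha) (mem_Hom.1 hb)
      refine ⟨?_, ?_, ?_⟩
      · rw [mem_Hom]
        have h1 := this.1
        rwa [inf_assoc, inf_idem] at h1
      · rw [mem_Hom]
        have h1 := this.2
        rwa [sup_eq_right.2 inf_le_right] at h1
      · simp)
  have h1 : 0 < ((Hom Λ (ξ ⊓ ξ')).card : ℝ) := by exact_mod_cast Finset.card_pos.2 hn
  have h2 : 0 < ((Hom Λ ξ').card : ℝ) := by exact_mod_cast Finset.card_pos.2 hn'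
  unfold ex
  rw [div_le_div_iff₀ h1 h2]
  simp only [Finset.sum_add_distrib, Finset.sum_const, nsmul_eq_mul, mul_one] at c
  nlinarith

lemma Hom_neg {Λ : Finset V} {ξ f : V → ℤ} (hf : f ∈ Hom Λ ξ) : -f ∈ Hom Λ (-ξ) := by
  obtain ⟨a1, a2, a3⟩ := mem_Hom.1 hf
  rw [mem_Hom]
  refine ⟨fun v hv => by simp [a1 v hv], fun v hv => ?_, fun u hu v huv => ?_⟩
  · have := a2 v hv; simp only [Pi.neg_apply]; omega
  · have := a3 u hu v huv; simp only [Pi.neg_apply]; omega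

lemma ex_Hom_neg {Λ : Finset V} {ξ : V → ℤ} (F : (V → ℤ) → ℝ) :
    ex (Hom Λ (-ξ)) F = ex (Hom Λ ξ) fun f => F (-f) :=
  ex_bij (fun f => -f) (fun f => -f) (fun _ => Hom_neg)
    (fun f hf => by simpa using Hom_neg hf) (fun _ _ => neg_neg _) (fun _ _ => neg_neg _) F

/-- Compare with the negated boundary values by `bc_mono` and use the symmetry `f ↦ -f`. -/
lemma bc_nonneg {Λ : Finset V} {ξ : V → ℤ} (hn : (Hom Λ ξ).Nonempty)
    (h : ∀ u ∈ Λ, ∀ v, v ∉ Λ → gr.Adj u v → 0 ≤ ξ v) {x : V} (hx : x ∈ Λ) :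
    0 ≤ ex (Hom Λ ξ) fun f => (f x : ℝ) := by
  have := bc_mono (ξ := -ξ) (ξ' := ξ) (by obtain ⟨f, hf⟩ := hn; exact ⟨-f, Hom_neg hf⟩) hn
    (fun u hu v hv huv => by have := h u hu v hv huv; simp; omega) hx
  rw [ex_Hom_neg] at this
  simp only [Pi.neg_apply, Int.cast_neg] at this
  rw [ex_neg] at this
  linarith

end Corr

/-! ### Diamond domains and the law of the height at the origin -/

section Diamond
open Classical

/-- The open `ℓ¹`-ball of radius `r`. -/
def bl (r : ℕ) : Finset V :=
  (Finset.Icc (-(r : ℤ)) r ×ˢ Finset.Icc (-(r : ℤ)) r).filter fun v => nrm v < r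

lemma mem_bl {r : ℕ} {v : V} : v ∈ bl r ↔ nrm v < r := by
  rw [bl, Finset.mem_filter, Finset.mem_product, Finset.mem_Icc, Finset.mem_Icc, nrm]
  omega

lemma bl_mono {r s : ℕ} (h : r ≤ s) : bl r ⊆ bl s := fun v hv => by
  rw [mem_bl] at *; omega

/-- Height functions on the diamond of radius `2N` with zero boundary condition. -/
def HN (N : ℕ) : Finset (V → ℤ) := Hom (bl (2 * N)) 0

lemma HN_nonempty (N : ℕ) : (HN N).Nonempty := by
  refine ⟨fun v => if v ∈ bl (2 * N) then (v.1 + v.2) % 2 else 0, mem_Hom.2 ⟨?_, ?_, ?_⟩⟩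
  · intro v hv; simp [hv]
  · intro v hv; simp only [hv, if_true]; omega
  · intro u hu v huv
    rw [gr_adj] at huv
    by_cases hv : v ∈ bl (2 * N)
    · simp only [hu, hv, if_true]; omega
    · simp only [hu, hv, if_true, if_false]
      rw [mem_bl, nrm] at hu hv
      omega

lemma IsHom_add {Λ : Finset V} {ξ h : V → ℤ} (hh : IsHom Λ ξ h) (m : ℤ) :
    IsHom Λ (fun v => ξ v + 2 * m) (fun v => h v + 2 * m) := by
  obtain ⟨a1, a2, a3⟩ := hh
  refine ⟨fun v hv => by simp [a1 v hv], fun v hv => ?_, fun u hu v huv => ?_⟩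
  · have := a2 v hv; simp only; omega
  · have := a3 u hu v huv; simp only; omega

/-- The number of height functions with value `k` at the origin. -/
def cnt (N : ℕ) (k : ℤ) : ℝ := (((HN N).filter fun h => h 0 = k).card : ℝ)

lemma cnt_nonneg (N : ℕ) (k : ℤ) : 0 ≤ cnt N k := Nat.cast_nonneg _

lemma cnt_neg (N : ℕ) (k : ℤ) : cnt N (-k) = cnt N k := by
  unfold cnt
  congr 1
  have hneg : ∀ f ∈ HN N, -f ∈ HN N := fun f hf => by
    have := Hom_neg hf; rwa [neg_zero] at this
  refine Finset.card_nbij' (fun f => -f) (fun f => -f) ?_ ?_ (fun _ _ => neg_neg _)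
    (fun _ _ => neg_neg _)
  · intro f hf
    simp only [Finset.mem_coe, Finset.mem_filter, Pi.neg_apply] at hf ⊢
    exact ⟨hneg f hf.1, by omega⟩
  · intro f hf
    simp only [Finset.mem_coe, Finset.mem_filter, Pi.neg_apply] at hf ⊢
    exact ⟨hneg f hf.1, by omega⟩

/-- Log-concavity of the distribution of the height at the origin. -/
lemma cnt_logconcave (N : ℕ) {p q m : ℤ} (hm : 0 ≤ m) (hpq : p + 2 * m ≤ q) :
    cnt N p * cnt N q ≤ cnt N (p + 2 * m) * cnt N (q - 2 * m) := by
  set T : (V → ℤ) → V → ℤ := fun h v => h v + 2 * m with hT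
  have inj : Function.Injective T := fun a b hab => by
    funext v; have := congrFun hab v; simp only [hT] at this; omega
  -- the four functions theorem, for `h + 2 m` and `h'`
  have c := four_sets (((HN N).filter fun h => h 0 = p).image T)
    ((HN N).filter fun h => h 0 = q) ((HN N).filter fun h => h 0 = p + 2 * m)
    (((HN N).filter fun h => h 0 = q - 2 * m).image T) (fun _ => 1) (fun _ => 1) (fun _ => 1)
    (fun _ => 1) (fun _ _ => zero_le_one) (fun _ _ => zero_le_one) (fun _ _ => zero_le_one)
    (fun _ _ => zero_le_one) (by
      intro a ha b hb
      obtain ⟨h, hh, rfl⟩ := Finset.mem_image.1 ha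
      rw [Finset.mem_filter] at hh hb
      have key := inf_isHom (IsHom_add (mem_Hom.1 hh.1) m) (mem_Hom.1 hb.1)
      refine ⟨?_, ?_, le_rfl⟩
      · rw [Finset.mem_filter]
        refine ⟨mem_Hom.2 ?_, ?_⟩
        · convert key.1 using 1
          funext v; simp; omega
        · simp [hT, hh.2, hb.2]; omega
      · rw [Finset.mem_image]
        refine ⟨fun v => (T h ⊔ b) v + 2 * (-m), ?_, ?_⟩
        · rw [Finset.mem_filter]
          refine ⟨mem_Hom.2 ?_, ?_⟩
          · have := IsHom_add key.2 (-m)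
            convert this using 1
            funext v; simp; omega
          · simp [hT, hh.2, hb.2]; omega
        · funext v; simp [hT])
  simp only [Finset.sum_const, nsmul_eq_mul, mul_one, Finset.card_image_of_injective _ inj] at c
  exact c

lemma HN_even {N : ℕ} {h : V → ℤ} (hh : h ∈ HN N) {v : V} (hv : (v.1 + v.2) % 2 = 0) :
    h v % 2 = 0 := by
  obtain ⟨a1, a2, a3⟩ := mem_Hom.1 hh
  by_cases hb : v ∈ bl (2 * N)
  · have := a2 v hb; omega
  · simp [a1 v hb]

lemma HN_lip {N : ℕ} {h : V → ℤ} (hh : h ∈ HN N) {u v : V} (huv : gr.Adj u v) :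
    (h u - h v).natAbs ≤ 1 := by
  obtain ⟨a1, a2, a3⟩ := mem_Hom.1 hh
  by_cases hu : u ∈ bl (2 * N)
  · exact (a3 u hu v huv).le
  by_cases hv : v ∈ bl (2 * N)
  · have := a3 v hv u huv.symm; omega
  · simp [a1 u hu, a1 v hv]

lemma HN_bdd (N : ℕ) : ∃ M : ℕ, ∀ h ∈ HN N, (h 0).natAbs ≤ M := by
  obtain ⟨M, hM⟩ := ((HN N).image fun h => (h 0).natAbs).bddAbove
  exact ⟨M, fun h hh => hM (Finset.mem_coe.2 (Finset.mem_image_of_mem (fun h => (h 0).natAbs) hh))⟩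

/-- Sums of even functions of the height at the origin. -/
lemma sum_cnt {N M : ℕ} (hM : ∀ h ∈ HN N, (h 0).natAbs ≤ M) {F : ℤ → ℝ}
    (hF : ∀ k, F (-k) = F k) :
    ∑ h ∈ HN N, F (h 0) =
      F 0 * cnt N 0 + ∑ j ∈ Finset.range M, 2 * F (2 * (j + 1)) * cnt N (2 * (j + 1)) := by
  have e := Finset.sum_fiberwise_of_maps_to (s := HN N) (t := Finset.range (M + 1))
    (g := fun h => (h 0).natAbs / 2) (fun h hh => by
      have := hM h hh; rw [Finset.mem_range]; omega) (fun h => F (h 0))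
  have ev : ∀ h ∈ HN N, h 0 % 2 = 0 := fun h hh => HN_even hh (by simp)
  rw [← e, Finset.sum_range_succ', add_comm]
  congr 1
  · rw [Finset.sum_congr rfl (g := fun _ => F 0), Finset.sum_const, nsmul_eq_mul, mul_comm, cnt]
    · congr 3
      refine Finset.filter_congr fun h hh => ?_
      have := ev h hh
      omega
    · intro h hh
      rw [Finset.mem_filter] at hh
      have := ev h hh.1
      congr 1; omega
  · refine Finset.sum_congr rfl fun j _ => ?_
    rw [Finset.sum_congr rfl (g := fun _ => F (2 * (j + 1))), Finset.sum_const, nsmul_eq_mul]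
    · have : ((HN N).filter fun h => (h 0).natAbs / 2 = j + 1) =
          ((HN N).filter fun h => h 0 = 2 * ((j : ℤ) + 1)) ∪
            (HN N).filter fun h => h 0 = -(2 * ((j : ℤ) + 1)) := by
        rw [← Finset.filter_or]
        refine Finset.filter_congr fun h hh => ?_
        have := ev h hh
        omega
      rw [this, Finset.card_union_of_disjoint, Nat.cast_add]
      · have h2 := cnt_neg N (2 * (j + 1))
        unfold cnt at h2 ⊢
        rw [h2]; ring
      · rw [Finset.disjoint_filter]
        intro h _ h1 h2; omega
    · intro h hh
      rw [Finset.mem_filter] at hh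
      have := ev h hh.1
      rcases (by omega : h 0 = 2 * ((j : ℤ) + 1) ∨ h 0 = -(2 * ((j : ℤ) + 1))) with h1 | h1
      · rw [h1]
      · rw [h1, hF]

/-- This follows from log-concavity and the symmetry `h ↦ -h`. -/
lemma cnt_anti (N : ℕ) (j : ℕ) : cnt N (2 * ((j + 1 : ℕ) : ℤ)) ≤ cnt N (2 * (j : ℤ)) := by
  have h := cnt_logconcave N (p := -(2 * ((j : ℤ) + 1))) (q := 2 * ((j : ℤ) + 1)) (m := 1)
    (by omega) (by omega)
  rw [show -(2 * ((j : ℤ) + 1)) + 2 * 1 = -(2 * j) by ring,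
    show 2 * ((j : ℤ) + 1) - 2 * 1 = 2 * j by ring, cnt_neg, cnt_neg] at h
  push_cast
  have h1 := cnt_nonneg N (2 * ((j : ℤ) + 1))
  have h2 := cnt_nonneg N (2 * (j : ℤ))
  exact abs_le_of_sq_le_sq' (by nlinarith) h2 |>.2

lemma sum_three (f : ℕ → ℝ) (M : ℕ) : ∑ j ∈ Finset.range (3 * M), f j =
    ∑ k ∈ Finset.range M, (f (3 * k) + f (3 * k + 1) + f (3 * k + 2)) := by
  induction M with
  | zero => simp
  | succ M ih =>
    rw [Finset.sum_range_succ, ← ih, show 3 * (M + 1) = 3 * M + 1 + 1 + 1 by ring,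
      Finset.sum_range_succ, Finset.sum_range_succ, Finset.sum_range_succ]
    ring

/-- The number of height functions whose height at the origin is divisible by three deviates from
one third of the total by at most the number of those vanishing at the origin. -/
lemma mod3_bound (N : ℕ) :
    |3 * (((HN N).filter fun h => h 0 % 3 = 0).card : ℝ) - (HN N).card| ≤ 2 * cnt N 0 := by
  obtain ⟨M, hM⟩ := HN_bdd N
  have hM3 : ∀ h ∈ HN N, (h 0).natAbs ≤ 3 * M := fun h hh => (hM h hh).trans (by omega)
  set a : ℕ → ℝ := fun j => cnt N (2 * (j : ℤ)) with ha
  have anti : ∀ j, a (j + 1) ≤ a j := fun j => cnt_anti N j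
  have s1 := sum_cnt hM3 (F := fun k => 3 * (if k % 3 = 0 then 1 else 0) - 1) (fun k => by
    have : (-k) % 3 = 0 ↔ k % 3 = 0 := by omega
    simp only [this])
  rw [Finset.sum_sub_distrib, ← Finset.mul_sum, Finset.sum_boole, sum_three] at s1
  simp only [Finset.sum_const, nsmul_eq_mul, mul_one] at s1
  rw [s1]
  have s2 : ∀ k : ℕ, (2 * (3 * (if (2 * (((3 * k : ℕ) : ℤ) + 1)) % 3 = 0 then (1 : ℝ) else 0) - 1) *
        cnt N (2 * (((3 * k : ℕ) : ℤ) + 1)) +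
      2 * (3 * (if (2 * (((3 * k + 1 : ℕ) : ℤ) + 1)) % 3 = 0 then (1 : ℝ) else 0) - 1) *
        cnt N (2 * (((3 * k + 1 : ℕ) : ℤ) + 1)) +
      2 * (3 * (if (2 * (((3 * k + 2 : ℕ) : ℤ) + 1)) % 3 = 0 then (1 : ℝ) else 0) - 1) *
        cnt N (2 * (((3 * k + 2 : ℕ) : ℤ) + 1))) =
      4 * a (3 * k + 3) - 2 * a (3 * k + 1) - 2 * a (3 * k + 2) := by
    intro k
    rw [if_neg (by omega), if_neg (by omega), if_pos (by omega)]
    simp only [ha]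
    push_cast
    ring_nf
  rw [Finset.sum_congr rfl fun k _ => s2 k]
  have a0 : cnt N 0 = a 0 := by simp [ha]
  rw [a0]
  have up : ∑ k ∈ Finset.range M, (4 * a (3 * k + 3) - 2 * a (3 * k + 1) - 2 * a (3 * k + 2)) ≤ 0 :=
    Finset.sum_nonpos fun k _ => by
      have h1 := anti (3 * k + 1); have h2 := anti (3 * k + 2)
      simp only [add_assoc, Nat.reduceAdd] at h1 h2
      linarith
  have lo : 4 * (a (3 * M) - a 0) ≤
      ∑ k ∈ Finset.range M, (4 * a (3 * k + 3) - 2 * a (3 * k + 1) - 2 * a (3 * k + 2)) := by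
    have := Finset.sum_range_sub (fun k => a (3 * k)) M
    rw [mul_zero] at this
    rw [← this, Finset.mul_sum]
    refine Finset.sum_le_sum fun k _ => ?_
    have h1 := anti (3 * k); have h2 := anti (3 * k + 1)
    simp only [add_assoc, Nat.reduceAdd] at h1 h2
    simp only [mul_add, mul_one]
    linarith
  have : 0 ≤ a (3 * M) := cnt_nonneg _ _
  rw [abs_le, if_pos (by norm_num)]
  constructor <;> linarith

/-- Probability that the height vanishes at the origin. -/
def p0 (N : ℕ) : ℝ := pr (HN N) fun h => h 0 = 0

lemma p0_eq (N : ℕ) : p0 N = cnt N 0 / (HN N).card := by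
  unfold p0 pr ex cnt
  rw [Finset.card_filter]
  push_cast
  congr 1
  refine Finset.sum_congr rfl fun h _ => ?_
  by_cases h0 : h 0 = 0 <;> simp [h0]

/-- The event `h 0 ≠ 0` is an increasing event of `|h|`, so `abs_mono` applies. -/
lemma p0_anti {N N' : ℕ} (h : N ≤ N') : p0 N' ≤ p0 N := by
  have := abs_mono (Λ := bl (2 * N')) (Λ' := bl (2 * N)) (ξ := 0) (bl_mono (by omega))
    (HN_nonempty N') (fun _ _ _ _ _ => le_rfl) (F := fun a => ind (a 0 ≠ 0))
    (fun _ => ind_nonneg _) (fun a b hab => ind_mono fun ha => by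
      have : a 0 ≤ b 0 := hab 0
      omega)
  simp only [absf, ind_not, Int.natAbs_eq_zero, ne_eq] at this
  have e := ex_const (HN_nonempty N) 1
  have e' := ex_const (HN_nonempty N') 1
  unfold HN at e e'
  rw [ex_sub, ex_sub, e, e'] at this
  change 1 - p0 N ≤ 1 - p0 N' at this
  linarith

/-- A sequence at least halving every `J` steps has second moment at most `10 J²` times its sum.
-/
lemma seq_bound (a : ℕ → ℝ) (J : ℕ) (T : ℝ) (h0 : ∀ j, 0 ≤ a j)
    (hJ : ∀ j, a (j + J) ≤ a j / 2) (hT : ∀ M, ∑ j ∈ Finset.range M, a j ≤ T) (M : ℕ) :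
    ∑ j ∈ Finset.range M, (j : ℝ) ^ 2 * a j ≤ 10 * J ^ 2 * T := by
  have mono : ∀ {A B : ℕ}, A ≤ B → ∑ j ∈ Finset.range A, (j : ℝ) ^ 2 * a j ≤
      ∑ j ∈ Finset.range B, (j : ℝ) ^ 2 * a j := fun {A B} h =>
    Finset.sum_le_sum_of_subset_of_nonneg (Finset.range_mono h)
      fun j _ _ => mul_nonneg (sq_nonneg _) (h0 j)
  have h1 := mono (show M ≤ J + M by omega)
  rw [Finset.sum_range_add] at h1
  have h2 : ∑ j ∈ Finset.range J, (j : ℝ) ^ 2 * a j ≤ J ^ 2 * T := by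
    refine le_trans (Finset.sum_le_sum fun j hj => ?_)
      (le_trans (Finset.mul_sum _ _ _).ge (mul_le_mul_of_nonneg_left (hT J) (sq_nonneg _)))
    have : (j : ℝ) ≤ J := by exact_mod_cast (Finset.mem_range.1 hj).le
    exact mul_le_mul_of_nonneg_right (pow_le_pow_left₀ (Nat.cast_nonneg _) this 2) (h0 j)
  have h3 : ∑ j ∈ Finset.range M, ((J + j : ℕ) : ℝ) ^ 2 * a (J + j) ≤
      3 / 4 * ∑ j ∈ Finset.range M, (j : ℝ) ^ 2 * a j + 3 / 2 * (J ^ 2 * T) := by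
    refine le_trans (Finset.sum_le_sum (g := fun j : ℕ =>
      3 / 4 * ((j : ℝ) ^ 2 * a j) + 3 / 2 * (J : ℝ) ^ 2 * a j) fun j _ => ?_) ?_
    · have e1 : ((J + j : ℕ) : ℝ) ^ 2 ≤ 3 / 2 * (j : ℝ) ^ 2 + 3 * J ^ 2 := by
        push_cast; nlinarith [sq_nonneg ((j : ℝ) - 2 * J)]
      have e2 : a (J + j) ≤ a j / 2 := by rw [add_comm]; exact hJ j
      have := mul_le_mul e1 e2 (h0 _) (by positivity)
      linarith
    · rw [Finset.sum_add_distrib, ← Finset.mul_sum, ← Finset.mul_sum]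
      have := mul_le_mul_of_nonneg_left (hT M) (sq_nonneg (J : ℝ))
      linarith
  linarith

/-- If the height vanishes at the origin with probability bounded below, its variance is
bounded. -/
lemma var_bound {c : ℝ} (hc : 0 < c) (h : ∀ N, c ≤ p0 N) :
    ∃ V₀ : ℝ, ∀ N, ex (HN N) (fun h => (h 0 : ℝ) ^ 2) ≤ V₀ := by
  obtain ⟨J, hJ⟩ := exists_nat_gt (2 / c)
  refine ⟨80 * J ^ 2, fun N => ?_⟩
  obtain ⟨M, hM⟩ := HN_bdd N
  set a : ℕ → ℝ := fun j => cnt N (2 * (j : ℤ)) with ha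
  set T : ℝ := ((HN N).card : ℝ) with hT
  have T0 : 0 < T := Nat.cast_pos.2 (Finset.card_pos.2 (HN_nonempty N))
  have a0 : c * T ≤ a 0 := by
    have := h N
    rw [p0_eq, le_div_iff₀ T0] at this
    simpa [ha] using this
  have anti : Antitone a := antitone_nat_of_succ_le fun j => cnt_anti N j
  have nn : ∀ j, 0 ≤ a j := fun j => cnt_nonneg _ _
  have sumT : ∀ m, ∑ j ∈ Finset.range m, a j ≤ T := by
    intro m
    have e := sum_cnt (N := N) (M := M + m) (fun h hh => (hM h hh).trans (by omega)) (F := fun _ => 1)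
      (fun _ => rfl)
    simp only [Finset.sum_const, nsmul_eq_mul, mul_one, one_mul] at e
    rw [← hT] at e
    rw [e]
    have e2 : cnt N 0 + ∑ j ∈ Finset.range (M + m), cnt N (2 * ((j : ℤ) + 1)) =
        ∑ j ∈ Finset.range (M + m + 1), a j := by
      rw [Finset.sum_range_succ', add_comm]; simp [ha]
    have e3 : ∑ j ∈ Finset.range m, a j ≤ ∑ j ∈ Finset.range (M + m + 1), a j :=
      Finset.sum_le_sum_of_subset_of_nonneg (Finset.range_mono (by omega)) fun j _ _ => nn j
    rw [← Finset.mul_sum] at *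
    have : 0 ≤ ∑ j ∈ Finset.range (M + m), cnt N (2 * ((j : ℤ) + 1)) :=
      Finset.sum_nonneg fun _ _ => cnt_nonneg _ _
    linarith
  have hJ2 : a J ≤ a 0 / 2 := by
    have h1 : ((J : ℝ) + 1) * a J ≤ T := by
      refine le_trans ?_ (sumT (J + 1))
      have := Finset.card_nsmul_le_sum (Finset.range (J + 1)) a (a J)
        fun j hj => anti (by rw [Finset.mem_range] at hj; omega)
      simpa [nsmul_eq_mul] using this
    rw [div_lt_iff₀ hc] at hJ
    have h2 : 2 * T ≤ J * a 0 := by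
      calc 2 * T ≤ (J * c) * T := mul_le_mul_of_nonneg_right hJ.le T0.le
        _ = J * (c * T) := by ring
        _ ≤ _ := mul_le_mul_of_nonneg_left a0 (Nat.cast_nonneg _)
    have h3 : ((J : ℝ) + 1) * (2 * a J) ≤ (J + 1) * a 0 := by nlinarith [nn 0]
    have := le_of_mul_le_mul_left h3 (by positivity)
    linarith
  have apos : 0 < a 0 := lt_of_lt_of_le (by positivity) a0
  have hjJ : ∀ j, a (j + J) ≤ a j / 2 := by
    intro j
    have e := cnt_logconcave N (p := 0) (q := 2 * ((j : ℤ) + J)) (m := j) (by omega) (by omega)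
    rw [show (0 : ℤ) + 2 * j = 2 * j by ring,
      show 2 * ((j : ℤ) + J) - 2 * j = 2 * J by ring] at e
    have e' : a 0 * a (j + J) ≤ a j * a J := by
      simpa [ha] using e
    have e3 : a j * a J ≤ a j * (a 0 / 2) := mul_le_mul_of_nonneg_left hJ2 (nn j)
    have : a 0 * a (j + J) ≤ a 0 * (a j / 2) := by linarith
    exact le_of_mul_le_mul_left this apos
  have sb := seq_bound a J T nn hjJ sumT (M + 1)
  have e := sum_cnt hM (F := fun k => (k : ℝ) ^ 2) (fun k => by push_cast; ring)
  unfold ex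
  rw [div_le_iff₀ T0, e]
  rw [Finset.sum_range_succ'] at sb
  simp only [Nat.cast_zero, ne_eq, OfNat.ofNat_ne_zero, not_false_eq_true, zero_pow, zero_mul,
    add_zero] at sb
  have e4 : ∑ j ∈ Finset.range M, 2 * (((2 * ((j : ℤ) + 1) : ℤ) : ℝ)) ^ 2 * cnt N (2 * (j + 1)) =
      8 * ∑ j ∈ Finset.range M, ((j + 1 : ℕ) : ℝ) ^ 2 * a (j + 1) := by
    rw [Finset.mul_sum]
    refine Finset.sum_congr rfl fun j _ => ?_
    simp only [ha]; push_cast; ring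
  rw [e4]
  simp only [Int.cast_zero, ne_eq, OfNat.ofNat_ne_zero, not_false_eq_true, zero_pow, zero_mul,
    zero_add]
  linarith

end Diamond

/-! ### Exploration from outside -/

section Explore
open Classical

/-- The vertices reached by exploring from outside of `K` through vertices whose state
satisfies `p`. -/
inductive Expl {α : Type*} (K : Finset V) (p : α → Prop) (η : V → α) : V → Prop
  | out (v : V) : v ∉ K → Expl K p η v
  | step (u v : V) : Expl K p η u → gr.Adj u v → p (η v) → Expl K p η v

variable {α : Type*} {K : Finset V} {p : α → Prop} {η η' : V → α} {Γ : Set V}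

/-- The vertices revealed by the exploration, together with a set `Γ` revealed in advance. -/
def Rev (Γ : Set V) (K : Finset V) (p : α → Prop) (η : V → α) : Set V :=
  {v | v ∈ Γ ∨ Expl K p η v ∨ ∃ u, Expl K p η u ∧ gr.Adj u v}

lemma Expl_mono {α' : Type*} {K' : Finset V} {p' : α' → Prop} {η' : V → α'} (hK : K' ⊆ K)
    (h : ∀ v, p (η v) → p' (η' v)) {v : V} (hv : Expl K p η v) : Expl K' p' η' v := by
  induction hv with
  | out v hv => exact .out v fun h => hv (hK h)
  | step u v _ huv hp ih => exact .step u v ih huv (h v hp)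

lemma Expl_mono_in {p' : α → Prop} (h : ∀ v ∈ K, p (η v) → p' (η' v)) {v : V}
    (hv : Expl K p η v) : Expl K p' η' v := by
  induction hv with
  | out v hv => exact .out v hv
  | step u v _ huv hp ih =>
    by_cases hK : v ∈ K
    · exact .step u v ih huv (h v hK hp)
    · exact .out v hK

/-- The exploration is determined by the states of the revealed vertices. -/
lemma Expl_congr (h : ∀ v ∈ Rev Γ K p η, η' v = η v) (v : V) :
    Expl K p η' v ↔ Expl K p η v := by
  constructor
  · intro hv
    induction hv with
    | out v hv => exact .out v hv
    | step u v _ huv hp ih =>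
      refine .step u v ih huv ?_
      rwa [← h v (Or.inr (Or.inr ⟨u, ih, huv⟩))]
  · intro hv
    induction hv with
    | out v hv => exact .out v hv
    | step u v hu huv hp ih =>
      refine .step u v ih huv ?_
      rwa [h v (Or.inr (Or.inl (.step u v hu huv hp)))]

lemma Rev_congr (h : ∀ v ∈ Rev Γ K p η, η' v = η v) : Rev Γ K p η' = Rev Γ K p η := by
  ext v
  simp only [Rev, Set.mem_ofPred_eq, Expl_congr h]

/-- The vertices of `K` not revealed. -/
def Unr (Γ : Set V) (K : Finset V) (p : α → Prop) (η : V → α) : Finset V :=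
  K.filter fun v => v ∉ Rev Γ K p η

lemma mem_Unr {v : V} : v ∈ Unr Γ K p η ↔ v ∉ Rev Γ K p η := by
  rw [Unr, Finset.mem_filter, and_iff_right_iff_imp]
  intro h
  by_contra hK
  exact h (Or.inr (Or.inl (.out v hK)))

lemma Unr_subset : Unr Γ K p η ⊆ K := Finset.filter_subset _ _

/-- A vertex next to the unexplored set either was revealed in advance, or lies in `K` and fails
`p`. -/
lemma Unr_boundary {u v : V} (hv : v ∈ Unr Γ K p η) (hu : u ∉ Unr Γ K p η) (huv : gr.Adj v u) :
    u ∈ Γ ∨ ¬ p (η u) ∧ ¬ Expl K p η u := by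
  rw [mem_Unr] at hv hu
  rw [not_not] at hu
  have hX : ¬ Expl K p η u := fun h => hv (Or.inr (Or.inr ⟨u, h, huv.symm⟩))
  rcases hu with h | h | ⟨w, hw, hwu⟩
  · exact Or.inl h
  · exact absurd h hX
  · exact Or.inr ⟨fun h => hX (.step w u hw hwu h), hX⟩

/-- A function has nonnegative total if its sum over each class of configurations agreeing on the
revealed vertices is nonnegative. These are indeed classes of an equivalence relation, as the
revealed set is determined by the states of the revealed vertices. -/
lemma explore_nonneg {β : Type*} (H : Finset β) (ob : β → V → α) (Γ : Set V) (K : Finset V)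
    (p : α → Prop) (F : β → ℝ)
    (h : ∀ a ∈ H, 0 ≤ ∑ b ∈ H.filter (fun b => ∀ v ∈ Rev Γ K p (ob a), ob b v = ob a v), F b) :
    0 ≤ ∑ a ∈ H, F a :=
  sum_nonneg_of_classes
    { r := fun a b => ∀ v ∈ Rev Γ K p (ob a), ob b v = ob a v
      iseqv :=
        { refl := fun _ _ _ => rfl
          symm := fun {a b} h v hv => by
            rw [Rev_congr h] at hv
            exact (h v hv).symm
          trans := fun {a b c} h h' v hv => by
            rw [← h v hv]
            exact h' v (by rwa [Rev_congr h]) } } F (fun a ha => by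
      convert h a ha using 2
      exact Finset.filter_congr fun _ _ => Iff.rfl)

lemma Hom_restrict {C Λ : Finset V} (hC : C ⊆ Λ) {ξ h₀ h : V → ℤ} (h0 : h₀ ∈ Hom Λ ξ) :
    h ∈ Hom C h₀ ↔ h ∈ Hom Λ ξ ∧ ∀ v, v ∉ C → h v = h₀ v := by
  obtain ⟨a1, a2, a3⟩ := mem_Hom.1 h0
  simp only [mem_Hom]
  constructor
  · rintro ⟨b1, b2, b3⟩
    refine ⟨⟨fun v hv => ?_, fun v hv => ?_, fun u hu v huv => ?_⟩, b1⟩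
    · rw [b1 v fun h => hv (hC h), a1 v hv]
    · by_cases hvC : v ∈ C
      · exact b2 v hvC
      · rw [b1 v hvC]; exact a2 v hv
    · by_cases huC : u ∈ C
      · exact b3 u huC v huv
      by_cases hvC : v ∈ C
      · have := b3 v hvC u huv.symm; omega
      · rw [b1 u huC, b1 v hvC]; exact a3 u hu v huv
  · rintro ⟨⟨b1, b2, b3⟩, b4⟩
    exact ⟨b4, fun v hv => b2 v (hC hv), fun u hu => b3 u (hC hu)⟩

/-- A function of a single height function has nonnegative total if this holds conditionally on
everything revealed by an exploration. -/
lemma explore_single {Λ : Finset V} {ξ : V → ℤ} (Γ : Set V) (hK : K ⊆ Λ) (p : ℤ → Prop)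
    (F : (V → ℤ) → ℝ) (h : ∀ h₀ ∈ Hom Λ ξ, 0 ≤ ex (Hom (Unr Γ K p h₀) h₀) F) :
    0 ≤ ex (Hom Λ ξ) F := by
  refine div_nonneg (explore_nonneg (Hom Λ ξ) (fun a => a) Γ K p F fun h₀ h0 => ?_) (Nat.cast_nonneg _)
  have e : (Hom Λ ξ).filter (fun b => ∀ v ∈ Rev Γ K p h₀, b v = h₀ v) =
      Hom (Unr Γ K p h₀) h₀ := by
    ext b
    rw [Hom_restrict (Unr_subset.trans hK) h0, Finset.mem_filter]
    simp only [mem_Unr, not_not]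
  rw [e]
  have hp : 0 < ((Hom (Unr Γ K p h₀) h₀).card : ℝ) := Nat.cast_pos.2
    (Finset.card_pos.2 ⟨h₀, (Hom_restrict (Unr_subset.trans hK) h0).2 ⟨h0, fun _ _ => rfl⟩⟩)
  have := mul_nonneg (h h₀ h0) hp.le
  rwa [ex, div_mul_cancel₀ _ hp.ne'] at this

/-- The analogue of `explore_single` for a pair of independent height functions. -/
lemma explore_pair {Λ Λ' : Finset V} {ξ ξ' : V → ℤ} (Γ : Set V) (hK : K ⊆ Λ) (hK' : K ⊆ Λ')
    (p : ℤ × ℤ → Prop) (F : (V → ℤ) × (V → ℤ) → ℝ)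
    (h : ∀ f₀ ∈ Hom Λ ξ, ∀ g₀ ∈ Hom Λ' ξ',
      0 ≤ ex (Hom (Unr Γ K p fun v => (f₀ v, g₀ v)) f₀ ×ˢ
        Hom (Unr Γ K p fun v => (f₀ v, g₀ v)) g₀) F) :
    0 ≤ ex (Hom Λ ξ ×ˢ Hom Λ' ξ') F := by
  refine div_nonneg (explore_nonneg (Hom Λ ξ ×ˢ Hom Λ' ξ') (fun q v => (q.1 v, q.2 v)) Γ K p F
    fun q₀ h0 => ?_) (Nat.cast_nonneg _)
  obtain ⟨f₀, g₀⟩ := q₀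
  rw [Finset.mem_product] at h0
  set C := Unr Γ K p fun v => (f₀ v, g₀ v) with hC
  have e : (Hom Λ ξ ×ˢ Hom Λ' ξ').filter (fun b => ∀ v ∈ Rev Γ K p (fun v => (f₀ v, g₀ v)),
      (b.1 v, b.2 v) = (f₀ v, g₀ v)) = Hom C f₀ ×ˢ Hom C g₀ := by
    ext b
    rw [Finset.mem_filter, Finset.mem_product, Finset.mem_product,
      Hom_restrict (Unr_subset.trans hK) h0.1, Hom_restrict (Unr_subset.trans hK') h0.2]
    simp only [mem_Unr, not_not, Prod.mk.injEq]
    constructor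
    · rintro ⟨⟨h1, h2⟩, h3⟩
      exact ⟨⟨h1, fun v hv => (h3 v hv).1⟩, h2, fun v hv => (h3 v hv).2⟩
    · rintro ⟨⟨h1, h3⟩, h2, h4⟩
      exact ⟨⟨h1, h2⟩, fun v hv => ⟨h3 v hv, h4 v hv⟩⟩
  simp only at e ⊢
  rw [e]
  have hp : 0 < ((Hom C f₀ ×ˢ Hom C g₀).card : ℝ) := Nat.cast_pos.2
    (Finset.card_pos.2 ⟨(f₀, g₀), Finset.mem_product.2
      ⟨(Hom_restrict (Unr_subset.trans hK) h0.1).2 ⟨h0.1, fun _ _ => rfl⟩,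
        (Hom_restrict (Unr_subset.trans hK') h0.2).2 ⟨h0.2, fun _ _ => rfl⟩⟩⟩)
  have := mul_nonneg (h f₀ h0.1 g₀ h0.2) hp.le
  rwa [ex, div_mul_cancel₀ _ hp.ne'] at this

lemma bc_zero {Λ : Finset V} {ξ : V → ℤ} (hn : (Hom Λ ξ).Nonempty)
    (h : ∀ u ∈ Λ, ∀ v, v ∉ Λ → gr.Adj u v → ξ v = 0) {x : V} (hx : x ∈ Λ) :
    ex (Hom Λ ξ) (fun f => (f x : ℝ)) = 0 := by
  have h1 := bc_nonneg hn (fun u hu v hv huv => (h u hu v hv huv).ge) hx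
  have h2 := bc_nonneg (ξ := -ξ) (by obtain ⟨f, hf⟩ := hn; exact ⟨-f, Hom_neg hf⟩)
    (fun u hu v hv huv => by simp [h u hu v hv huv]) hx
  rw [ex_Hom_neg] at h2
  simp only [Pi.neg_apply, Int.cast_neg] at h2
  rw [ex_neg] at h2
  linarith

/-- On an event determined off `K`, only those configurations in which `x` is joined to the outside
of `K` by nonzero heights contribute to the expected height at `x`. -/
lemma ex_event_le {Λ : Finset V} {ξ : V → ℤ} (hK : K ⊆ Λ) (x : V) (B : (V → ℤ) → Prop)
    (hB : ∀ f g : V → ℤ, (∀ v, v ∉ K → f v = g v) → B f → B g) :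
    |ex (Hom Λ ξ) fun f => (f x : ℝ) * ind (B f)| ≤
      ex (Hom Λ ξ) fun f => |(f x : ℝ)| * ind (Expl K (· ≠ 0) f x) := by
  have key : ∀ s : ℝ, 0 ≤ ex (Hom Λ ξ)
      fun f => s * ((f x : ℝ) * (ind (B f) * ind (¬ Expl K (· ≠ 0) f x))) := by
    intro s
    refine explore_single ∅ hK (· ≠ 0) _ fun h₀ h0 => le_of_eq ?_
    set C := Unr ∅ K (· ≠ 0) h₀ with hC
    have hn : (Hom C h₀).Nonempty :=
      ⟨h₀, (Hom_restrict (Unr_subset.trans hK) h0).2 ⟨h0, fun _ _ => rfl⟩⟩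
    have hcl : ∀ f ∈ Hom C h₀, ∀ v ∈ Rev ∅ K (· ≠ 0) h₀, f v = h₀ v := fun f hf v hv =>
      (mem_Hom.1 hf).1 v (by rw [hC, mem_Unr, not_not]; exact hv)
    have e : ex (Hom C h₀) (fun f => s * ((f x : ℝ) * (ind (B f) * ind (¬ Expl K (· ≠ 0) f x)))) =
        ex (Hom C h₀) fun f => (s * (ind (B h₀) * ind (¬ Expl K (· ≠ 0) h₀ x))) * (f x : ℝ) := by
      refine ex_congr fun f hf => ?_
      have hb : B f ↔ B h₀ := by
        have : ∀ v, v ∉ K → f v = h₀ v := fun v hv =>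
          hcl f hf v (Or.inr (Or.inl (.out v hv)))
        exact ⟨hB _ _ this, hB _ _ fun v hv => (this v hv).symm⟩
      rw [Expl_congr (hcl f hf) x, hb]
      ring
    rw [e, ex_mul_left]
    by_cases hX : Expl K (· ≠ 0) h₀ x
    · simp [ind_false (not_not.2 hX)]
    by_cases hx : x ∈ C
    · rw [bc_zero hn _ hx, mul_zero]
      intro u hu v hv huv
      have := Unr_boundary hu hv huv
      simpa using (this.resolve_left (by simp)).1
    · have : h₀ x = 0 := by
        rw [hC, mem_Unr, not_not] at hx
        rcases hx with h | h | ⟨u, hu, hux⟩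
        · simp at h
        · exact absurd h hX
        · by_contra h
          exact hX (.step u x hu hux h)
      rw [ex_congr (G := fun _ => (0 : ℝ)), ex_const hn, mul_zero]
      intro f hf
      rw [(mem_Hom.1 hf).1 x hx, this, Int.cast_zero]
  have k1 := key 1
  have k2 := key (-1)
  rw [ex_mul_left] at k1 k2
  have e : ex (Hom Λ ξ) (fun f => (f x : ℝ) * ind (B f)) =
      ex (Hom Λ ξ) fun f => (f x : ℝ) * (ind (B f) * ind (Expl K (· ≠ 0) f x)) := by
    have : (fun f : V → ℤ => (f x : ℝ) * ind (B f)) = fun f =>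
        (f x : ℝ) * (ind (B f) * ind (Expl K (· ≠ 0) f x)) +
          (f x : ℝ) * (ind (B f) * ind (¬ Expl K (· ≠ 0) f x)) := by
      funext f; rw [ind_not]; ring
    rw [this, ex_add]
    linarith
  rw [e]
  refine (ex_abs_le _).trans (ex_mono fun f _ => ?_)
  rw [abs_mul, abs_mul, abs_of_nonneg (ind_nonneg _), abs_of_nonneg (ind_nonneg _)]
  refine mul_le_mul_of_nonneg_left ?_ (abs_nonneg _)
  have := mul_le_mul_of_nonneg_right (ind_le_one (B f)) (ind_nonneg (Expl K (· ≠ 0) f x))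
  linarith

end Explore

/-! ### Planar paths and their intersections -/

section Paths
open Classical

/-- `a` and `b` are joined by a nearest-neighbour path inside `A`. -/
inductive Conn (A : Set V) : V → V → Prop
  | nil (a : V) : a ∈ A → Conn A a a
  | cons (a b c : V) : a ∈ A → gr.Adj a b → Conn A b c → Conn A a c

namespace Conn

variable {A B : Set V} {a b c : V}

lemma left (h : Conn A a b) : a ∈ A := by cases h <;> assumption

lemma right (h : Conn A a b) : b ∈ A := by
  induction h with
  | nil a ha => exact ha
  | cons a b c _ _ _ ih => exact ih

lemma trans (h : Conn A a b) (h' : Conn A b c) : Conn A a c := by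
  induction h with
  | nil a ha => exact h'
  | cons a b d ha hab _ ih => exact .cons a b c ha hab (ih h')

lemma snoc (h : Conn A a b) (hbc : gr.Adj b c) (hc : c ∈ A) : Conn A a c :=
  h.trans (.cons b c c h.right hbc (.nil c hc))

lemma symm (h : Conn A a b) : Conn A b a := by
  induction h with
  | nil a ha => exact .nil a ha
  | cons a b c ha hab _ ih => exact ih.snoc hab.symm ha

lemma mono (hAB : A ⊆ B) (h : Conn A a b) : Conn B a b := by
  induction h with
  | nil a ha => exact .nil a (hAB ha)
  | cons a b c ha hab _ ih => exact .cons a b c (hAB ha) hab ih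

lemma map (φ : V → V) (hφ : ∀ u v, gr.Adj u v → gr.Adj (φ u) (φ v)) (hAB : ∀ v ∈ A, φ v ∈ B)
    (h : Conn A a b) : Conn B (φ a) (φ b) := by
  induction h with
  | nil a ha => exact .nil _ (hAB a ha)
  | cons a b c ha hab _ ih => exact .cons _ _ _ (hAB a ha) (hφ a b hab) ih

/-- A path between vertices of `A` stays within the connected component. -/
lemma cluster (h : Conn A a b) : Conn {v | Conn A v b} a b := by
  induction h with
  | nil a ha => exact .nil a (.nil a ha)
  | cons a b c ha hab h ih => exact .cons a b c (.cons a b c ha hab h) hab ih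

end Conn

/-- Indicator of a horizontal step above `v` between the columns `v.1` and `v.1 + 1`. -/
def crs (v a b : V) : ℕ :=
  if v.2 < a.2 ∧ a.2 = b.2 ∧ (a.1 = v.1 ∧ b.1 = v.1 + 1 ∨ b.1 = v.1 ∧ a.1 = v.1 + 1) then 1 else 0

/-- `Pth A v a b t`: there is a path from `a` to `b` inside `A` whose number of crossings of the
vertical ray going up between the columns `v.1` and `v.1 + 1` from height `v.2` (excluded) has
the parity of `t`. -/
inductive Pth (A : Set V) (v : V) : V → V → ℕ → Prop
  | nil (a : V) (t : ℕ) : a ∈ A → t % 2 = 0 → Pth A v a a t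
  | cons (a b c : V) (s t : ℕ) : a ∈ A → gr.Adj a b → Pth A v b c s →
      (t + s + crs v a b) % 2 = 0 → Pth A v a c t

lemma Conn.pth {A : Set V} {a b : V} (h : Conn A a b) (v : V) : ∃ t, Pth A v a b t := by
  induction h with
  | nil a ha => exact ⟨0, .nil a 0 ha rfl⟩
  | cons a b c ha hab _ ih =>
    obtain ⟨s, hs⟩ := ih
    exact ⟨s + crs v a b, .cons a b c s _ ha hab hs (by omega)⟩

namespace Pth

variable {A B : Set V} {v v' a b c : V} {s t : ℕ}

lemma conn (h : Pth A v a b t) : Conn A a b := by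
  induction h with
  | nil a _ ha => exact .nil a ha
  | cons a b c _ _ ha hab _ _ ih => exact .cons a b c ha hab ih

lemma congr (h : Pth A v a b t) (hst : (s + t) % 2 = 0) : Pth A v a b s := by
  cases h with
  | nil _ _ ha ht => exact .nil a s ha (by omega)
  | cons _ b c s' _ ha hab hb h' => exact .cons a _ _ s' s ha hab hb (by omega)

lemma trans (h : Pth A v a b s) (h' : Pth A v b c t) : Pth A v a c (s + t) := by
  induction h with
  | nil a s ha hs => exact h'.congr (by omega)
  | cons a b d s' s ha hab _ hs ih => exact .cons a b c (s' + t) _ ha hab (ih h') (by omega)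

lemma symm (h : Pth A v a b t) : Pth A v b a t := by
  induction h with
  | nil a s ha hs => exact .nil a s ha hs
  | cons a b c s t ha hab h hs ih =>
    have e : crs v b a = crs v a b := by unfold crs; split_ifs <;> omega
    have : Pth A v b a (crs v a b) :=
      .cons b a a 0 _ h.conn.left hab.symm (.nil a 0 ha rfl) (by omega)
    exact (ih.trans this).congr (by omega)

lemma mono (hAB : A ⊆ B) (h : Pth A v a b t) : Pth B v a b t := by
  induction h with
  | nil a s ha hs => exact .nil a s (hAB ha) hs
  | cons a b c s t ha hab _ hs ih => exact .cons a b c s t (hAB ha) hab ih hs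

lemma cluster (h : Pth A v a b t) : Pth {x | Conn A x b} v a b t := by
  induction h with
  | nil a s ha hs => exact .nil a s (.nil a ha) hs
  | cons a b c s t ha hab h hs ih => exact .cons a b c s t (.cons a b c ha hab h.conn) hab ih hs

/-- Paths under a graph morphism respecting crossings up to a coboundary. -/
lemma map (φ : V → V) (σ : V → ℕ) (hφ : ∀ u v, gr.Adj u v → gr.Adj (φ u) (φ v))
    (hAB : ∀ v ∈ A, φ v ∈ B)
    (hc : ∀ x y, x ∈ A → y ∈ A → gr.Adj x y → (crs v' (φ x) (φ y) + crs v x y + σ x + σ y) % 2 = 0)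
    (h : Pth A v a b t) : Pth B v' (φ a) (φ b) (t + σ a + σ b) := by
  induction h with
  | nil a s ha hs => exact .nil _ _ (hAB a ha) (by omega)
  | cons a b c s t ha hab h hs ih =>
    have := hc a b ha h.conn.left hab
    exact .cons _ _ _ _ _ (hAB a ha) (hφ a b hab) ih (by omega)

/-- Moving the base point. -/
lemma move (σ : V → ℕ)
    (hc : ∀ x y, x ∈ A → y ∈ A → gr.Adj x y → (crs v' x y + crs v x y + σ x + σ y) % 2 = 0)
    (h : Pth A v a b t) : Pth A v' a b (t + σ a + σ b) :=
  h.map id σ (fun _ _ h => h) (fun _ h => h) hc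

lemma move_up (hv : (v.1, v.2 + 1) ∉ A) (h : Pth A v a b t) : Pth A (v.1, v.2 + 1) a b t := by
  have := h.move (v' := (v.1, v.2 + 1)) (fun _ => 0) fun x y hx hy hxy => by
    have h1 : x ≠ (v.1, v.2 + 1) := fun h => hv (h ▸ hx)
    have h2 : y ≠ (v.1, v.2 + 1) := fun h => hv (h ▸ hy)
    rw [Ne, Prod.ext_iff] at h1 h2
    rw [gr_adj] at hxy
    unfold crs
    simp only at *
    split_ifs <;> omega
  exact this

lemma move_down (hv : v ∉ A) (h : Pth A v a b t) : Pth A (v.1, v.2 - 1) a b t := by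
  have := h.move (v' := (v.1, v.2 - 1)) (fun _ => 0) fun x y hx hy hxy => by
    have h1 : x ≠ v := fun h => hv (h ▸ hx)
    have h2 : y ≠ v := fun h => hv (h ▸ hy)
    rw [Ne, Prod.ext_iff] at h1 h2
    rw [gr_adj] at hxy
    unfold crs
    simp only at *
    split_ifs <;> omega
  exact this

/-- Indicator of the part of the column `v.1 + 1` strictly above `v`. -/
def col (v x : V) : ℕ := if x.1 = v.1 + 1 ∧ v.2 < x.2 then 1 else 0

lemma move_right (hv : (v.1 + 1, v.2) ∉ A) (h : Pth A v a b t) :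
    Pth A (v.1 + 1, v.2) a b (t + col v a + col v b) :=
  h.move (v' := (v.1 + 1, v.2)) (col v) fun x y hx hy hxy => by
    have h1 : x ≠ (v.1 + 1, v.2) := fun h => hv (h ▸ hx)
    have h2 : y ≠ (v.1 + 1, v.2) := fun h => hv (h ▸ hy)
    rw [Ne, Prod.ext_iff] at h1 h2
    rw [gr_adj] at hxy
    unfold crs col
    simp only at *
    split_ifs <;> omega

lemma move_left (hv : v ∉ A) (h : Pth A v a b t) :
    Pth A (v.1 - 1, v.2) a b (t + col (v.1 - 1, v.2) a + col (v.1 - 1, v.2) b) :=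
  h.move (v' := (v.1 - 1, v.2)) (col (v.1 - 1, v.2)) fun x y hx hy hxy => by
    have h1 : x ≠ v := fun h => hv (h ▸ hx)
    have h2 : y ≠ v := fun h => hv (h ▸ hy)
    rw [Ne, Prod.ext_iff] at h1 h2
    rw [gr_adj] at hxy
    unfold crs col
    simp only at *
    split_ifs <;> omega

/-- If the base point moves along a path disjoint from `A` inside the strip `x₁ ≤ x ≤ x₂`, the
crossing parity of a path in `A` with endpoints off the strip does not change. -/
lemma move_conn {x₁ x₂ : ℤ} {w : V} (hw : Conn {x | x ∉ A ∧ x₁ ≤ x.1 ∧ x.1 ≤ x₂} v w)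
    (ha : a.1 < x₁ ∨ x₂ < a.1) (hb : b.1 < x₁ ∨ x₂ < b.1) (h : Pth A v a b t) :
    Pth A w a b t := by
  induction hw with
  | nil v _ => exact h
  | cons v w u hv hvw hw ih =>
    refine ih ?_
    have hv' := hv
    have hw' := hw.left
    simp only [Set.mem_ofPred_eq] at hv' hw'
    obtain ⟨v1, v2⟩ := v
    obtain ⟨w1, w2⟩ := w
    rw [gr_adj] at hvw
    simp only at hvw hv' hw'
    rcases (by omega : (w1 = v1 ∧ w2 = v2 + 1) ∨ (w1 = v1 ∧ w2 = v2 - 1) ∨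
      (w1 = v1 + 1 ∧ w2 = v2) ∨ (w1 = v1 - 1 ∧ w2 = v2)) with ⟨rfl, rfl⟩ | ⟨rfl, rfl⟩ | ⟨rfl, rfl⟩ |
        ⟨rfl, rfl⟩
    · exact h.move_up hw'.1
    · exact h.move_down hv'.1
    · refine (h.move_right hw'.1).congr ?_
      have e1 : col (v1, w2) a = 0 := by unfold col; simp only; split_ifs <;> omega
      have e2 : col (v1, w2) b = 0 := by unfold col; simp only; split_ifs <;> omega
      omega
    · refine (h.move_left hv'.1).congr ?_
      simp only
      have e1 : col (v1 - 1, w2) a = 0 := by unfold col; simp only; split_ifs <;> omega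
      have e2 : col (v1 - 1, w2) b = 0 := by unfold col; simp only; split_ifs <;> omega
      omega

/-- The crossing parity of a closed path does not change if the base point moves along a path
disjoint from it. -/
lemma move_closed {w : V} (hw : Conn Aᶜ v w) (h : Pth A v a a t) : Pth A w a a t := by
  induction hw with
  | nil v _ => exact h
  | cons v w u hv hvw hw ih =>
    refine ih ?_
    have hv' := hv
    have hw' := hw.left
    rw [Set.mem_compl_iff] at hv' hw'
    obtain ⟨v1, v2⟩ := v
    obtain ⟨w1, w2⟩ := w
    rw [gr_adj] at hvw
    simp only at hvw
    rcases (by omega : (w1 = v1 ∧ w2 = v2 + 1) ∨ (w1 = v1 ∧ w2 = v2 - 1) ∨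
      (w1 = v1 + 1 ∧ w2 = v2) ∨ (w1 = v1 - 1 ∧ w2 = v2)) with ⟨rfl, rfl⟩ | ⟨rfl, rfl⟩ | ⟨rfl, rfl⟩ |
        ⟨rfl, rfl⟩
    · exact h.move_up hw'
    · exact h.move_down hv'
    · exact (h.move_right hw').congr (by omega)
    · exact (h.move_left hv').congr (by omega)

/-- If no crossing is possible in `A` the crossing parity is even. -/
lemma even_of_no_crs (hc : ∀ x y, x ∈ A → y ∈ A → crs v x y = 0) (h : Pth A v a b t) :
    t % 2 = 0 := by
  induction h with
  | nil a t _ ht => exact ht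
  | cons a b c s t ha hab h hs ih =>
    have := hc a b ha h.conn.left
    omega

/-- If all crossings between the columns `v.1` and `v.1 + 1` inside `A` happen above `v`,
the crossing parity is determined by the sides of the endpoints. -/
lemma parity_of_below (hA : ∀ x ∈ A, x.1 = v.1 → v.2 < x.2)
    (h : Pth A v a b t) :
    (t + (if v.1 < a.1 then 1 else 0) + (if v.1 < b.1 then 1 else 0)) % 2 = 0 := by
  induction h with
  | nil a t _ ht => split_ifs <;> omega
  | cons a b c s t ha hab h hs ih =>
    have h1 := hA a ha
    have h2 := hA b h.conn.left
    rw [gr_adj] at hab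
    have e : (crs v a b + (if v.1 < a.1 then 1 else 0) + (if v.1 < b.1 then 1 else 0)) % 2 = 0 := by
      clear ih hs
      unfold crs
      split_ifs <;> omega
    omega

end Pth

/-- A closed path of odd crossing parity separates `v` from every vertex off a box. -/
lemma odd_closed_separates {A : Set V} {W : ℕ} (hA : ∀ x ∈ A, x.1.natAbs ≤ W ∧ x.2.natAbs ≤ W)
    {v w a : V} {t : ℕ} (h : Pth A v a a t) (ht : t % 2 = 1)
    (hw : W < w.1.natAbs ∨ W < w.2.natAbs) : ¬ Conn Aᶜ v w := by
  intro hc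
  have h' := h.move_closed hc
  by_cases h2 : w.2 < -(W : ℤ)
  · have := h'.parity_of_below fun x hx _ => by have := hA x hx; omega
    split_ifs at this <;> omega
  · have := h'.even_of_no_crs fun x y hx hy => by
      have := hA x hx; have := hA y hy
      unfold crs; split_ifs <;> omega
    omega

end Paths

/-! ### Positively associated percolation models -/

section Perc
open Classical

/-- The parity-preserving automorphisms of the lattice (with bounded displacement of the norm). -/
structure Sym (φ : V ≃ V) : Prop where
  adj : ∀ u v, gr.Adj (φ u) (φ v) ↔ gr.Adj u v
  par : ∀ v, ((φ v).1 + (φ v).2 + v.1 + v.2) % 2 = 0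
  dist : ∃ K : ℕ, ∀ v, nrm (φ v) ≤ nrm v + K ∧ nrm v ≤ nrm (φ v) + K

/-- Events determined by finitely many vertices. -/
def Loc (E : Set (Set V)) : Prop :=
  ∃ B : Finset V, ∀ ω ω' : Set V, (∀ v ∈ B, v ∈ ω ↔ v ∈ ω') → (ω ∈ E ↔ ω' ∈ E)

/-- Finitely additive, positively associated, invariant probabilities on site configurations. -/
structure PM (π : Set (Set V) → ℝ) : Prop where
  nonneg : ∀ A, 0 ≤ π A
  univ : π Set.univ = 1
  mono : ∀ A B, A ⊆ B → π A ≤ π B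
  add : ∀ A B, π (A ∪ B) + π (A ∩ B) = π A + π B
  fkg : ∀ A B, IsUpperSet A → IsUpperSet B → π A * π B ≤ π (A ∩ B)
  inv : ∀ φ : V ≃ V, Sym φ → ∀ E, Loc E → π {ω | φ ⁻¹' ω ∈ E} = π E

namespace PM

variable {π : Set (Set V) → ℝ} (hπ : PM π)
include hπ

lemma le_one (A : Set (Set V)) : π A ≤ 1 := hπ.univ ▸ hπ.mono A _ (Set.subset_univ A)

lemma q_mul {A B : Set (Set V)} (hA : IsUpperSet A) (hB : IsUpperSet B) :
    (1 - π A) * (1 - π B) ≤ 1 - π (A ∪ B) := by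
  have := hπ.fkg A B hA hB
  have := hπ.add A B
  linarith

lemma q_inter (A B : Set (Set V)) : 1 - π (A ∩ B) ≤ (1 - π A) + (1 - π B) := by
  have := hπ.add A B
  have := hπ.le_one (A ∪ B)
  linarith

lemma q_nonneg (A : Set (Set V)) : 0 ≤ 1 - π A := sub_nonneg.2 (hπ.le_one A)

lemma q_mul3 {A B C : Set (Set V)} (hA : IsUpperSet A) (hB : IsUpperSet B) (hC : IsUpperSet C) :
    (1 - π A) * (1 - π B) * (1 - π C) ≤ 1 - π (A ∪ B ∪ C) :=
  (mul_le_mul_of_nonneg_right (hπ.q_mul hA hB) (hπ.q_nonneg C)).trans (hπ.q_mul (hA.union hB) hC)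

end PM

/-- The box of radius `M`. -/
def Q (M : ℕ) : Set V := {v | v.1.natAbs ≤ M ∧ v.2.natAbs ≤ M}

/-- The closed `ℓ¹`-ball. -/
def ball (c : V) (r : ℕ) : Set V := {v | (v.1 - c.1).natAbs + (v.2 - c.2).natAbs ≤ r}

/-- Two balls placed symmetrically on the horizontal axis. -/
def gate (r d : ℕ) : Set V := ball (-(d : ℤ), 0) r ∪ ball (d, 0) r

lemma mem_Q {M : ℕ} {v : V} : v ∈ Q M ↔ v.1.natAbs ≤ M ∧ v.2.natAbs ≤ M := Iff.rfl

lemma mem_ball {c v : V} {r : ℕ} : v ∈ ball c r ↔ (v.1 - c.1).natAbs + (v.2 - c.2).natAbs ≤ r :=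
  Iff.rfl

lemma Q_finite (M : ℕ) : (Q M).Finite := by
  refine ((Set.finite_Icc (-(M : ℤ)) M).prod (Set.finite_Icc (-(M : ℤ)) M)).subset fun v hv => ?_
  rw [mem_Q] at hv
  simp only [Set.mem_prod, Set.mem_Icc]
  omega

lemma ball_conn {c x : V} {r : ℕ} (hx : x ∈ ball c r) : Conn (ball c r) x c := by
  obtain ⟨n, hn⟩ : ∃ n, (x.1 - c.1).natAbs + (x.2 - c.2).natAbs = n := ⟨_, rfl⟩
  induction n generalizing x with
  | zero =>
    have : x = c := Prod.ext (by omega) (by omega)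
    subst this
    exact .nil x hx
  | succ n ih =>
    rw [mem_ball] at hx
    obtain ⟨y, hy, hxy⟩ : ∃ y : V, (y.1 - c.1).natAbs + (y.2 - c.2).natAbs = n ∧ gr.Adj x y := by
      simp only [gr_adj]
      rcases lt_trichotomy x.1 c.1 with h | h | h
      · exact ⟨(x.1 + 1, x.2), by simp only; omega, by simp only; omega⟩
      · rcases lt_or_ge x.2 c.2 with h' | h'
        · exact ⟨(x.1, x.2 + 1), by simp only; omega, by simp only; omega⟩
        · exact ⟨(x.1, x.2 - 1), by simp only; omega, by simp only; omega⟩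
      · exact ⟨(x.1 - 1, x.2), by simp only; omega, by simp only; omega⟩
    exact .cons x y c (mem_ball.2 hx) hxy (ih (by rw [mem_ball]; omega) hy)

/-- The event that `c` is joined inside `R` to `P` when `B` is declared open. -/
def Arm (B R : Set V) (c : V) (P : Set V) : Set (Set V) :=
  {ω | ∃ b ∈ P, Conn ((ω ∪ B) ∩ R) c b}

/-- As `Arm`, with a path of crossing parity `i` around `v`. -/
def ArmP (B R : Set V) (c : V) (P : Set V) (v : V) (i : ℕ) : Set (Set V) :=
  {ω | ∃ b ∈ P, Pth ((ω ∪ B) ∩ R) v c b i}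

lemma Arm_upper (B R : Set V) (c : V) (P : Set V) : IsUpperSet (Arm B R c P) := by
  rintro ω ω' h ⟨b, hb, hc⟩
  exact ⟨b, hb, hc.mono (Set.inter_subset_inter_left _ (Set.union_subset_union_left _ h))⟩

lemma ArmP_upper (B R : Set V) (c : V) (P : Set V) (v : V) (i : ℕ) :
    IsUpperSet (ArmP B R c P v i) := by
  rintro ω ω' h ⟨b, hb, hc⟩
  exact ⟨b, hb, hc.mono (Set.inter_subset_inter_left _ (Set.union_subset_union_left _ h))⟩

lemma inter_eq_of_agree {B R ω ω' : Set V} {F : Finset V} (hF : R ⊆ F)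
    (h : ∀ v ∈ F, v ∈ ω ↔ v ∈ ω') : (ω ∪ B) ∩ R = (ω' ∪ B) ∩ R := by
  ext v
  simp only [Set.mem_inter_iff, Set.mem_union]
  exact and_congr_left fun hv => or_congr (h v (hF hv)) Iff.rfl

lemma Arm_loc {R : Set V} (hR : R.Finite) (B : Set V) (c : V) (P : Set V) : Loc (Arm B R c P) :=
  ⟨hR.toFinset, fun ω ω' h => by
    simp only [Arm, Set.mem_ofPred_eq, inter_eq_of_agree (B := B) (R := R) (by simp) h]⟩

lemma ArmP_loc {R : Set V} (hR : R.Finite) (B : Set V) (c : V) (P : Set V) (v : V) (i : ℕ) :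
    Loc (ArmP B R c P v i) :=
  ⟨hR.toFinset, fun ω ω' h => by
    simp only [ArmP, Set.mem_ofPred_eq, inter_eq_of_agree (B := B) (R := R) (by simp) h]⟩

/-- Invariance under lattice symmetries, applied to arms. -/
lemma Arm_map {π : Set (Set V) → ℝ} (hπ : PM π) {φ : V ≃ V} (hφ : Sym φ) {B R P B' R' P' : Set V}
    {c c' : V} (hR : R.Finite) (hB : ∀ v ∈ B, φ v ∈ B') (hRR : ∀ v ∈ R, φ v ∈ R')
    (hP : ∀ v ∈ P, φ v ∈ P') (hc : φ c = c') : π (Arm B R c P) ≤ π (Arm B' R' c' P') := by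
  rw [← hπ.inv φ hφ _ (Arm_loc hR B c P)]
  refine hπ.mono _ _ ?_
  rintro ω ⟨b, hb, h⟩
  refine ⟨φ b, hP b hb, hc ▸ h.map φ (fun u v => (hφ.adj u v).2) ?_⟩
  rintro v ⟨hv | hv, hvR⟩
  · exact ⟨Or.inl hv, hRR v hvR⟩
  · exact ⟨Or.inr (hB v hv), hRR v hvR⟩

/-- Invariance applied to arms of given crossing parity: `σ` is a function whose coboundary
corrects the change of crossing parities under `φ`. -/
lemma ArmP_map {π : Set (Set V) → ℝ} (hπ : PM π) {φ : V ≃ V} (hφ : Sym φ) {B R P B' R' P' : Set V}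
    {c c' v v' : V} {i j : ℕ} (σ : V → ℕ) (hR : R.Finite) (hB : ∀ v ∈ B, φ v ∈ B')
    (hRR : ∀ v ∈ R, φ v ∈ R') (hP : ∀ v ∈ P, φ v ∈ P') (hc : φ c = c')
    (hσ : ∀ x y, x ∈ R → y ∈ R → gr.Adj x y →
      (crs v' (φ x) (φ y) + crs v x y + σ x + σ y) % 2 = 0)
    (hij : ∀ b ∈ P, (j + i + σ c + σ b) % 2 = 0) :
    π (ArmP B R c P v i) ≤ π (ArmP B' R' c' P' v' j) := by
  rw [← hπ.inv φ hφ _ (ArmP_loc hR B c P v i)]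
  refine hπ.mono _ _ ?_
  rintro ω ⟨b, hb, h⟩
  refine ⟨φ b, hP b hb, ?_⟩
  have := h.map (B := (ω ∪ B') ∩ R') (v' := v') φ σ (fun u v => (hφ.adj u v).2) (by
    rintro v ⟨hv | hv, hvR⟩
    · exact ⟨Or.inl hv, hRR v hvR⟩
    · exact ⟨Or.inr (hB v hv), hRR v hvR⟩) fun x y hx hy => hσ x y hx.2 hy.2
  rw [hc] at this
  exact this.congr (by have := hij b hb; omega)

/-- Affine signed permutations of the coordinates. -/
def aff (s : Bool) (e₁ e₂ : ℤˣ) (t : V) : V ≃ V where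
  toFun v := if s then (e₁ * v.2 + t.1, e₂ * v.1 + t.2) else (e₁ * v.1 + t.1, e₂ * v.2 + t.2)
  invFun v := if s then (e₂ * (v.2 - t.2), e₁ * (v.1 - t.1))
    else (e₁ * (v.1 - t.1), e₂ * (v.2 - t.2))
  left_inv v := by
    rcases Int.units_eq_one_or e₁ with rfl | rfl <;> rcases Int.units_eq_one_or e₂ with rfl | rfl <;>
      cases s <;> simp
  right_inv v := by
    rcases Int.units_eq_one_or e₁ with rfl | rfl <;> rcases Int.units_eq_one_or e₂ with rfl | rfl <;>
      cases s <;> simp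

lemma aff_sym (s : Bool) (e₁ e₂ : ℤˣ) {t : V} (ht : (t.1 + t.2) % 2 = 0) : Sym (aff s e₁ e₂ t) := by
  refine ⟨fun u v => ?_, fun v => ?_, nrm t, fun v => ?_⟩ <;> simp only [gr_adj, nrm, aff, Equiv.coe_fn_mk] <;>
  rcases Int.units_eq_one_or e₁ with rfl | rfl <;> rcases Int.units_eq_one_or e₂ with rfl | rfl <;>
  cases s <;> simp <;> omega

/-- The encircling event: a connected set of open vertices and gate vertices inside `Q W`,
containing both gates and avoiding `S`, separates the origin from the outside of `Q W`. -/
def Enc (S : Set V) (r d W : ℕ) : Set (Set V) :=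
  {ω | ∃ T : Set V, T ⊆ (ω ∪ gate r d) ∩ Q W ∧ gate r d ⊆ T ∧ (∀ x ∈ T, x ∉ S) ∧
    (∀ x ∈ T, ∀ y ∈ T, Conn T x y) ∧ ∀ v, v ∉ Q W → ¬ Conn Tᶜ 0 v}

lemma Enc_upper (S : Set V) (r d W : ℕ) : IsUpperSet (Enc S r d W) := by
  rintro ω ω' h ⟨T, h1, h2⟩
  exact ⟨T, h1.trans (Set.inter_subset_inter_left _ (Set.union_subset_union_left _ h)), h2⟩

end Perc

/-! ### Enclosing circuits are likely -/

section Likely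
open Classical

/-- A path either reaches `z` or avoids it. -/
lemma Conn.avoid {A : Set V} {a b : V} (h : Conn A a b) (z : V) :
    Conn A a z ∨ Conn (A \ {z}) a b := by
  induction h with
  | nil a ha =>
    by_cases e : a = z
    · exact Or.inl (e ▸ .nil a ha)
    · exact Or.inr (.nil a ⟨ha, e⟩)
  | cons a b c ha hab _ ih =>
    by_cases e : a = z
    · exact Or.inl (e ▸ .nil a ha)
    · exact ih.imp (.cons a b z ha hab) (.cons a b c ⟨ha, e⟩ hab)

/-- Two paths from the origin to the left and right sides of a vertical strip, in the same parity
class around `z`, cannot be separated from a path from `z` to the left side ending lower. -/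
lemma strip_cross {A₁ A₂ : Set V} {M : ℕ} (hM : 1 ≤ M) {z : V} (hz1 : z.1 = 0)
    (hA₁ : ∀ x ∈ A₁, x.1.natAbs ≤ M) (hA₂ : ∀ x ∈ A₂, x.1.natAbs ≤ M) {l r q : V} {i : ℕ}
    (hl : Pth A₁ z 0 l i) (hr : Pth A₁ z 0 r i) (hq : Conn A₂ z q)
    (hl1 : l.1 = -M) (hr1 : r.1 = M) (hq1 : q.1 = -M) (hlq : q.2 < l.2) :
    ∃ x, Conn A₁ x 0 ∧ Conn A₂ x z := by
  by_contra hno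
  push Not at hno
  let Cl : Set V := {x | Conn A₁ x 0} ∪ {(-(M : ℤ) - 1, l.2), ((M : ℤ) + 1, r.2)}
  have hsub : {x | Conn A₁ x 0} ⊆ Cl := Set.subset_union_left
  have hCl : ∀ x ∈ Cl, x.1.natAbs ≤ M ∧ Conn A₁ x 0 ∨ x.1 = -(M : ℤ) - 1 ∧ x.2 = l.2 ∨
      x.1 = (M : ℤ) + 1 := by
    rintro x (hx | hx | hx)
    · exact Or.inl ⟨hA₁ x hx.left, hx⟩
    · rw [hx]; exact Or.inr (Or.inl ⟨rfl, rfl⟩)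
    · rw [Set.mem_singleton_iff] at hx
      rw [hx]; exact Or.inr (Or.inr rfl)
  have e1 : Pth Cl z l 0 i := by
    have := (hl.symm.cluster).mono hsub
    exact this
  have e2 : Pth Cl z 0 r i := (hr.symm.cluster.mono hsub).symm
  have e3 : Pth Cl z (-(M : ℤ) - 1, l.2) l 0 := by
    refine .cons _ _ _ 0 0 (Or.inr (Or.inl rfl)) ?_ (.nil _ _ e1.conn.left rfl) ?_
    · simp only [gr_adj]; omega
    · unfold crs; simp only; split_ifs <;> omega
  have e4 : Pth Cl z r ((M : ℤ) + 1, r.2) 0 := by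
    refine .cons _ _ _ 0 0 e2.conn.right ?_ (.nil _ _ (Or.inr (Or.inr rfl)) rfl) ?_
    · simp only [gr_adj]; omega
    · unfold crs; simp only; split_ifs <;> omega
  have e5 := (e3.trans e1).trans (e2.trans e4)
  have hq' : Conn {x | x ∉ Cl ∧ -(M : ℤ) ≤ x.1 ∧ x.1 ≤ M} z q := by
    refine (hq.symm.cluster.symm).mono fun x hx => ?_
    have hx' : Conn A₂ x z := hx
    have h2 := hA₂ x hx'.left
    refine ⟨fun hc => ?_, by omega, by omega⟩
    rcases hCl x hc with h | h | h
    · exact hno x h.2 hx'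
    · omega
    · omega
  have e6 := e5.move_conn hq' (Or.inl (by simp only; omega)) (Or.inr (by simp only; omega))
  have hqC : q ∉ Cl := hq'.right.1
  have e7 := e6.move_left hqC
  have e8 := e7.parity_of_below fun x hx hx1 => by
    simp only at hx1 ⊢
    rcases hCl x hx with h | h | h <;> omega
  unfold Pth.col at e8
  simp only at e8
  split_ifs at e8 <;> omega

variable {π : Set (Set V) → ℝ}

lemma le_of_pow_le {x y : ℝ} {n : ℕ} (hn : n ≠ 0) (hy : 0 ≤ y) (h : x ^ n ≤ y ^ n) : x ≤ y :=
  le_of_pow_le_pow_left₀ hn hy h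

/-- Square-root trick: the four sides of the box are equivalent under the symmetries and the arm
must end on one of them. -/
lemma arm_left (hπ : PM π) {n M : ℕ} {lam : ℝ} (hl : 0 ≤ lam)
    (h : 1 - lam ^ 4 ≤ π (Arm (ball 0 n) (Q M) 0 {b | b.1.natAbs = M ∨ b.2.natAbs = M})) :
    1 - π (Arm (ball 0 n) (Q M) 0 {b | b.1 = -(M : ℤ)}) ≤ lam := by
  set L := Arm (ball 0 n) (Q M) 0 {b | b.1 = -(M : ℤ)} with hL
  have key : ∀ (s : Bool) (e : ℤˣ) (P : Set V), (∀ v ∈ P, (aff s e 1 0 v).1 = -(M : ℤ)) →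
      1 - π L ≤ 1 - π (Arm (ball 0 n) (Q M) 0 P) := by
    intro s e P hP
    refine sub_le_sub_left (Arm_map hπ (aff_sym s e 1 (t := 0) rfl) (Q_finite M) ?_ ?_ hP ?_) 1
    all_goals
      simp only [mem_ball, mem_Q, aff, Equiv.coe_fn_mk]
      rcases Int.units_eq_one_or e with rfl | rfl <;> cases s <;> simp <;> omega
  have k1 := key false (-1) {b | b.1 = (M : ℤ)} (by simp [aff])
  have k2 := key true 1 {b | b.2 = -(M : ℤ)} (by simp [aff])
  have k3 := key true (-1) {b | b.2 = (M : ℤ)} (by simp [aff])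
  have h1 := hπ.q_mul (Arm_upper (ball 0 n) (Q M) 0 {b | b.1 = -(M : ℤ)})
    (Arm_upper (ball 0 n) (Q M) 0 {b | b.1 = (M : ℤ)})
  have h2 := hπ.q_mul (Arm_upper (ball 0 n) (Q M) 0 {b | b.2 = -(M : ℤ)})
    (Arm_upper (ball 0 n) (Q M) 0 {b | b.2 = (M : ℤ)})
  have h3 := hπ.q_mul ((Arm_upper (ball 0 n) (Q M) 0 {b | b.1 = -(M : ℤ)}).union
    (Arm_upper (ball 0 n) (Q M) 0 {b | b.1 = (M : ℤ)}))
    ((Arm_upper (ball 0 n) (Q M) 0 {b | b.2 = -(M : ℤ)}).union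
    (Arm_upper (ball 0 n) (Q M) 0 {b | b.2 = (M : ℤ)}))
  have h4 := h.trans (hπ.mono _ ((Arm (ball 0 n) (Q M) 0 {b | b.1 = -(M : ℤ)} ∪
      Arm (ball 0 n) (Q M) 0 {b | b.1 = (M : ℤ)}) ∪ (Arm (ball 0 n) (Q M) 0 {b | b.2 = -(M : ℤ)} ∪
      Arm (ball 0 n) (Q M) 0 {b | b.2 = (M : ℤ)})) (by
    rintro ω ⟨b, hb, hc⟩
    rcases hb with hb | hb
    · rcases Int.natAbs_eq_iff.1 hb with hb | hb
      · exact Or.inl (Or.inr ⟨b, hb, hc⟩)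
      · exact Or.inl (Or.inl ⟨b, hb, hc⟩)
    · rcases Int.natAbs_eq_iff.1 hb with hb | hb
      · exact Or.inr (Or.inr ⟨b, hb, hc⟩)
      · exact Or.inr (Or.inl ⟨b, hb, hc⟩)))
  have q0 := hπ.q_nonneg L
  refine le_of_pow_le (n := 4) (by norm_num) hl ?_
  have a1 : (1 - π L) * (1 - π L) ≤ _ := (mul_le_mul_of_nonneg_left k1 q0).trans h1
  have a2 : (1 - π L) * (1 - π L) ≤ _ :=
    (mul_le_mul k2 k3 q0 (hπ.q_nonneg _)).trans h2
  have a3 := (mul_le_mul a1 a2 (mul_nonneg q0 q0) (hπ.q_nonneg _)).trans h3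
  calc (1 - π L) ^ 4 = (1 - π L) * (1 - π L) * ((1 - π L) * (1 - π L)) := by ring
    _ ≤ _ := a3
    _ ≤ lam ^ 4 := by linarith

/-- With high probability two far away gates on the horizontal axis are joined. -/
lemma J_likely (hπ : PM π)
    (arms : ∀ ε : ℝ, 0 < ε → ∃ n : ℕ, ∀ M : ℕ, n < M →
      1 - ε ≤ π (Arm (ball 0 n) (Q M) 0 {b | b.1.natAbs = M ∨ b.2.natAbs = M}))
    {δ : ℝ} (hδ : 0 < δ) (hδ1 : δ ≤ 1) (F : ℕ → ℕ) :
    ∃ r d W : ℕ, F r ≤ d ∧ d % 2 = 0 ∧ d + r ≤ W ∧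
      1 - δ ≤ π (Arm (gate r d) (Q W) (-(d : ℤ), 0) {((d : ℤ), 0)}) := by
  set ν := δ / 3 with hν
  have ν0 : 0 < ν := by positivity
  obtain ⟨n, hn⟩ := arms (((ν ^ 3) ^ 2 * δ) ^ 4) (by positivity)
  obtain ⟨K, hK2, hK⟩ : ∃ K : ℕ, K % 2 = 0 ∧ F n + n + 1 ≤ K := ⟨2 * (F n + n + 1), by omega, by omega⟩
  obtain ⟨d0, hd2, hd⟩ : ∃ d : ℕ, d % 2 = 0 ∧ F K + n + 1 ≤ d :=
    ⟨2 * (F K + n + 1), by omega, by omega⟩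
  set M := 2 * d0 with hM
  have hL := arm_left hπ (by positivity) (hn M (by omega))
  set Mid := Arm (ball 0 n) (Q M) 0 {b | b.1 = -(M : ℤ) ∧ b.2.natAbs ≤ K} with hMid
  set Up := Arm (ball 0 n) (Q M) 0 {b | b.1 = -(M : ℤ) ∧ (K : ℤ) + 1 ≤ b.2} with hUp
  set Dn := Arm (ball 0 n) (Q M) 0 {b | b.1 = -(M : ℤ) ∧ b.2 ≤ -(K : ℤ) - 1} with hDn
  have hUD : 1 - π Up ≤ 1 - π Dn := by
    refine sub_le_sub_left (Arm_map hπ (aff_sym false 1 (-1) (t := 0) rfl) (Q_finite M)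
      ?_ ?_ ?_ ?_) 1 <;> simp [mem_ball, mem_Q, aff]
    intro a b h1 h2
    omega
  -- square-root trick for the three parts of the left side
  have hprod : (1 - π Up) ^ 2 * (1 - π Mid) ≤ (ν ^ 3) ^ 2 * δ := by
    have := hπ.q_mul3 (Arm_upper (ball 0 n) (Q M) 0 {b | b.1 = -(M : ℤ) ∧ (K : ℤ) + 1 ≤ b.2})
      (Arm_upper (ball 0 n) (Q M) 0 {b | b.1 = -(M : ℤ) ∧ b.2 ≤ -(K : ℤ) - 1})
      (Arm_upper (ball 0 n) (Q M) 0 {b | b.1 = -(M : ℤ) ∧ b.2.natAbs ≤ K})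
    have h2 := hπ.mono (Arm (ball 0 n) (Q M) 0 {b | b.1 = -(M : ℤ)}) (Up ∪ Dn ∪ Mid) (by
      rintro ω ⟨b, hb, hc⟩
      rcases lt_or_ge (K : ℤ) b.2 with h | h
      · exact Or.inl (Or.inl ⟨b, ⟨hb, by omega⟩, hc⟩)
      · rcases lt_or_ge b.2 (-(K : ℤ)) with h' | h'
        · exact Or.inl (Or.inr ⟨b, ⟨hb, by omega⟩, hc⟩)
        · exact Or.inr ⟨b, ⟨hb, by omega⟩, hc⟩)
    have h3 : (1 - π Up) ^ 2 ≤ (1 - π Up) * (1 - π Dn) := by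
      rw [sq]; exact mul_le_mul_of_nonneg_left hUD (hπ.q_nonneg _)
    have h4 := mul_le_mul_of_nonneg_right h3 (hπ.q_nonneg Mid)
    linarith
  by_cases hcase : 1 - π Mid ≤ δ
  · -- the arm ends in the middle: use gates of radius `K` around its two ends
    refine ⟨K, d0, M + K + d0, by omega, hd2, by omega, ?_⟩
    have h1 : π Mid ≤ π (Arm (ball 0 K ∪ ball (-(M : ℤ), 0) K) (Q (M + K)) 0 {(-(M : ℤ), 0)}) := by
      refine hπ.mono _ _ ?_
      rintro ω ⟨b, ⟨hb1, hb2⟩, hc⟩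
      refine ⟨_, rfl, ?_⟩
      have hbb : b ∈ ball (-(M : ℤ), 0) K := by
        simp only [mem_ball]; omega
      refine (hc.mono ?_).trans ((ball_conn hbb).mono ?_)
      · rintro x ⟨hx | hx, hx'⟩ <;> rw [mem_Q] at hx'
        · exact ⟨Or.inl hx, by rw [mem_Q]; omega⟩
        · refine ⟨Or.inr (Or.inl ?_), by rw [mem_Q]; omega⟩
          rw [mem_ball] at hx ⊢
          omega
      · intro x hx
        refine ⟨Or.inr (Or.inr hx), ?_⟩
        simp only [mem_ball, mem_Q] at hx ⊢
        omega
    have h2 := Arm_map hπ (aff_sym false (-1) 1 (t := (-(d0 : ℤ), 0)) (by simp only; omega))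
      (B := ball 0 K ∪ ball (-(M : ℤ), 0) K) (R := Q (M + K)) (P := {(-(M : ℤ), 0)})
      (B' := gate K d0) (R' := Q (M + K + d0)) (P' := {((d0 : ℤ), 0)}) (c := 0)
      (c' := (-(d0 : ℤ), 0)) (Q_finite _) ?_ ?_ ?_ ?_
    · linarith
    · rintro ⟨a, b⟩ (h | h) <;> simp [mem_ball, aff, gate] at h ⊢ <;> omega
    · rintro ⟨a, b⟩ h
      simp [mem_Q, aff] at h ⊢
      omega
    · simp [aff, hM]; ring
    · simp [aff]
  -- otherwise the arm ends in the upper part of the left side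
  push Not at hcase
  have hup : 1 - π Up ≤ ν ^ 3 := by
    refine le_of_pow_le (n := 2) (by norm_num) (by positivity) ?_
    have h1 : (1 - π Up) ^ 2 * δ ≤ (1 - π Up) ^ 2 * (1 - π Mid) :=
      mul_le_mul_of_nonneg_left hcase.le (sq_nonneg _)
    exact le_of_mul_le_mul_right (h1.trans hprod) hδ
  have hν3 : ν ^ 3 ≤ ν := by
    have : ν ≤ 1 := by linarith
    exact pow_le_of_le_one ν0.le this (by norm_num)
  obtain ⟨z, hz⟩ : ∃ z : V, z = (0, 2 * (K : ℤ)) := ⟨_, rfl⟩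
  have hz1 : z.1 = 0 := by rw [hz]
  have hz2 : z.2 = 2 * (K : ℤ) := by rw [hz]
  -- it suffices to join the origin to `z`
  suffices hs : 1 - δ ≤ π (Arm (ball 0 n ∪ ball z n) (Q (M + 2 * K)) 0 {z}) by
    refine ⟨n, K, M + 3 * K, by omega, hK2, by omega, hs.trans ?_⟩
    refine Arm_map hπ (aff_sym true 1 1 (t := (-(K : ℤ), 0)) (by simp only; omega)) (Q_finite _)
      ?_ ?_ ?_ ?_
    · rintro ⟨a, b⟩ (h | h) <;> simp [mem_ball, aff, gate, hz] at h ⊢ <;> omega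
    · rintro ⟨a, b⟩ h
      simp [mem_Q, aff] at h ⊢
      omega
    · simp [aff, hz]; ring
    · simp [aff]
  set Z := Arm (ball 0 n) (Q M) 0 {z} with hZ
  set U : ℕ → Set (Set V) := fun i =>
    ArmP (ball 0 n) (Q M \ {z}) 0 {b | b.1 = -(M : ℤ) ∧ (K : ℤ) + 1 ≤ b.2} z i with hU
  have hUu : ∀ i, IsUpperSet (U i) := fun i => ArmP_upper _ _ _ _ _ _
  have h3 := hπ.q_mul3 (Arm_upper (ball 0 n) (Q M) 0 {z}) (hUu 0) (hUu 1)
  have h4 := hπ.mono Up (Z ∪ U 0 ∪ U 1) (by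
    rintro ω ⟨b, hb, hc⟩
    rcases hc.avoid z with h | h
    · exact Or.inl (Or.inl ⟨z, rfl, h⟩)
    · obtain ⟨t, ht⟩ := h.pth z
      have e : ((ω ∪ ball 0 n) ∩ Q M) \ {z} = (ω ∪ ball 0 n) ∩ (Q M \ {z}) :=
        Set.ext fun x => by simp only [Set.mem_inter_iff, Set.mem_sdiff]; tauto
      rw [e] at ht
      rcases Nat.mod_two_eq_zero_or_one t with h0 | h0
      · exact Or.inl (Or.inr ⟨b, hb, ht.congr (by omega)⟩)
      · exact Or.inr ⟨b, hb, ht.congr (by omega)⟩)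
  -- either the arm reaches `z`, or it ends on the left side in a given parity class around
  -- `z`
  have hone : 1 - π Z ≤ ν ∨ ∃ i, 1 - π (U i) ≤ ν := by
    by_contra hno
    push Not at hno
    have h0 := hno.2 0
    have h1 := hno.2 1
    have : ν * ν * ν < (1 - π Z) * (1 - π (U 0)) * (1 - π (U 1)) :=
      mul_lt_mul'' (mul_lt_mul'' hno.1 h0 ν0.le ν0.le) h1 (by positivity) ν0.le
    have e : ν ^ 3 = ν * ν * ν := by ring
    linarith
  rcases hone with hone | ⟨i, hone⟩
  · refine le_trans (by linarith) (hπ.mono Z _ ?_)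
    rintro ω ⟨b, hb, hc⟩
    refine ⟨b, hb, hc.mono ?_⟩
    rintro x ⟨hx | hx, hx'⟩ <;> rw [mem_Q] at hx'
    · exact ⟨Or.inl hx, by rw [mem_Q]; omega⟩
    · exact ⟨Or.inr (Or.inl hx), by rw [mem_Q]; omega⟩
  set U' := ArmP (ball 0 n) (Q M \ {z}) 0 {b | b.1 = (M : ℤ) ∧ (K : ℤ) + 1 ≤ b.2} z i with hU'
  -- by reflection, the same parity class is likely on the right side
  have hUU : π (U i) ≤ π U' := by
    refine ArmP_map hπ (aff_sym false (-1) 1 (t := 0) rfl)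
      (fun x => if x.1 = 0 ∧ 2 * (K : ℤ) < x.2 then 1 else 0) ((Q_finite M).subset Set.sdiff_subset)
      ?_ ?_ ?_ ?_ ?_ ?_
    · simp [mem_ball, aff]
    · rintro ⟨a, b⟩ ⟨h, h'⟩
      simp [mem_Q, aff, hz] at h h' ⊢
      exact ⟨h, h'⟩
    · rintro ⟨a, b⟩ h
      simp [aff] at h ⊢
      omega
    · simp [aff]
    · rintro ⟨a, b⟩ ⟨a', b'⟩ ⟨-, hx⟩ ⟨-, hy⟩ hxy
      rw [Set.mem_singleton_iff, hz, Prod.ext_iff] at hx hy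
      rw [gr_adj] at hxy
      simp only [crs, aff, Equiv.coe_fn_mk, hz1, hz2] at hx hy hxy ⊢
      simp
      split_ifs <;> omega
    · rintro ⟨a, b⟩ ⟨h, -⟩
      simp only at h ⊢
      simp
      split_ifs <;> omega
  -- an arm of a ball around `z` ending lower on the left side, obtained by reflecting in the
  -- line `y = K`
  set Za := Arm (ball z n) {v | v.1.natAbs ≤ M ∧ (v.2 - 2 * (K : ℤ)).natAbs ≤ M} z
    {b | b.1 = -(M : ℤ) ∧ b.2 ≤ (K : ℤ) - 1} with hZa
  have hUZ : π Up ≤ π Za := by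
    refine Arm_map hπ (aff_sym false 1 (-1) (t := (0, 2 * (K : ℤ))) (by simp only; omega))
      (Q_finite M) ?_ ?_ ?_ ?_
    · rintro ⟨a, b⟩ h
      simp [mem_ball, aff, hz] at h ⊢
      omega
    · rintro ⟨a, b⟩ h
      simp [mem_Q, aff] at h ⊢
      omega
    · rintro ⟨a, b⟩ h
      simp [aff] at h ⊢
      omega
    · simp [aff, hz]
  have g1 := hπ.q_inter (U i ∩ U') Za
  have g2 := hπ.q_inter (U i) U'
  refine le_trans ?_ (hπ.mono (U i ∩ U' ∩ Za) _ ?_)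
  · linarith
  · rintro ω ⟨⟨⟨l, ⟨hl1, hl2⟩, hl⟩, ⟨r, ⟨hr1, hr2⟩, hr⟩⟩, ⟨q, ⟨hq1, hq2⟩, hq⟩⟩
    obtain ⟨x, hx1, hx2⟩ := strip_cross (M := M) (by omega) (z := z) hz1
      (fun x hx => hx.2.1.1) (fun x hx => hx.2.1) hl hr hq hl1 hr1 hq1 (by omega)
    refine ⟨z, rfl, (hx1.symm.mono ?_).trans (hx2.mono ?_)⟩
    · rintro x ⟨hx, hx', -⟩
      rw [mem_Q] at hx'
      exact ⟨hx.imp_right Or.inl, by rw [mem_Q]; omega⟩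
    · rintro x ⟨hx, hx'⟩
      exact ⟨hx.imp_right Or.inr, by rw [mem_Q]; simp only [Set.mem_ofPred_eq] at hx'; omega⟩

/-- The encircling event of far away gates is likely, whatever the finite symmetric set to be
avoided, as long as that set is closed with positive probability. -/
lemma enc_likely (hπ : PM π)
    (arms : ∀ ε : ℝ, 0 < ε → ∃ n : ℕ, ∀ M : ℕ, n < M →
      1 - ε ≤ π (Arm (ball 0 n) (Q M) 0 {b | b.1.natAbs = M ∨ b.2.natAbs = M}))
    {S : Set V} {s : ℕ} (hS : ∀ x ∈ S, nrm x ≤ s) (hS0 : (0 : V) ∈ S)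
    (hSy : ∀ x y : ℤ, (x, y) ∈ S → (x, -y) ∈ S) {c : ℝ} (hc : 0 < c)
    (hcS : c ≤ 1 - π {ω | ∃ x ∈ S, x ∈ ω}) {η : ℝ} (hη : 0 < η) (F : ℕ → ℕ) :
    ∃ r d W : ℕ, F r ≤ d ∧ d % 2 = 0 ∧ d + r ≤ W ∧ 1 - η ≤ π (Enc S r d W) := by
  obtain ⟨r, d, W, hF, hd2, hW, hJ⟩ := J_likely hπ arms (δ := min 1 (c * (η / 2) ^ 2))
    (by positivity) (min_le_left _ _) (fun r => F r + r + s + 1)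
  refine ⟨r, d, W, by omega, hd2, hW, ?_⟩
  have hgS : ∀ x ∈ gate r d, x ∉ S := by
    rintro x (hx | hx) hxS <;> rw [mem_ball] at hx <;> have := hS x hxS <;> unfold nrm at this <;>
      simp only at hx <;> omega
  have hgQ : gate r d ⊆ Q W := by
    rintro x (hx | hx) <;> rw [mem_ball] at hx <;> rw [mem_Q] <;> simp only at hx <;> omega
  -- paths joining the two balls of the gate off `S`, with given crossing parity around the
  -- origin
  set E : ℕ → Set (Set V) := fun i =>
    ArmP (gate r d) (Q W \ S) (-(d : ℤ), 0) {((d : ℤ), 0)} 0 i with hE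
  have hEu : ∀ i, IsUpperSet (E i) := fun i => ArmP_upper _ _ _ _ _ _
  have hVu : IsUpperSet {ω : Set V | ∃ x ∈ S, x ∈ ω} := by
    rintro ω ω' h ⟨x, hx, hx'⟩
    exact ⟨x, hx, h hx'⟩
  have h1 := hπ.q_mul3 (hEu 0) (hEu 1) hVu
  have h2 := hπ.mono (Arm (gate r d) (Q W) (-(d : ℤ), 0) {((d : ℤ), 0)})
    (E 0 ∪ E 1 ∪ {ω : Set V | ∃ x ∈ S, x ∈ ω}) (by
    rintro ω ⟨b, hb, hc⟩
    by_cases hω : ∃ x ∈ S, x ∈ ω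
    · exact Or.inr hω
    push Not at hω
    obtain ⟨t, ht⟩ := (hc.mono (B := (ω ∪ gate r d) ∩ (Q W \ S)) (by
      rintro x ⟨hx, hx'⟩
      refine ⟨hx, hx', fun hxS => ?_⟩
      rcases hx with hx | hx
      · exact hω x hxS hx
      · exact hgS x hx hxS)).pth 0
    rcases Nat.mod_two_eq_zero_or_one t with h0 | h0
    · exact Or.inl (Or.inl ⟨b, hb, ht.congr (by omega)⟩)
    · exact Or.inl (Or.inr ⟨b, hb, ht.congr (by omega)⟩))
  -- the reflection in the horizontal axis exchanges the two parities
  have hrefl : π (E 0) = π (E 1) := by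
    have key : ∀ i j, (i + j) % 2 = 1 → π (E i) ≤ π (E j) := by
      intro i j hij
      refine ArmP_map hπ (aff_sym false 1 (-1) (t := 0) rfl)
        (fun x => if 0 < x.1 then 1 else 0) ((Q_finite W).subset Set.sdiff_subset)
        ?_ ?_ ?_ ?_ ?_ ?_
      · rintro ⟨a, b⟩ (h | h) <;> simp [mem_ball, aff, gate] at h ⊢ <;> omega
      · rintro ⟨a, b⟩ ⟨h, h'⟩
        refine ⟨by simpa [mem_Q, aff] using h, fun hS' => h' ?_⟩
        have := hSy _ _ hS'
        simpa [aff] using this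
      · simp [aff]
      · simp [aff]
      · rintro ⟨a, b⟩ ⟨a', b'⟩ ⟨-, hx⟩ ⟨-, hy⟩ hxy
        have hx0 : ¬ (a = 0 ∧ b = 0) := fun h => hx (by rw [h.1, h.2]; exact hS0)
        have hy0 : ¬ (a' = 0 ∧ b' = 0) := fun h => hy (by rw [h.1, h.2]; exact hS0)
        rw [gr_adj] at hxy
        simp only [crs, aff, Equiv.coe_fn_mk] at hxy ⊢
        simp
        split_ifs <;> omega
      · rintro ⟨a, b⟩ h
        rw [Set.mem_singleton_iff, Prod.ext_iff] at h
        simp only at h ⊢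
        split_ifs <;> omega
    exact le_antisymm (key 0 1 rfl) (key 1 0 rfl)
  have h3 : (1 - π (E 0)) ^ 2 * c ≤ (η / 2) ^ 2 * c := by
    have a : (1 - π (E 0)) ^ 2 * c ≤ (1 - π (E 0)) ^ 2 * (1 - π {ω : Set V | ∃ x ∈ S, x ∈ ω}) :=
      mul_le_mul_of_nonneg_left hcS (sq_nonneg _)
    rw [← hrefl, ← sq] at h1
    have := min_le_right 1 (c * (η / 2) ^ 2)
    linarith
  have h4 : 1 - π (E 0) ≤ η / 2 :=
    le_of_pow_le (n := 2) (by norm_num) (by positivity) (le_of_mul_le_mul_right h3 hc)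
  have h5 := hπ.q_inter (E 0) (E 1)
  refine le_trans ?_ (hπ.mono (E 0 ∩ E 1) _ ?_)
  · rw [← hrefl] at h5; linarith
  -- two paths of different parities form a closed path around the origin
  rintro ω ⟨⟨b, hb, p0⟩, ⟨b', hb', p1⟩⟩
  rw [Set.mem_singleton_iff] at hb hb'
  subst hb
  rw [hb'] at p1
  set A := (ω ∪ gate r d) ∩ (Q W \ S) with hA
  have hsub : gate r d ⊆ A := fun x hx => ⟨Or.inr hx, hgQ hx, hgS x hx⟩
  have q0 := p0.cluster
  have q1 := p1.cluster
  refine ⟨{x | Conn A x ((d : ℤ), 0)}, fun x hx => ?_, fun x hx => ?_, fun x hx => ?_,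
    fun x hx y hy => ?_, fun v hv => ?_⟩
  · exact ⟨(Conn.left hx).1, (Conn.left hx).2.1⟩
  · rcases hx with hx | hx
    · exact ((ball_conn hx).mono (Set.subset_union_left.trans hsub)).trans p0.conn
    · exact (ball_conn hx).mono (Set.subset_union_right.trans hsub)
  · exact (Conn.left hx).2.2
  · exact (Conn.cluster hx).trans (Conn.cluster hy).symm
  · refine odd_closed_separates (W := W) (fun x hx => (Conn.left hx).2.1) (q0.trans q1.symm) rfl ?_
    rw [mem_Q] at hv
    omega

end Likely

/-! ### Asymptotic invariance under lattice symmetries -/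

section Inv
open Classical

lemma nrm_pred {x : V} {n : ℕ} (hx : nrm x = n + 1) : ∃ y, nrm y = n ∧ gr.Adj y x := by
  unfold nrm at *
  simp only [gr_adj]
  rcases lt_trichotomy x.1 0 with h | h | h
  · exact ⟨(x.1 + 1, x.2), by simp only; omega, by simp only; omega⟩
  · rcases lt_or_ge x.2 0 with h' | h'
    · exact ⟨(x.1, x.2 + 1), by simp only; omega, by simp only; omega⟩
    · exact ⟨(x.1, x.2 - 1), by simp only; omega, by simp only; omega⟩
  · exact ⟨(x.1 - 1, x.2), by simp only; omega, by simp only; omega⟩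

lemma HN_growth {N : ℕ} {h : V → ℤ} (hh : h ∈ HN N) (x : V) :
    (h x).natAbs ≤ (h 0).natAbs + nrm x := by
  obtain ⟨n, hn⟩ : ∃ n, nrm x = n := ⟨_, rfl⟩
  induction n generalizing x with
  | zero =>
    have : x = 0 := by
      unfold nrm at hn
      exact Prod.ext (by simp only [Prod.fst_zero]; omega) (by simp only [Prod.snd_zero]; omega)
    subst this
    omega
  | succ n ih =>
    obtain ⟨y, hy, hyx⟩ := nrm_pred hn
    have := ih y hy
    have := HN_lip hh hyx
    omega

/-- The expected absolute height. -/
def mab (N : ℕ) (x : V) : ℝ := ex (HN N) fun h => (absf h x : ℝ)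

lemma HN_mono {N N' : ℕ} (h : N ≤ N') {F : (V → ℕ) → ℝ} (h0 : ∀ a, 0 ≤ F a) (hF : Monotone F) :
    ex (HN N) (fun h => F (absf h)) ≤ ex (HN N') fun h => F (absf h) :=
  abs_mono (bl_mono (by omega)) (HN_nonempty N') (fun _ _ _ _ _ => le_rfl) h0 hF

lemma mono_coord (x : V) : Monotone fun a : V → ℕ => (a x : ℝ) :=
  fun _ _ h => Nat.cast_le.2 (h x)

lemma mab_mono {N N' : ℕ} (h : N ≤ N') (x : V) : mab N x ≤ mab N' x :=
  HN_mono h (fun a => Nat.cast_nonneg _) (mono_coord x)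

/-- Bounded variance at the origin, together with the Lipschitz property. -/
lemma mab_le {c : ℝ} (hc : 0 < c) (h : ∀ N, c ≤ p0 N) : ∃ C : ℝ, ∀ N x, mab N x ≤ C + nrm x := by
  obtain ⟨V₀, hV⟩ := var_bound hc h
  refine ⟨V₀, fun N x => ?_⟩
  have h1 : mab N x ≤ ex (HN N) fun h => (h 0 : ℝ) ^ 2 + nrm x := by
    refine ex_mono fun f hf => ?_
    have h1 := HN_growth hf x
    have h2 : ((f 0).natAbs : ℤ) ≤ (f 0) ^ 2 := by
      rw [← Int.natAbs_sq]
      exact Int.le_self_sq _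
    have h3 : ((f 0).natAbs : ℝ) ≤ (f 0 : ℝ) ^ 2 := by
      have : (((f 0).natAbs : ℤ) : ℝ) ≤ (((f 0) ^ 2 : ℤ) : ℝ) := Int.cast_le.2 h2
      push_cast at this ⊢
      simpa using this
    have h4 : ((f x).natAbs : ℝ) ≤ (f 0).natAbs + nrm x := by exact_mod_cast h1
    simp only [absf]
    linarith
  rw [ex_add, ex_const (HN_nonempty N)] at h1
  linarith [hV N]

/-- As `F + ∑ a` and `1 - F + ∑ a` are increasing functions of `|h|`, `abs_mono` bounds the
difference of the two laws of `|h|` in a window by the difference of the mean absolute heights. -/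
lemma tv_abs {Λ Λ' : Finset V} (hL : Λ' ⊆ Λ) (hn : (Hom Λ 0).Nonempty) (hn' : (Hom Λ' 0).Nonempty)
    (B : Finset V) {F : (V → ℕ) → ℝ} (h0 : ∀ a, 0 ≤ F a) (h1 : ∀ a, F a ≤ 1)
    (hF : ∀ a b, (∀ v ∈ B, a v = b v) → F a = F b) :
    |ex (Hom Λ 0) (fun h => F (absf h)) - ex (Hom Λ' 0) (fun h => F (absf h))| ≤
      ex (Hom Λ 0) (fun h => ∑ x ∈ B, (absf h x : ℝ)) -
        ex (Hom Λ' 0) fun h => ∑ x ∈ B, (absf h x : ℝ) := by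
  have key : ∀ G : (V → ℕ) → ℝ, (∀ a, 0 ≤ G a) → (∀ a, G a ≤ 1) →
      (∀ a b, (∀ v ∈ B, a v = b v) → G a = G b) →
      ex (Hom Λ' 0) (fun h => G (absf h)) + ex (Hom Λ' 0) (fun h => ∑ x ∈ B, (absf h x : ℝ)) ≤
      ex (Hom Λ 0) (fun h => G (absf h)) + ex (Hom Λ 0) (fun h => ∑ x ∈ B, (absf h x : ℝ)) := by
    intro G g0 g1 hG
    have := abs_mono hL hn (fun _ _ _ _ _ => le_rfl) (F := fun a => G a + ∑ x ∈ B, (a x : ℝ))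
      (fun a => add_nonneg (g0 a) (Finset.sum_nonneg fun _ _ => Nat.cast_nonneg _)) (by
        intro a b hab
        simp only
        by_cases e : ∀ v ∈ B, a v = b v
        · rw [hG a b e, Finset.sum_congr rfl fun v hv => by rw [e v hv]]
        · push Not at e
          obtain ⟨v, hv, hne⟩ := e
          have h1 : ∑ x ∈ B, (a x : ℝ) + 1 ≤ ∑ x ∈ B, (b x : ℝ) := by
            have : ∑ x ∈ B, a x < ∑ x ∈ B, b x :=
              Finset.sum_lt_sum (fun i _ => hab i) ⟨v, hv, lt_of_le_of_ne (hab v) hne⟩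
            exact_mod_cast this
          linarith [g0 b, g1 a])
    rw [ex_add, ex_add] at this
    exact this
  have k1 := key F h0 h1 hF
  have k2 := key (fun a => 1 - F a) (fun a => by linarith [h1 a]) (fun a => by linarith [h0 a])
    fun a b h => by rw [hF a b h]
  rw [ex_sub, ex_sub, ex_const hn, ex_const hn'] at k2
  rw [abs_le]
  constructor <;> linarith

/-- The preimage of a domain. -/
def pull (φ : V ≃ V) (Λ : Finset V) : Finset V := Λ.map φ.symm.toEmbedding

lemma mem_pull {φ : V ≃ V} {Λ : Finset V} {v : V} : v ∈ pull φ Λ ↔ φ v ∈ Λ := by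
  simp only [pull, Finset.mem_map_equiv, Equiv.symm_symm]

lemma Sym.symm {φ : V ≃ V} (hφ : Sym φ) : Sym φ.symm := by
  refine ⟨fun u v => ?_, fun v => ?_, ?_⟩
  · rw [← hφ.adj, Equiv.apply_symm_apply, Equiv.apply_symm_apply]
  · have := hφ.par (φ.symm v)
    rw [Equiv.apply_symm_apply] at this
    omega
  · obtain ⟨K, hK⟩ := hφ.dist
    refine ⟨K, fun v => ?_⟩
    have := hK (φ.symm v)
    rw [Equiv.apply_symm_apply] at this
    exact ⟨this.2, this.1⟩

lemma Hom_pull {φ : V ≃ V} (hφ : Sym φ) {Λ : Finset V} {f : V → ℤ} (hf : f ∈ Hom Λ 0) :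
    f ∘ φ ∈ Hom (pull φ Λ) 0 := by
  rw [mem_Hom] at *
  obtain ⟨h1, h2, h3⟩ := hf
  refine ⟨fun v hv => h1 _ fun h => hv (mem_pull.2 h), fun v hv => ?_, fun u hu v huv => ?_⟩
  · have := h2 _ (mem_pull.1 hv)
    have := hφ.par v
    simp only [Function.comp]
    omega
  · exact h3 _ (mem_pull.1 hu) _ ((hφ.adj _ _).2 huv)

lemma ex_pull {φ : V ≃ V} (hφ : Sym φ) (Λ : Finset V) (F : (V → ℤ) → ℝ) :
    ex (Hom (pull φ Λ) 0) F = ex (Hom Λ 0) fun f => F (f ∘ φ) := by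
  have e : pull φ.symm (pull φ Λ) = Λ := by
    ext v; rw [mem_pull, mem_pull, Equiv.apply_symm_apply]
  refine ex_bij (fun f => f ∘ φ) (fun f => f ∘ φ.symm) (fun f hf => Hom_pull hφ hf)
    (fun f hf => ?_) (fun f _ => ?_) (fun f _ => ?_) F
  · have := Hom_pull hφ.symm hf
    rwa [e] at this
  · ext v; simp
  · ext v; simp

lemma pull_HN_nonempty {φ : V ≃ V} (hφ : Sym φ) (N : ℕ) : (Hom (pull φ (bl (2 * N))) 0).Nonempty :=
  let ⟨f, hf⟩ := HN_nonempty N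
  ⟨_, Hom_pull hφ hf⟩

lemma pull_sub {φ : V ≃ V} {K : ℕ} (hK : ∀ v, nrm (φ v) ≤ nrm v + K ∧ nrm v ≤ nrm (φ v) + K)
    (N : ℕ) : bl (2 * N) ⊆ pull φ (bl (2 * (N + K))) ∧ pull φ (bl (2 * N)) ⊆ bl (2 * (N + K)) := by
  constructor <;> intro v hv <;> simp only [mem_pull, mem_bl] at * <;> have := hK v <;> omega

/-- Sums of expected absolute heights over a window stabilise. -/
lemma mab_cauchy {c : ℝ} (hc : 0 < c) (h : ∀ N, c ≤ p0 N) (B : Finset V) (K : ℕ) {ε : ℝ}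
    (hε : 0 < ε) :
    ∃ N₀, ∀ N ≥ N₀, ex (HN (N + K)) (fun h => ∑ x ∈ B, (absf h x : ℝ)) -
      ex (HN N) (fun h => ∑ x ∈ B, (absf h x : ℝ)) ≤ ε := by
  set s : ℕ → ℝ := fun N => ex (HN N) (fun h => ∑ x ∈ B, (absf h x : ℝ)) with hs
  have hse : ∀ N, s N = ∑ x ∈ B, mab N x := fun N => ex_sum _ _
  have hm : Monotone s := fun N N' hN => by
    rw [hse, hse]
    exact Finset.sum_le_sum fun x _ => mab_mono hN x
  obtain ⟨C, hC⟩ := mab_le hc h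
  have hb : BddAbove (Set.range s) := ⟨∑ x ∈ B, (C + nrm x), by
    rintro _ ⟨N, rfl⟩
    rw [hse]
    exact Finset.sum_le_sum fun x _ => hC N x⟩
  have ht := tendsto_atTop_ciSup hm hb
  obtain ⟨N₀, hN₀⟩ := Filter.eventually_atTop.1 (ht.eventually (lt_mem_nhds (sub_lt_self _ hε)))
  refine ⟨N₀, fun N hN => ?_⟩
  have h1 := hN₀ N hN
  have h2 := le_ciSup hb (N + K)
  change s (N + K) - s N ≤ ε
  linarith

/-- Comparison of a domain with its preimage, uniformly over functions of `|h|` in a window. -/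
lemma inv_abs {c : ℝ} (hc : 0 < c) (h : ∀ N, c ≤ p0 N) {φ : V ≃ V} (hφ : Sym φ) (B : Finset V)
    {ε : ℝ} (hε : 0 < ε) :
    ∃ N₀, ∀ N ≥ N₀, ∀ F : (V → ℕ) → ℝ, (∀ a, 0 ≤ F a) → (∀ a, F a ≤ 1) →
      (∀ a b, (∀ v ∈ B, a v = b v) → F a = F b) →
      |ex (Hom (pull φ (bl (2 * N))) 0) (fun h => F (absf h)) -
        ex (HN N) (fun h => F (absf h))| ≤ ε := by
  obtain ⟨K, hK⟩ := hφ.dist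
  obtain ⟨N₀, hN₀⟩ := mab_cauchy hc h B (2 * K) (half_pos hε)
  refine ⟨N₀ + K, fun N hN F h0 h1 hF => ?_⟩
  obtain ⟨m, rfl⟩ : ∃ m, N = m + K := ⟨N - K, by omega⟩
  have hm := hN₀ m (by omega)
  have s1 := (pull_sub hK m).1
  have s2 := (pull_sub hK (m + K)).2
  have t1 := tv_abs s1 (pull_HN_nonempty hφ (m + K)) (HN_nonempty m) B h0 h1 hF
  have t2 := tv_abs (bl_mono (by omega) : bl (2 * m) ⊆ bl (2 * (m + K))) (HN_nonempty (m + K))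
    (HN_nonempty m) B h0 h1 hF
  have hns : Monotone fun a : V → ℕ => ∑ x ∈ B, (a x : ℝ) := fun a b hab =>
    Finset.sum_le_sum fun x _ => Nat.cast_le.2 (hab x)
  have hnn : ∀ a : V → ℕ, (0 : ℝ) ≤ ∑ x ∈ B, (a x : ℝ) := fun a =>
    Finset.sum_nonneg fun _ _ => Nat.cast_nonneg _
  have m1 := abs_mono s2 (HN_nonempty (m + K + K)) (fun _ _ _ _ _ => le_rfl) hnn hns
  have m2 := HN_mono (show m + K ≤ m + K + K by omega) hnn hns
  rw [show m + 2 * K = m + K + K by ring] at hm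
  change |_ - ex (HN m) _| ≤ _ - ex (HN m) _ at t1
  change |ex (HN (m + K)) _ - ex (HN m) _| ≤ ex (HN (m + K)) _ - ex (HN m) _ at t2
  change _ ≤ ex (HN (m + K + K)) _ at m1
  rw [abs_le] at *
  constructor <;> linarith [t1.1, t1.2, t2.1, t2.2]

/-- Limit along a fixed nonprincipal ultrafilter. -/
def ulim (f : ℕ → ℝ) : ℝ := (Filter.hyperfilter ℕ : Filter ℕ).limUnder f

lemma ulim_tendsto {f : ℕ → ℝ} {a b : ℝ} (ha : ∀ n, a ≤ f n) (hb : ∀ n, f n ≤ b) :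
    Filter.Tendsto f (Filter.hyperfilter ℕ : Filter ℕ) (nhds (ulim f)) := by
  have := (isCompact_Icc (a := a) (b := b)).ultrafilter_le_nhds'
    ((Filter.hyperfilter ℕ).map f) (Filter.eventually_map.2 (Filter.Eventually.of_forall fun n => ⟨ha n, hb n⟩))
  obtain ⟨x, -, hx⟩ := this
  exact tendsto_nhds_limUnder ⟨x, hx⟩

lemma hyper_le : (Filter.hyperfilter ℕ : Filter ℕ) ≤ Filter.atTop := by
  rw [← Nat.cofinite_eq_atTop]; exact Filter.hyperfilter_le_cofinite

lemma ulim_frequently {f : ℕ → ℝ} {a b x : ℝ} (ha : ∀ n, a ≤ f n) (hb : ∀ n, f n ≤ b)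
    (hx : x < ulim f) (N₀ : ℕ) : ∃ N ≥ N₀, x < f N := by
  have h1 := (ulim_tendsto ha hb).eventually (lt_mem_nhds hx)
  have h2 := hyper_le (Filter.eventually_ge_atTop N₀)
  obtain ⟨N, h⟩ := (h1.and h2).exists
  exact ⟨N, h.2, h.1⟩

lemma ulim_ge {f : ℕ → ℝ} {a b x : ℝ} (ha : ∀ n, a ≤ f n) (hb : ∀ n, f n ≤ b) {N₀ : ℕ}
    (hx : ∀ N ≥ N₀, x ≤ f N) : x ≤ ulim f :=
  ge_of_tendsto (ulim_tendsto ha hb) (hyper_le (Filter.eventually_atTop.2 ⟨N₀, hx⟩))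

lemma ulim_le {f : ℕ → ℝ} {a b x : ℝ} (ha : ∀ n, a ≤ f n) (hb : ∀ n, f n ≤ b) {N₀ : ℕ}
    (hx : ∀ N ≥ N₀, f N ≤ x) : ulim f ≤ x :=
  le_of_tendsto (ulim_tendsto ha hb) (hyper_le (Filter.eventually_atTop.2 ⟨N₀, hx⟩))

/-- Limits of finite-volume laws of a random set which are positively associated and
asymptotically invariant. -/
lemma PM_of {β : Type*} {H : ℕ → Finset β} (hH : ∀ N, (H N).Nonempty) (ob : β → Set V)
    (fkg : ∀ N, ∀ A B : Set (Set V), IsUpperSet A → IsUpperSet B →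
      pr (H N) (fun b => ob b ∈ A) * pr (H N) (fun b => ob b ∈ B) ≤
        pr (H N) fun b => ob b ∈ A ∧ ob b ∈ B)
    (inv : ∀ φ : V ≃ V, Sym φ → ∀ E : Set (Set V), Loc E → ∀ ε : ℝ, 0 < ε → ∃ N₀, ∀ N ≥ N₀,
      |pr (H N) (fun b => φ ⁻¹' ob b ∈ E) - pr (H N) (fun b => ob b ∈ E)| ≤ ε) :
    PM fun E => ulim fun N => pr (H N) fun b => ob b ∈ E := by
  have T : ∀ E : Set (Set V), Filter.Tendsto (fun N => pr (H N) fun b => ob b ∈ E)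
      (Filter.hyperfilter ℕ : Filter ℕ) (nhds (ulim fun N => pr (H N) fun b => ob b ∈ E)) :=
    fun E => ulim_tendsto (fun N => pr_nonneg _) fun N => pr_le_one _
  refine ⟨fun A => ?_, ?_, fun A B hAB => ?_, fun A B => ?_, fun A B hA hB => ?_,
    fun φ hφ E hE => ?_⟩
  · exact ge_of_tendsto' (T A) fun N => pr_nonneg _
  · refine tendsto_nhds_unique (T Set.univ) ?_
    have : (fun N => pr (H N) fun b => ob b ∈ (Set.univ : Set (Set V))) = fun _ => 1 := by
      ext N; exact pr_true (hH N) fun _ _ => trivial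
    rw [this]
    exact tendsto_const_nhds
  · exact le_of_tendsto_of_tendsto' (T A) (T B) fun N => pr_mono fun b _ h => hAB h
  · refine tendsto_nhds_unique ((T _).add (T _)) ?_
    refine ((T A).add (T B)).congr fun N => ?_
    simp only [pr_def, ← ex_add]
    refine ex_congr fun b _ => ?_
    simp only [ind, Set.mem_union, Set.mem_inter_iff]
    by_cases hA : ob b ∈ A <;> by_cases hB : ob b ∈ B <;> simp [hA, hB]
  · exact le_of_tendsto_of_tendsto' ((T A).mul (T B)) (T _) fun N => fkg N A B hA hB
  · refine tendsto_nhds_unique (T _) ?_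
    have hd : Filter.Tendsto (fun N => pr (H N) (fun b => φ ⁻¹' ob b ∈ E) -
        pr (H N) (fun b => ob b ∈ E)) Filter.atTop (nhds 0) := by
      rw [Metric.tendsto_atTop]
      intro ε hε
      obtain ⟨N₀, hN⟩ := inv φ hφ E hE (ε / 2) (half_pos hε)
      refine ⟨N₀, fun N hN' => ?_⟩
      rw [Real.dist_eq, sub_zero]
      linarith [hN N hN']
    have := (hd.mono_left hyper_le).add (T E)
    simp only [sub_add_cancel, zero_add] at this
    exact this

/-- The support of a height function. -/
def supp (h : V → ℤ) : Set V := {v | h v ≠ 0}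

lemma ind_abs_mono {A : Set (Set V)} (hA : IsUpperSet A) :
    Monotone fun a : V → ℕ => ind ({v | a v ≠ 0} ∈ A) := by
  intro a b hab
  refine ind_mono fun h => hA ?_ h
  intro v hv
  have := hab v
  simp only [Set.mem_ofPred_eq] at hv ⊢
  change a v ≤ b v at this
  omega

lemma supp_eq (h : V → ℤ) : supp h = {v | absf h v ≠ 0} := by
  ext v; simp [supp, absf]

lemma ex_comm_ind (H : Finset (V → ℤ)) (A B : (V → ℤ) → Prop) :
    (ex H fun h => ind (A h) * ind (B h)) = pr H fun h => A h ∧ B h := by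
  rw [pr_def]
  exact ex_congr fun h _ => (ind_and _ _).symm

/-- The limit law of the support of `h` is positively associated by `abs_fkg` and invariant under
the lattice symmetries by `inv_abs`. -/
lemma PM_one {c : ℝ} (hc : 0 < c) (h : ∀ N, c ≤ p0 N) :
    PM fun E => ulim fun N => pr (HN N) fun b => supp b ∈ E := by
  refine PM_of HN_nonempty supp (fun N A B hA hB => ?_) fun φ hφ E ⟨B, hB⟩ ε hε => ?_
  · have := abs_fkg (Λ := bl (2 * N)) (fun a => ind_nonneg _) (fun a => ind_nonneg _)
      (ind_abs_mono hB) (ind_abs_mono hA)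
    simp only [← supp_eq] at this
    rw [ex_comm_ind] at this
    exact this
  · obtain ⟨N₀, hN⟩ := inv_abs hc h hφ B hε
    refine ⟨N₀, fun N hN' => ?_⟩
    have := hN N hN' (fun a => ind ({v | a v ≠ 0} ∈ E)) (fun _ => ind_nonneg _)
      (fun _ => ind_le_one _) fun a b hab => by
        have : {v | a v ≠ 0} ∈ E ↔ {v | b v ≠ 0} ∈ E := hB _ _ fun v hv => by
          simp only [Set.mem_ofPred_eq, hab v hv]
        simp only [this]
    rw [ex_pull hφ] at this
    simp only [← supp_eq] at this
    exact this

end Inv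

/-! ### Preparations on gates and limits -/

section Prep
open Classical

lemma ind_congr {p q : Prop} (h : p ↔ q) : ind p = ind q := by rw [propext h]

lemma up_ne {a b : V → ℕ} (hab : a ≤ b) {x : V} (h : a x ≠ 0) : b x ≠ 0 := by
  have : a x ≤ b x := hab x
  omega

/-- An explored vertex of the box `Q M` is joined inside the box to its sides by vertices
satisfying `p`. -/
lemma expl_conn {α : Type*} {K : Finset V} {p : α → Prop} {η : V → α} {M : ℕ} (hK : Q M ⊆ K) {v : V}
    (h : Expl K p η v) (hv : v ∈ Q M) :
    ∃ b : V, (b.1.natAbs = M ∨ b.2.natAbs = M) ∧ Conn ({x | p (η x)} ∩ Q M) v b := by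
  induction h with
  | out v h => exact absurd (hK hv) h
  | step u v hu huv hp ih =>
    by_cases hu' : u ∈ Q M
    · obtain ⟨b, hb, hc⟩ := ih hu'
      exact ⟨b, hb, .cons _ _ _ ⟨hp, hv⟩ huv.symm hc⟩
    · refine ⟨v, ?_, .nil _ ⟨hp, hv⟩⟩
      rw [mem_Q] at hu' hv
      rw [gr_adj] at huv
      omega

/-- An explored vertex is joined to the outside of `Q W` off every set of vertices of `K` failing
`p`. -/
lemma expl_escape {α : Type*} {K : Finset V} {p : α → Prop} {η : V → α} {T : Set V} {W : ℕ}
    (hT : ∀ x ∈ T, ¬ p (η x)) (hTK : T ⊆ K) (hQ : Q W ⊆ K) {v : V} (h : Expl K p η v) :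
    ∃ w, w ∉ Q W ∧ Conn Tᶜ v w := by
  induction h with
  | out v h => exact ⟨v, fun hv => h (hQ hv), .nil _ fun hv => h (hTK hv)⟩
  | step u v hu huv hp ih =>
    obtain ⟨w, hw, hc⟩ := ih
    exact ⟨w, hw, .cons _ _ _ (fun hv => hT v hv hp) huv.symm hc⟩

/-- The translation by `-x`. -/
def tr (x : V) : V ≃ V := aff false 1 1 (-x)

lemma tr_apply (x v : V) : tr x v = v - x := by
  simp [tr, aff, Prod.ext_iff, sub_eq_add_neg]

lemma tr_sym {x : V} (hx : (x.1 + x.2) % 2 = 0) : Sym (tr x) :=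
  aff_sym _ _ _ (by simp only [Prod.fst_neg, Prod.snd_neg]; omega)

lemma nrm_sub (u v : V) : nrm (u - v) ≤ nrm u + nrm v := by
  simp only [nrm, Prod.fst_sub, Prod.snd_sub]; omega

lemma nrm_le_sub (u v : V) : nrm u ≤ nrm (u - v) + nrm v := by
  simp only [nrm, Prod.fst_sub, Prod.snd_sub]; omega

lemma tr_bl (x : V) (N : ℕ) : bl (2 * N) ⊆ pull (tr x) (bl (2 * (N + nrm x))) ∧
    pull (tr x) (bl (2 * N)) ⊆ bl (2 * (N + nrm x)) :=
  pull_sub (fun v => by rw [tr_apply]; exact ⟨nrm_sub v x, nrm_le_sub v x⟩) N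

/-- Increasing functions of `|h|`, compared with a translate of a larger domain. -/
lemma le_translate {x : V} (hx : (x.1 + x.2) % 2 = 0) (N : ℕ) {F : (V → ℕ) → ℝ} (h0 : ∀ a, 0 ≤ F a)
    (hF : Monotone F) :
    ex (HN N) (fun h => F (absf h)) ≤
      ex (HN (N + nrm x)) fun h => F (absf fun v => h (v - x)) := by
  have h1 := abs_mono (tr_bl x N).1 (pull_HN_nonempty (tr_sym hx) (N + nrm x))
    (fun _ _ _ _ _ => le_rfl) h0 hF
  rw [ex_pull (tr_sym hx)] at h1
  refine h1.trans (le_of_eq (ex_congr fun h _ => ?_))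
  congr 2
  ext v
  rw [Function.comp, tr_apply]

lemma translate_le {x : V} (hx : (x.1 + x.2) % 2 = 0) {N N' : ℕ} (hN : N + nrm x ≤ N')
    {F : (V → ℕ) → ℝ} (h0 : ∀ a, 0 ≤ F a) (hF : Monotone F) :
    ex (HN N) (fun h => F (absf fun v => h (v - x))) ≤ ex (HN N') fun h => F (absf h) := by
  have h1 := abs_mono (tr_bl x N).2 (HN_nonempty (N + nrm x)) (fun _ _ _ _ _ => le_rfl) h0 hF
  rw [ex_pull (tr_sym hx)] at h1
  refine le_trans (le_of_eq (ex_congr fun h _ => ?_)) (h1.trans (HN_mono hN h0 hF))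
  congr 2
  ext v
  rw [Function.comp, tr_apply]

lemma zero_prob {c : ℝ} (h : ∀ N, c ≤ p0 N) {x : V} (hx : (x.1 + x.2) % 2 = 0) (N : ℕ) :
    pr (HN N) (fun f => f x ≠ 0) ≤ 1 - c := by
  have h1 := le_translate hx N (F := fun a => ind (a x ≠ 0)) (fun _ => ind_nonneg _)
    (fun a b hab => ind_mono fun h => up_ne hab h)
  have h2 := h (N + nrm x)
  rw [p0, ← sub_le_sub_iff_left 1, ← pr_not (HN_nonempty _)] at h2
  refine le_trans (le_of_eq ?_) (h1.trans (le_trans (le_of_eq ?_) h2))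
  · rw [pr_def]
    exact ex_congr fun f _ => ind_congr (by simp [absf])
  · rw [pr_def]
    exact ex_congr fun f _ => ind_congr (by simp [absf])

lemma pr_fkg_abs {N : ℕ} {A B : (V → ℕ) → Prop} (hA : Monotone fun a => ind (A a))
    (hB : Monotone fun a => ind (B a)) :
    pr (HN N) (fun h => A (absf h)) * pr (HN N) (fun h => B (absf h)) ≤
      pr (HN N) fun h => A (absf h) ∧ B (absf h) := by
  have := abs_fkg (Λ := bl (2 * N)) (fun a => ind_nonneg _) (fun a => ind_nonneg _) hB hA
  rw [ex_comm_ind] at this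
  exact this

/-- The events that `h` vanishes at given vertices are positively correlated, being decreasing in
`|h|`. -/
lemma zeros_prob {c : ℝ} (hc : 0 < c) (h : ∀ N, c ≤ p0 N) (S : Finset V)
    (hS : ∀ x ∈ S, (x.1 + x.2) % 2 = 0) (N : ℕ) :
    c ^ S.card ≤ 1 - pr (HN N) fun f => ∃ x ∈ S, f x ≠ 0 := by
  induction S using Finset.induction_on with
  | empty => simp [pr_false]
  | insert x S hxS ih =>
    have ih := ih fun y hy => hS y (Finset.mem_insert_of_mem hy)
    have h1 := zero_prob h (hS x (Finset.mem_insert_self x S)) N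
    have h2 := pr_fkg_abs (N := N) (A := fun a => a x ≠ 0) (B := fun a => ∃ y ∈ S, a y ≠ 0)
      (fun a b hab => ind_mono fun h => up_ne hab h)
      (fun a b hab => ind_mono fun ⟨y, hy, h⟩ => ⟨y, hy, up_ne hab h⟩)
    simp only [absf, ne_eq, Int.natAbs_eq_zero] at h2
    have h3 : pr (HN N) (fun f => ∃ y ∈ insert x S, f y ≠ 0) =
        pr (HN N) (fun f => f x ≠ 0) + pr (HN N) (fun f => ∃ y ∈ S, f y ≠ 0) -
          pr (HN N) fun f => ¬ f x = 0 ∧ ∃ y ∈ S, ¬ f y = 0 := by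
      simp only [pr_def, ← ex_add, ← ex_sub]
      refine ex_congr fun f _ => ?_
      simp only [Finset.mem_insert, exists_eq_or_imp, ind]
      by_cases hA : f x = 0 <;> by_cases hB : ∃ y ∈ S, ¬ f y = 0 <;> simp [hA, hB]
    rw [Finset.card_insert_of_notMem hxS, pow_succ, h3]
    have h4 : 0 ≤ pr (HN N) fun f => ∃ y ∈ S, f y ≠ 0 := pr_nonneg _
    have h5 : (c : ℝ) ^ S.card * c ≤ (1 - pr (HN N) fun f => ∃ y ∈ S, f y ≠ 0) *
        (1 - pr (HN N) fun f => f x ≠ 0) :=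
      mul_le_mul ih (by linarith) hc.le (by linarith [pow_nonneg hc.le S.card])
    simp only [ne_eq] at *
    nlinarith

/-- Lower bound, uniform in the position, for the probability of `h` being nonzero on a ball. -/
lemma ball_prob (r : ℕ) : ∃ κ : ℝ, 0 < κ ∧ ∀ x : V, (x.1 + x.2) % 2 = 0 → ∀ N, r + 1 + nrm x ≤ N →
    κ ≤ pr (HN N) fun f => ∀ y ∈ ball x r, f y ≠ 0 := by
  refine ⟨pr (HN (r + 1)) fun f => ∀ y ∈ ball 0 r, f y ≠ 0, ?_, fun x hx N hN => ?_⟩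
  · refine pr_pos (a := fun v => if nrm v < 2 * (r + 1) then (2 * (r + 1) : ℤ) - nrm v else 0) ?_ ?_
    · rw [HN, mem_Hom]
      refine ⟨fun v hv => ?_, fun v hv => ?_, fun u hu v huv => ?_⟩
      · rw [mem_bl] at hv
        simp [hv]
      · rw [mem_bl] at hv
        unfold nrm at *
        beta_reduce
        rw [if_pos hv]
        omega
      · rw [mem_bl] at hu
        rw [gr_adj] at huv
        unfold nrm at *
        simp only
        split_ifs <;> omega
    · intro y hy
      rw [mem_ball] at hy
      simp only [Prod.fst_zero, Prod.snd_zero, sub_zero] at hy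
      unfold nrm
      beta_reduce
      split_ifs <;> omega
  · have h1 := translate_le hx hN (F := fun a => ind (∀ y ∈ ball x r, a y ≠ 0))
      (fun _ => ind_nonneg _) fun a b hab => ind_mono fun h y hy => up_ne hab (h y hy)
    refine le_trans (le_of_eq ?_) (h1.trans (le_of_eq ?_))
    · rw [pr_def]
      refine ex_congr fun f _ => ?_
      congr 1
      refine propext ⟨fun h y hy => ?_, fun h y hy => ?_⟩
      · have := h (y - x) (by
          rw [mem_ball] at *
          simpa using hy)
        simpa [absf] using this
      · have := h (y + x) (by
          rw [mem_ball] at *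
          simpa using hy)
        simpa [absf] using this
    · rw [pr_def]
      exact ex_congr fun f _ => ind_congr (by simp [absf])

/-- The two balls of a gate avoid the zeros independently, up to positive correlation. -/
lemma gate_prob (r : ℕ) : ∃ κ : ℝ, 0 < κ ∧ ∀ d N : ℕ, d % 2 = 0 → r + 1 + d ≤ N →
    κ ≤ pr (HN N) fun f => ∀ y ∈ gate r d, f y ≠ 0 := by
  obtain ⟨κ, hκ, h⟩ := ball_prob r
  refine ⟨κ * κ, mul_pos hκ hκ, fun d N hd hN => ?_⟩
  have h1 := h (-(d : ℤ), 0) (by simp only; omega) N (by simp only [nrm]; omega)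
  have h2 := h ((d : ℤ), 0) (by simp only; omega) N (by simp only [nrm]; omega)
  have mono : ∀ x : V, Monotone fun a : V → ℕ => ind (∀ y ∈ ball x r, a y ≠ 0) :=
    fun x a b hab => ind_mono fun h y hy => up_ne hab (h y hy)
  have h3 := pr_fkg_abs (N := N) (mono (-(d : ℤ), 0)) (mono ((d : ℤ), 0))
  simp only [absf, ne_eq, Int.natAbs_eq_zero] at h3
  refine (mul_le_mul h1 h2 hκ.le (pr_nonneg _)).trans (h3.trans (pr_mono fun f _ hf y hy => ?_))
  rcases hy with hy | hy
  · exact hf.1 y hy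
  · exact hf.2 y hy

/-- Connected sets where `h` does not vanish carry a constant sign. -/
lemma sign_const {N : ℕ} {h : V → ℤ} (hh : h ∈ HN N) {T : Set V} (hT : ∀ x ∈ T, h x ≠ 0) {x y : V}
    (hc : Conn T x y) : 0 < h x ↔ 0 < h y := by
  induction hc with
  | nil => exact Iff.rfl
  | cons a b c ha hab hbc ih =>
    rw [← ih]
    have h1 := hT a ha
    have h2 := hT b hbc.left
    have := HN_lip hh hab
    omega

lemma HN_neg {N : ℕ} {f : V → ℤ} (hf : f ∈ HN N) : -f ∈ HN N := by
  have := Hom_neg hf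
  rwa [neg_zero] at this

lemma ex_HN_neg {N : ℕ} (F : (V → ℤ) → ℝ) : ex (HN N) F = ex (HN N) fun f => F (-f) := by
  have := ex_Hom_neg (Λ := bl (2 * N)) (ξ := 0) F
  rwa [neg_zero] at this

end Prep

/-! ### Arms of nonzero vertices -/

section Arms
open Classical

/-- The probability that the origin is joined to the complement of `bl j` by nonzero vertices. -/
def pA (j N : ℕ) : ℝ := pr (HN N) fun h => Expl (bl j) (· ≠ 0) h 0

lemma expl_abs {K : Finset V} {h : V → ℤ} {v : V} :
    Expl K (· ≠ 0) (absf h) v ↔ Expl K (· ≠ 0) h v :=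
  ⟨fun hv => Expl_mono subset_rfl (fun v hv => by simpa [absf] using hv) hv,
    fun hv => Expl_mono subset_rfl (fun v hv => by simpa [absf] using hv) hv⟩

lemma expl_up (K : Finset V) (v : V) : Monotone fun a : V → ℕ => ind (Expl K (· ≠ 0) a v) :=
  fun _ _ hab => ind_mono fun h => Expl_mono (p := (· ≠ 0)) (p' := (· ≠ 0)) subset_rfl (fun _ hv => up_ne hab hv) h

lemma pA_abs (j N : ℕ) :
    pA j N = ex (HN N) fun h => ind (Expl (bl j) (· ≠ 0) (absf h) 0) := by
  rw [pA, pr_def]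
  exact ex_congr fun h _ => ind_congr expl_abs.symm

lemma pA_mono (j : ℕ) : Monotone (pA j) := fun N N' h => by
  rw [pA_abs, pA_abs]
  exact HN_mono h (fun _ => ind_nonneg _) (expl_up _ _)

lemma pA_bdd (j : ℕ) : BddAbove (Set.range (pA j)) :=
  ⟨1, by rintro _ ⟨N, rfl⟩; exact pr_le_one _⟩

/-- If connections of the origin to large distances have probability bounded below, large balls
are connected far away with probability close to one. On the event `O` that the ball is not
connected to distance `M`, `|h|` dominates near the origin its law in a smaller domain, so the
origin is connected to distance `j` but not to distance `M` with at least the probability of `O`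
times `pA j k`. This is at most the difference of two values of `pA` at different distances, small
once both are close to the limit. -/
lemma arms_likely {ε : ℝ} (hε : 0 < ε) (hA : ∀ j, ∃ N, ε < pA j N) :
    ∀ ε' : ℝ, 0 < ε' → ∃ n : ℕ, ∀ M, n < M → 1 - ε' ≤ ulim fun N => pr (HN N) fun b =>
      supp b ∈ Arm (ball 0 n) (Q M) 0 {b | b.1.natAbs = M ∨ b.2.natAbs = M} := by
  intro ε' hε'
  set a : ℝ := ⨅ j, ⨆ N, pA j N
  have hb : BddBelow (Set.range fun j => ⨆ N, pA j N) :=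
    ⟨0, by rintro _ ⟨j, rfl⟩; exact Real.iSup_nonneg fun N => pr_nonneg _⟩
  set τ := ε * ε' / 2 with hτ
  have hτ0 : 0 < τ := by positivity
  obtain ⟨j, hj⟩ := exists_lt_of_ciInf_lt (show a < a + τ by linarith)
  obtain ⟨k, hk⟩ := hA j
  refine ⟨max (2 * k) j, fun M hM => ?_⟩
  obtain ⟨N₁, hN₁⟩ := exists_lt_of_lt_ciSup
    (show a - τ < ⨆ N, pA (2 * M + 1) N by linarith [ciInf_le hb (2 * M + 1)])
  refine ulim_ge (a := 0) (b := 1) (fun _ => pr_nonneg _) (fun _ => pr_le_one _)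
    (N₀ := max N₁ k) fun N hN => ?_
  set n := max (2 * k) j with hn
  set O : (V → ℕ) → Prop := fun η =>
    {v | η v ≠ 0} ∉ Arm (ball 0 n) (Q M) 0 {b | b.1.natAbs = M ∨ b.2.natAbs = M}
  have h1 := abs_mix (Λ := bl (2 * N)) (Λ' := bl (2 * k)) (bl_mono (by omega))
    (F := fun a => ind (Expl (bl j) (· ≠ 0) a 0)) (fun _ => ind_nonneg _) (expl_up _ _) (B := O)
    (fun η η' hη hO hO' => hO (by
      have : {v | η' v ≠ 0} ∪ ball 0 n ⊆ {v | η v ≠ 0} ∪ ball 0 n := by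
        rintro v (hv | hv)
        · by_cases hb : v ∈ bl (2 * k)
          · right
            rw [mem_bl, nrm] at hb
            rw [mem_ball]
            simp only [Prod.fst_zero, Prod.snd_zero, sub_zero]
            omega
          · left
            rw [Set.mem_ofPred_eq, hη v hb]
            exact hv
        · exact .inr hv
      obtain ⟨b, hb, hc⟩ := hO'
      exact ⟨b, hb, hc.mono (Set.inter_subset_inter_left _ this)⟩))
  have h2 : (ex (HN N) fun h => ind (O (absf h)) * ind (Expl (bl j) (· ≠ 0) (absf h) 0)) ≤
      pA j N - pA (2 * M + 1) N := by
    rw [pA_abs, pA_abs, ← ex_sub]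
    refine ex_mono fun h _ => ?_
    by_cases hE : Expl (bl (2 * M + 1)) (· ≠ 0) (absf h) 0
    · have hO : ¬ O (absf h) := fun hO => by
        obtain ⟨b, hb, hc⟩ := expl_conn (M := M) (fun v hv => by
          rw [mem_Q] at hv
          rw [Finset.mem_coe, mem_bl, nrm]
          omega) hE (by simp [mem_Q])
        exact hO ⟨b, hb, hc.mono (Set.inter_subset_inter_left _ Set.subset_union_left)⟩
      have hE' : Expl (bl j) (· ≠ 0) (absf h) 0 :=
        Expl_mono (bl_mono (by omega)) (fun _ h => h) hE
      rw [ind_false hO, ind_true hE, ind_true hE']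
      simp
    · rw [ind_false hE, sub_zero]
      exact mul_le_of_le_one_left (ind_nonneg _) (ind_le_one _)
  have h3 : pA j k = ex (Hom (bl (2 * k)) 0) fun h => ind (Expl (bl j) (· ≠ 0) (absf h) 0) := pA_abs j k
  rw [← h3] at h1
  have h4 : pA j N ≤ a + τ := (le_ciSup (pA_bdd j) N).trans hj.le
  have h5 : a - τ ≤ pA (2 * M + 1) N := hN₁.le.trans (pA_mono _ (by omega))
  have h6 : pr (HN N) (fun h => O (absf h)) * pA j k ≤ ε * ε' := by
    have : ε * ε' = τ + τ := by rw [hτ]; ring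
    have h1' : pr (HN N) (fun h => O (absf h)) * pA j k ≤ pA j N - pA (2 * M + 1) N := h1.trans h2
    linarith
  have h7 : 0 ≤ pr (HN N) (fun h => O (absf h)) := pr_nonneg _
  have h8 : pr (HN N) (fun h => O (absf h)) ≤ ε' := by
    by_contra! hcon
    nlinarith
  have h9 := pr_not (HN_nonempty N) (fun b => supp b ∈ Arm (ball 0 n) (Q M) 0
    {b | b.1.natAbs = M ∨ b.2.natAbs = M})
  have h10 : pr (HN N) (fun h => O (absf h)) = pr (HN N) fun b => ¬ supp b ∈ Arm (ball 0 n) (Q M) 0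
      {b | b.1.natAbs = M ∨ b.2.natAbs = M} := by
    refine pr_congr fun f _ => ?_
    simp only [O, supp_eq]
  linarith

end Arms

/-! ### Reflection and the second moment -/

section Flip
open Classical

/-- The reflection `(x, y) ↦ (1 - x, y)`, which exchanges the two parities. -/
def rho : V ≃ V := aff false (-1) 1 (1, 0)

lemma rho_apply (v : V) : rho v = (1 - v.1, v.2) := by
  simp [rho, aff, Prod.ext_iff]; ring

lemma rho_rho (v : V) : rho (rho v) = v := by
  simp [rho_apply]

lemma rho_adj (u v : V) : gr.Adj (rho u) (rho v) ↔ gr.Adj u v := by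
  simp only [gr_adj, rho_apply]; omega

/-- Reflecting by `rho` and shifting the heights by an odd constant. -/
def flip (s : ℤ) (h : V → ℤ) : V → ℤ := fun v => h (rho v) + s

lemma flip_flip (s : ℤ) (h : V → ℤ) : flip (-s) (flip s h) = h := by
  ext v; simp [flip, rho_rho]

lemma Hom_flip {s : ℤ} (hs : s % 2 = 1) {C : Finset V} {ξ h : V → ℤ} (hh : h ∈ Hom C ξ) :
    flip s h ∈ Hom (pull rho C) (flip s ξ) := by
  rw [mem_Hom] at *
  obtain ⟨h1, h2, h3⟩ := hh
  refine ⟨fun v hv => ?_, fun v hv => ?_, fun u hu v huv => ?_⟩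
  · rw [mem_pull] at hv
    simp only [flip, h1 _ hv]
  · have := h2 _ (mem_pull.1 hv)
    rw [rho_apply] at this
    simp only [flip, rho_apply]
    omega
  · have := h3 _ (mem_pull.1 hu) _ ((rho_adj _ _).2 huv)
    simp only [flip]
    omega

lemma pull_pull_rho (C : Finset V) : pull rho (pull rho C) = C := by
  ext v; rw [mem_pull, mem_pull, rho_rho]

lemma ex_flip {s : ℤ} (hs : s % 2 = 1) (C : Finset V) (ξ : V → ℤ) (F : (V → ℤ) → ℝ) :
    ex (Hom (pull rho C) (flip s ξ)) F = ex (Hom C ξ) fun h => F (flip s h) := by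
  refine ex_bij (flip s) (flip (-s)) (fun h hh => Hom_flip hs hh) (fun h hh => ?_)
    (fun h _ => flip_flip s h) (fun h _ => ?_) F
  · have := Hom_flip (s := -s) (by omega) hh
    rwa [pull_pull_rho, flip_flip] at this
  · have := flip_flip (-s) h
    rwa [neg_neg] at this

end Flip

section StageOne
open Classical

/-- `h(0)² + h(1,0)²` in terms of `|h|`. -/
def Phi (a : V → ℕ) : ℝ := (a 0 : ℝ) ^ 2 + (a (1, 0) : ℝ) ^ 2

lemma Phi_nonneg (a : V → ℕ) : 0 ≤ Phi a := by unfold Phi; positivity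

lemma Phi_mono : Monotone Phi := fun a b hab => by
  unfold Phi
  have h1 : (a 0 : ℝ) ≤ b 0 := Nat.cast_le.2 (hab 0)
  have h2 : (a (1, 0) : ℝ) ≤ b (1, 0) := Nat.cast_le.2 (hab (1, 0))
  gcongr

lemma absf_sq (h : V → ℤ) (v : V) : ((absf h v : ℕ) : ℝ) ^ 2 = (h v : ℝ) ^ 2 := by
  have : ((absf h v : ℕ) : ℝ) = |(h v : ℝ)| := by
    rw [absf, Nat.cast_natAbs, Int.cast_abs]
  rw [this, sq_abs]

/-- The expectation of `h(0)² + h(1,0)²`. -/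
def PhiN (N : ℕ) : ℝ := ex (HN N) fun h => Phi (absf h)

lemma PhiN_mono : Monotone PhiN := fun _ _ h => HN_mono h Phi_nonneg Phi_mono

/-- The variance is bounded by `var_bound` at the origin, hence at its neighbour. -/
lemma PhiN_bdd {c : ℝ} (hc : 0 < c) (h : ∀ N, c ≤ p0 N) : BddAbove (Set.range PhiN) := by
  obtain ⟨V₀, hV⟩ := var_bound hc h
  refine ⟨3 * V₀ + 2, ?_⟩
  rintro _ ⟨N, rfl⟩
  have h1 : PhiN N ≤ ex (HN N) fun f => 3 * (f 0 : ℝ) ^ 2 + 2 := by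
    refine ex_mono fun f hf => ?_
    rw [Phi, absf_sq, absf_sq]
    have := HN_lip hf (show gr.Adj 0 (1, 0) by rw [gr_adj]; simp)
    have h2 : ((f 0 - f (1, 0) : ℤ) : ℝ) ^ 2 ≤ 1 := by
      have : (f 0 - f (1, 0)) ^ 2 ≤ 1 := by
        rw [sq_le_one_iff_abs_le_one, abs_le]; omega
      exact_mod_cast this
    push_cast at h2
    nlinarith [sq_nonneg ((f 0 : ℝ) + (f 0 - f (1, 0)))]
  rw [ex_add, ex_mul_left, ex_const (HN_nonempty N)] at h1
  linarith [hV N]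

/-- With boundary heights at least `1`, the second moments near the origin exceed those in a
smaller domain with zero boundary heights by at least `2`: after reflecting by `rho` and lowering
the heights by `1` the boundary values are nonnegative, and so are the cross terms, by
`bc_nonneg`. -/
lemma Phi_flip {C : Finset V} {ξ : V → ℤ} (hn : (Hom C ξ).Nonempty)
    (hξ : ∀ u ∈ C, ∀ v, v ∉ C → gr.Adj u v → 1 ≤ ξ v) {m : ℕ} (hm : bl (2 * m) ⊆ pull rho C)
    (h0 : (0 : V) ∈ C) (h1 : ((1, 0) : V) ∈ C) :
    2 + PhiN m ≤ ex (Hom C ξ) fun h => Phi (absf h) := by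
  have hs : (-1 : ℤ) % 2 = 1 := by norm_num
  have hn' : (Hom (pull rho C) (flip (-1) ξ)).Nonempty := by
    obtain ⟨h, hh⟩ := hn
    exact ⟨_, Hom_flip hs hh⟩
  have hb : ∀ u ∈ pull rho C, ∀ v, v ∉ pull rho C → gr.Adj u v → 0 ≤ flip (-1) ξ v := by
    intro u hu v hv huv
    rw [mem_pull] at hu hv
    have := hξ _ hu _ hv ((rho_adj _ _).2 huv)
    simp only [flip]
    omega
  have r0 : rho 0 = (1, 0) := by rw [rho_apply]; rfl
  have r1 : rho (1, 0) = 0 := by rw [rho_apply]; rfl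
  have a1 := abs_mono hm hn' hb Phi_nonneg Phi_mono
  have a2 := bc_nonneg hn' hb (x := 0) (by rw [mem_pull, r0]; exact h1)
  have a3 := bc_nonneg hn' hb (x := (1, 0)) (by rw [mem_pull, r1]; exact h0)
  rw [ex_flip hs] at a1 a2 a3
  have e : (ex (Hom C ξ) fun h => Phi (absf h)) =
      (ex (Hom C ξ) fun h => Phi (absf (flip (-1) h))) +
        (2 * ((ex (Hom C ξ) fun h => ((flip (-1) h 0 : ℤ) : ℝ)) +
          (ex (Hom C ξ) fun h => ((flip (-1) h (1, 0) : ℤ) : ℝ))) + 2) := by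
    rw [← ex_const hn (2 : ℝ), ← ex_add, ← ex_mul_left, ← ex_add, ← ex_add]
    refine ex_congr fun h _ => ?_
    simp only [Phi, absf_sq, flip, r0, r1]
    rw [ex_const hn]
    push_cast
    ring
  rw [e]
  have a1' : PhiN m ≤ ex (Hom C ξ) fun h => Phi (absf (flip (-1) h)) := a1
  linarith

/-- The gates are positive and no vertex of the ball of radius `m` is joined to the complement of
the domain by nonpositive vertices. -/
def GU (N r d m : ℕ) (h : V → ℤ) : Prop :=
  (∀ y ∈ gate r d, 0 < h y) ∧ ∀ x ∈ ball 0 m, ¬ Expl (bl (2 * N)) (· ≤ 0) h x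

/-- Explore the nonpositive vertices from the outside, with the gates revealed in advance. On `GU`
the boundary heights of the unexplored domain are at least `1`, so `Phi_flip` applies. -/
lemma GU_ge {N r d m : ℕ} (hd : r + 2 * m + 2 < d) :
    (2 + PhiN m) * pr (HN N) (GU N r d (2 * m + 2)) ≤
      ex (HN N) fun h => Phi (absf h) * ind (GU N r d (2 * m + 2) h) := by
  have := explore_single (Λ := bl (2 * N)) (ξ := 0) (gate r d) (subset_rfl : bl (2 * N) ⊆ bl (2 * N))
    (· ≤ 0) (fun h => Phi (absf h) * ind (GU N r d (2 * m + 2) h) -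
      (2 + PhiN m) * ind (GU N r d (2 * m + 2) h)) (fun h₀ hh₀ => ?_)
  · rw [ex_sub, ex_mul_left] at this
    rw [pr_def]
    exact sub_nonneg.1 this
  set C := Unr (gate r d) (bl (2 * N)) (· ≤ 0) h₀ with hC
  have hn : (Hom C h₀).Nonempty :=
    ⟨h₀, (Hom_restrict Unr_subset hh₀).2 ⟨hh₀, fun _ _ => rfl⟩⟩
  have hcl : ∀ f ∈ Hom C h₀, ∀ v ∈ Rev (gate r d) (bl (2 * N)) (· ≤ 0) h₀, f v = h₀ v :=
    fun f hf v hv => (mem_Hom.1 hf).1 v (by rw [hC, mem_Unr, not_not]; exact hv)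
  have hGU : ∀ f ∈ Hom C h₀, ind (GU N r d (2 * m + 2) f) = ind (GU N r d (2 * m + 2) h₀) := by
    intro f hf
    refine ind_congr ?_
    have e := Expl_congr (hcl f hf)
    simp only [GU, e]
    refine and_congr_left fun _ => forall₂_congr fun y hy => ?_
    rw [hcl f hf y (.inl hy)]
  have e1 : (ex (Hom C h₀) fun h => Phi (absf h) * ind (GU N r d (2 * m + 2) h) -
      (2 + PhiN m) * ind (GU N r d (2 * m + 2) h)) =
      ((ex (Hom C h₀) fun h => Phi (absf h)) - (2 + PhiN m)) * ind (GU N r d (2 * m + 2) h₀) := by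
    rw [sub_mul, ← ex_mul_right, ← ex_const hn ((2 + PhiN m) * ind (GU N r d (2 * m + 2) h₀)), ← ex_sub]
    refine ex_congr fun f hf => ?_
    rw [hGU f hf]
  rw [e1]
  by_cases hG : GU N r d (2 * m + 2) h₀
  swap
  · rw [ind_false hG, mul_zero]
  refine mul_nonneg (sub_nonneg.2 ?_) (ind_nonneg _)
  have hin : ∀ x, nrm x ≤ 2 * m + 1 → x ∈ C := by
    intro x hx
    rw [hC, mem_Unr]
    rintro (h | h | ⟨u, h, hu⟩)
    · rcases h with h | h <;> rw [mem_ball] at h <;> unfold nrm at hx <;> simp only at h <;> omega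
    · refine hG.2 x ?_ h
      rw [mem_ball]; unfold nrm at hx; simp only [Prod.fst_zero, Prod.snd_zero, sub_zero]; omega
    · refine hG.2 u ?_ h
      rw [gr_adj] at hu
      rw [mem_ball]; unfold nrm at hx; simp only [Prod.fst_zero, Prod.snd_zero, sub_zero]; omega
  refine Phi_flip hn (fun u hu v hv huv => ?_) (fun v hv => ?_) (hin 0 (by simp [nrm]))
    (hin (1, 0) (by simp [nrm]))
  · rcases Unr_boundary hu hv huv with h | h
    · exact hG.1 v h
    · have := h.1
      omega
  · rw [mem_pull]
    rw [mem_bl] at hv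
    refine hin _ ?_
    rw [rho_apply]
    unfold nrm at *
    simp only
    omega

lemma Conn_step {A : Set V} {a b : V} (h : Conn A a b) (hab : a ≠ b) : ∃ c ∈ A, gr.Adj a c := by
  cases h with
  | nil => exact absurd rfl hab
  | cons _ c _ _ hac hc => exact ⟨c, hc.left, hac⟩

/-- The enclosing set carries a constant sign; when it is positive it blocks the exploration of
the nonpositive vertices. -/
lemma enc_GU {N r d W m : ℕ} (hN : W + 1 ≤ N) (hd : r + m < d) (hm : m % 2 = 0) {h : V → ℤ}
    (hh : h ∈ HN N) (hE : supp h ∈ Enc {v | nrm v ≤ m ∧ (v.1 + v.2) % 2 = 0} r d W)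
    (hG : ∀ y ∈ gate r d, h y ≠ 0) : GU N r d m h ∨ GU N r d m (-h) := by
  obtain ⟨T, hT1, hT2, hT3, hT4, hT5⟩ := hE
  have hy : ((d : ℤ), (0 : ℤ)) ∈ gate r d := .inr (by rw [mem_ball]; simp)
  have hT0 : ∀ x ∈ T, h x ≠ 0 := fun x hx => by
    rcases (hT1 hx).1 with h' | h'
    · exact h'
    · exact hG x h'
  have hTb : ∀ x ∈ T, x ∉ ball 0 m := by
    intro x hx hxb
    have h1 := hT3 x hx
    rw [mem_ball] at hxb
    simp only [Prod.fst_zero, Prod.snd_zero, sub_zero] at hxb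
    obtain ⟨c, hc, hxc⟩ := Conn_step (hT4 x hx _ (hT2 hy)) (by
      rintro rfl
      simp only at hxb
      omega)
    have h2 := hT3 c hc
    rw [gr_adj] at hxc
    simp only [Set.mem_ofPred_eq, nrm] at h1 h2
    omega
  have hQ : Q W ⊆ (bl (2 * N) : Set V) := fun v hv => by
    rw [mem_Q] at hv
    rw [Finset.mem_coe, mem_bl, nrm]
    omega
  have key : ∀ f : V → ℤ, (∀ x ∈ T, 0 < f x) → GU N r d m f := by
    intro f hf
    refine ⟨fun y hy => hf y (hT2 hy), fun x hx hxE => ?_⟩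
    obtain ⟨w, hw, hc⟩ := expl_escape (T := T) (W := W) (fun x hx => by have := hf x hx; omega)
      (fun x hx => hQ (hT1 hx).2) hQ hxE
    exact hT5 w hw (((ball_conn hx).symm.mono fun v hv hv' => hTb v hv' hv).trans hc)
  by_cases hp : 0 < h (d, 0)
  · exact .inl (key h fun x hx => (sign_const hh hT0 (hT4 _ (hT2 hy) x hx)).1 hp)
  · refine .inr (key (-h) fun x hx => ?_)
    have h1 : ¬ 0 < h x := fun h' => hp ((sign_const hh hT0 (hT4 _ (hT2 hy) x hx)).2 h')
    have h2 := hT0 x hx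
    simp only [Pi.neg_apply]
    omega

end StageOne

/-! ### Stage one: enclosure of the origin -/

section StageOne
open Classical

lemma ball_gate_disj {r d l : ℕ} (hd : r + 2 * l ≤ d) {v : V} (hv : v ∈ gate r d) : v ∉ bl (2 * l) := by
  rw [mem_bl, nrm]
  rcases hv with h | h <;> rw [mem_ball] at h <;> simp only at h <;> omega

/-- An upper bound for the second moments near the origin given that a far away set avoids the zeros. -/
lemma Phi_mix {l N : ℕ} {X : Set V} (hlN : l ≤ N) (hX : ∀ v ∈ X, v ∉ bl (2 * l)) :
    (ex (HN N) fun h => Phi (absf h) * ind (∀ y ∈ X, h y ≠ 0)) ≤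
      PhiN l * pr (HN N) (fun h => ∀ y ∈ X, h y ≠ 0) + (PhiN N - PhiN l) := by
  have h1 := abs_mix (Λ := bl (2 * N)) (Λ' := bl (2 * l)) (bl_mono (by omega)) Phi_nonneg Phi_mono
    (B := fun a => ¬ ∀ y ∈ X, a y ≠ 0) (fun a b hab h h' => h fun y hy => by
      rw [hab y (hX y hy)]; exact h' y hy)
  have h2 : (ex (HN N) fun h => Phi (absf h) * ind (∀ y ∈ X, h y ≠ 0)) =
      PhiN N - ex (HN N) fun h => ind (¬ ∀ y ∈ X, absf h y ≠ 0) * Phi (absf h) := by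
    rw [PhiN, ← ex_sub]
    refine ex_congr fun h _ => ?_
    have : ind (∀ y ∈ X, h y ≠ 0) = ind (∀ y ∈ X, absf h y ≠ 0) :=
      ind_congr (by simp [absf])
    rw [ind_not, this]
    ring
  have h3 := pr_not (HN_nonempty N) fun h => ∀ y ∈ X, absf h y ≠ 0
  have h4 : pr (HN N) (fun h => ∀ y ∈ X, absf h y ≠ 0) =
      pr (HN N) fun h => ∀ y ∈ X, h y ≠ 0 := pr_congr fun h _ => by simp [absf]
  rw [h4] at h3
  have h1' : pr (HN N) (fun h => ¬ ∀ y ∈ X, absf h y ≠ 0) * PhiN l ≤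
    ex (HN N) fun h => ind (¬ ∀ y ∈ X, absf h y ≠ 0) * Phi (absf h) := h1
  rw [h3] at h1'
  rw [h2]
  linarith

/-- The cluster of nonzero vertices of the origin is tight. Otherwise `arms_likely` and
`enc_likely` provide far gates which enclose the origin with high probability. Given that the
gates avoid the zeros, the second moment `Phi` is then at least about `2 + PhiN m` by `GU_ge`, but
at most the supremum of `PhiN` by `Phi_mix`. -/
lemma stage1_zero {c : ℝ} (hc : 0 < c) (h : ∀ N, c ≤ p0 N) {ε : ℝ} (hε : 0 < ε) :
    ∃ j, ∀ N, pA j N ≤ ε := by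
  by_contra! hA
  have arms := arms_likely hε hA
  have hπ := PM_one hc h
  have hbd := PhiN_bdd hc h
  set Φ : ℝ := ⨆ N, PhiN N with hΦ
  have hle : ∀ N, PhiN N ≤ Φ := le_ciSup hbd
  have hΦ0 : 0 ≤ Φ := (ex_nonneg fun h _ => Phi_nonneg _).trans (hle 0)
  have happ : ∀ δ : ℝ, 0 < δ → ∃ l, Φ - δ < PhiN l := fun δ hδ =>
    exists_lt_of_lt_ciSup (show Φ - δ < ⨆ N, PhiN N by linarith)
  obtain ⟨m, hm⟩ := happ (1 / 4) (by norm_num)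
  choose κ hκ hgate using gate_prob
  choose l hl using fun r => happ (κ r / 4) (by have := hκ r; positivity)
  set S : Set V := {v | nrm v ≤ 2 * m + 2 ∧ (v.1 + v.2) % 2 = 0} with hS
  set S' : Finset V := (bl (2 * m + 3)).filter fun v => (v.1 + v.2) % 2 = 0 with hS'
  have hSS : ∀ v, v ∈ S ↔ v ∈ S' := fun v => by
    rw [hS, hS', Set.mem_ofPred_eq, Finset.mem_filter, mem_bl]; omega
  set η : ℝ := 1 / (8 * (2 + Φ)) with hη
  have hη0 : 0 < η := by positivity
  obtain ⟨r, d, W, hF, hd2, hW, hE⟩ := enc_likely hπ arms (S := S) (s := 2 * m + 2) (fun x hx => hx.1)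
    ⟨by simp [nrm], by simp⟩ (fun x y hxy => by
      simp only [hS, Set.mem_ofPred_eq, nrm] at hxy ⊢; omega)
    (c := c ^ S'.card) (by positivity) (by
      rw [le_sub_comm]
      refine ulim_le (a := 0) (b := 1) (N₀ := 0) (fun _ => pr_nonneg _) (fun _ => pr_le_one _)
        fun N _ => ?_
      have := zeros_prob hc h S' (fun x hx => (Finset.mem_filter.1 hx).2) N
      have e : pr (HN N) (fun b => supp b ∈ {ω : Set V | ∃ x ∈ S, x ∈ ω}) =
          pr (HN N) fun f => ∃ x ∈ S', f x ≠ 0 := pr_congr fun f _ => by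
        simp only [hSS, supp, Set.mem_ofPred_eq]
      linarith) hη0 (fun r => 2 * l r + r + 2 * m + 4)
  obtain ⟨N, hN, hEN⟩ := ulim_frequently (a := 0) (b := 1) (x := 1 - 2 * η) (fun _ => pr_nonneg _)
    (fun _ => pr_le_one _) (show _ < _ by linarith) (W + 1 + r + 1 + d + l r)
  have hg := hgate r d N hd2 (by omega)
  have hlr := hl r
  set P := pr (HN N) fun f => ∀ y ∈ gate r d, f y ≠ 0 with hP
  have hP1 : P ≤ 1 := pr_le_one _
  set q := pr (HN N) (GU N r d (2 * m + 2)) with hq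
  have h1 := Phi_mix (l := l r) (N := N) (X := gate r d) (by omega) fun v hv => ball_gate_disj (by omega) hv
  have h2 := GU_ge (N := N) (r := r) (d := d) (m := m) (by omega)
  have hneg : pr (HN N) (fun f => GU N r d (2 * m + 2) (-f)) = q := by
    rw [hq, pr_def, pr_def, ex_HN_neg]
    simp only [neg_neg]
  have h3 : (1 - 2 * η) * P ≤ 2 * q := by
    have f1 := pr_fkg_abs (N := N) (ind_abs_mono (Enc_upper S r d W))
      (B := fun a => ∀ y ∈ gate r d, a y ≠ 0) (fun a b hab => ind_mono fun h y hy => up_ne hab (h y hy))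
    simp only [absf, ne_eq, Int.natAbs_eq_zero] at f1
    have f2 : (1 - 2 * η) * P ≤ pr (HN N) (fun b => supp b ∈ Enc S r d W) * P :=
      mul_le_mul_of_nonneg_right hEN.le ((hκ r).le.trans hg)
    refine (f2.trans f1).trans ?_
    have f3 := pr_or_le (H := HN N) (GU N r d (2 * m + 2)) fun f => GU N r d (2 * m + 2) (-f)
    rw [hneg] at f3
    refine (pr_mono fun f hf hf' => ?_).trans (f3.trans (by linarith))
    exact enc_GU (by omega) (by omega) (by omega) hf hf'.1 hf'.2
  have h4 : 2 * (ex (HN N) fun h => Phi (absf h) * ind (GU N r d (2 * m + 2) h)) ≤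
      ex (HN N) fun h => Phi (absf h) * ind (∀ y ∈ gate r d, h y ≠ 0) := by
    have f1 : (ex (HN N) fun h => Phi (absf h) * ind (GU N r d (2 * m + 2) h)) =
        ex (HN N) fun h => Phi (absf h) * ind (GU N r d (2 * m + 2) (-h)) := by
      rw [ex_HN_neg]
      refine ex_congr fun f _ => ?_
      congr 2
      ext v
      simp [absf]
    rw [two_mul]
    nth_rw 2 [f1]
    rw [← ex_add]
    refine ex_mono fun f _ => ?_
    rw [← mul_add]
    refine mul_le_mul_of_nonneg_left ?_ (Phi_nonneg _)
    have hy : ((d : ℤ), (0 : ℤ)) ∈ gate r d := .inr (by rw [mem_ball]; simp)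
    by_cases g1 : GU N r d (2 * m + 2) f
    · have g2 : ¬ GU N r d (2 * m + 2) (-f) := fun g2 => by
        have a1 := g1.1 _ hy
        have a2 := g2.1 _ hy
        simp only [Pi.neg_apply] at a2
        omega
      rw [ind_true g1, ind_false g2, ind_true fun y hy => (g1.1 y hy).ne']
      norm_num
    · rw [ind_false g1, zero_add]
      exact ind_mono fun g2 y hy => by
        have := g2.1 y hy
        simp only [Pi.neg_apply] at this
        omega
  have h5 : (2 + PhiN m) * ((1 - 2 * η) * P) ≤ PhiN (l r) * P + (PhiN N - PhiN (l r)) := by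
    have : 0 ≤ PhiN m := ex_nonneg fun h _ => Phi_nonneg _
    nlinarith [mul_le_mul_of_nonneg_left h3 (show 0 ≤ 2 + PhiN m by linarith)]
  have h6 : (2 + Φ) * η = 1 / 8 := by rw [hη]; field_simp
  have hP0 : 0 < P := (hκ r).trans_le hg
  have h7 : (2 + PhiN m) * (1 - 2 * η) ≥ Φ + 3 / 2 := by
    nlinarith [hle m]
  have h8 : (Φ + 3 / 2) * P ≤ (2 + PhiN m) * (1 - 2 * η) * P := mul_le_mul_of_nonneg_right h7 hP0.le
  have h9 : PhiN (l r) * P ≤ Φ * P := mul_le_mul_of_nonneg_right (hle _) hP0.le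
  have h10 := hle N
  nlinarith

end StageOne

/-! ### Stage one: nonzero clusters are tight -/

section StageOneGeneral
open Classical

lemma pr_exists_le {β ι : Type*} {H : Finset β} (s : Finset ι) (P : ι → β → Prop) :
    pr H (fun b => ∃ i ∈ s, P i b) ≤ ∑ i ∈ s, pr H (P i) := by
  simp only [pr_def]
  rw [← ex_sum]
  refine ex_mono fun b _ => ?_
  by_cases h : ∃ i ∈ s, P i b
  · obtain ⟨i, hi, hb⟩ := h
    calc ind _ ≤ 1 := ind_le_one _
      _ = ind (P i b) := (ind_true hb).symm
      _ ≤ _ := Finset.single_le_sum (f := fun i => ind (P i b)) (fun _ _ => ind_nonneg _) hi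
  · rw [ind_false h]
    exact Finset.sum_nonneg fun _ _ => ind_nonneg _

lemma expl_shift {α : Type*} {K K' : Finset V} {p : α → Prop} {η : V → α} {x v : V}
    (hK : ∀ v, v - x ∈ K' → v ∈ K) (h : Expl K p (fun v => η (v - x)) v) :
    Expl K' p η (v - x) := by
  induction h with
  | out v h => exact .out _ fun h' => h (hK _ h')
  | step u v _ huv hp ih =>
    refine .step _ _ ih ?_ hp
    rw [gr_adj] at *
    simp only [Prod.fst_sub, Prod.snd_sub]
    omega

lemma pr_expl (j N : ℕ) (x : V) : pr (HN N) (fun h => Expl (bl j) (· ≠ 0) h x) =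
    ex (HN N) fun h => ind (Expl (bl j) (· ≠ 0) (absf h) x) :=
  ex_congr fun _ _ => ind_congr expl_abs.symm

/-- If `P(h(0) = 0)` is bounded below, clusters of nonzero vertices are uniformly tight. -/
lemma stage1 {c : ℝ} (hc : 0 < c) (h : ∀ N, c ≤ p0 N) (x : V) {ε : ℝ} (hε : 0 < ε) :
    ∃ j, ∀ N, pr (HN N) (fun h => Expl (bl j) (· ≠ 0) h x) ≤ ε := by
  have even : ∀ x : V, (x.1 + x.2) % 2 = 0 → ∀ ε : ℝ, 0 < ε →
      ∃ j, ∀ N, pr (HN N) (fun h => Expl (bl j) (· ≠ 0) h x) ≤ ε := by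
    intro x hx ε hε
    obtain ⟨j, hj⟩ := stage1_zero hc h hε
    refine ⟨j + nrm x, fun N => ?_⟩
    rw [pr_expl]
    refine (le_translate hx N (fun _ => ind_nonneg _) (expl_up _ _)).trans (le_trans ?_ (hj (N + nrm x)))
    rw [pA_abs]
    refine ex_mono fun f _ => ind_mono fun hf => ?_
    have := expl_shift (η := absf f) (K' := bl j) (fun v hv => by
      rw [mem_bl] at *
      have := nrm_le_sub v x
      omega) hf
    rwa [sub_self] at this
  rcases Int.emod_two_eq_zero_or_one (x.1 + x.2) with hx | hx
  · exact even x hx ε hε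
  set S := (bl (nrm x + 2)).filter fun u => gr.Adj u x with hS
  have hSe : ∀ u ∈ S, (u.1 + u.2) % 2 = 0 := fun u hu => by
    have := (Finset.mem_filter.1 hu).2
    rw [gr_adj] at this
    omega
  have hε' : 0 < ε / (S.card + 1) := by positivity
  have : ∀ u : V, ∃ j, u ∈ S → ∀ N, pr (HN N) (fun h => Expl (bl j) (· ≠ 0) h u) ≤ ε / (S.card + 1) := by
    intro u
    by_cases hu : u ∈ S
    · obtain ⟨j, hj⟩ := even u (hSe u hu) _ hε'
      exact ⟨j, fun _ => hj⟩
    · exact ⟨0, fun h => absurd h hu⟩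
  choose j hj using this
  refine ⟨S.sup j + nrm x + 1, fun N => ?_⟩
  have h1 : pr (HN N) (fun h => Expl (bl (S.sup j + nrm x + 1)) (· ≠ 0) h x) ≤
      pr (HN N) fun h => ∃ u ∈ S, Expl (bl (j u)) (· ≠ 0) h u := by
    refine pr_mono fun f _ hf => ?_
    cases hf with
    | out _ h => exact absurd (mem_bl.2 (by omega)) h
    | step u _ hu hux _ =>
      have huS : u ∈ S := by
        rw [hS, Finset.mem_filter]
        refine ⟨?_, hux⟩
        rw [gr_adj] at hux
        rw [mem_bl]; unfold nrm; omega
      refine ⟨u, huS, Expl_mono (bl_mono ?_) (fun _ h => h) hu⟩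
      have := Finset.le_sup (f := j) huS
      omega
  refine h1.trans ((pr_exists_le S _).trans ?_)
  calc _ ≤ ∑ _u ∈ S, ε / (S.card + 1) := Finset.sum_le_sum fun u hu => hj u hu N
    _ = ε * (S.card / (S.card + 1)) := by rw [Finset.sum_const, nsmul_eq_mul]; ring
    _ ≤ ε * 1 := by
        refine mul_le_mul_of_nonneg_left ?_ hε.le
        rw [div_le_one (by positivity)]
        linarith
    _ = ε := mul_one ε

lemma mom_le {c : ℝ} (hc : 0 < c) (h : ∀ N, c ≤ p0 N) (x : V) :
    ∃ C : ℝ, 0 < C ∧ ∀ N, ex (HN N) (fun f => (f x : ℝ) ^ 2) ≤ C := by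
  obtain ⟨V₀, hV⟩ := var_bound hc h
  have hV0 : 0 ≤ V₀ := (ex_nonneg fun f _ => sq_nonneg _).trans (hV 0)
  refine ⟨2 * V₀ + 2 * (nrm x : ℝ) ^ 2 + 1, by positivity, fun N => ?_⟩
  have h1 : ex (HN N) (fun f => (f x : ℝ) ^ 2) ≤
      ex (HN N) fun f => 2 * (f 0 : ℝ) ^ 2 + 2 * (nrm x : ℝ) ^ 2 := by
    refine ex_mono fun f hf => ?_
    have := HN_growth hf x
    rw [← absf_sq, ← absf_sq]
    have h2 : (absf f x : ℝ) ≤ absf f 0 + nrm x := by exact_mod_cast this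
    have h3 : (0 : ℝ) ≤ absf f x := Nat.cast_nonneg _
    nlinarith [sq_nonneg ((absf f 0 : ℝ) - nrm x)]
  rw [ex_add, ex_mul_left, ex_const (HN_nonempty N)] at h1
  linarith [hV N]

/-- Cauchy-Schwarz, with the bounded second moment. -/
lemma stage1_abs {c : ℝ} (hc : 0 < c) (h : ∀ N, c ≤ p0 N) (x : V) {ε : ℝ} (hε : 0 < ε) :
    ∃ l, ∀ N, ex (HN N) (fun f => |(f x : ℝ)| * ind (Expl (bl l) (· ≠ 0) f x)) ≤ ε := by
  obtain ⟨C, hC, hCx⟩ := mom_le hc h x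
  obtain ⟨l, hl⟩ := stage1 hc h x (ε := ε ^ 2 / C) (by positivity)
  refine ⟨l, fun N => ?_⟩
  have h1 := ex_cs_ind (H := HN N) (fun f => |(f x : ℝ)|) fun f => Expl (bl l) (· ≠ 0) f x
  have h2 : ex (HN N) (fun f => |(f x : ℝ)| ^ 2 * ind (Expl (bl l) (· ≠ 0) f x)) ≤ C := by
    refine le_trans (ex_mono fun f _ => ?_) (hCx N)
    rw [sq_abs]
    exact mul_le_of_le_one_right (sq_nonneg _) (ind_le_one _)
  have h3 := mul_le_mul h2 (hl N) (pr_nonneg _) hC.le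
  rw [mul_div_cancel₀ _ hC.ne'] at h3
  exact abs_le_of_sq_le_sq' (h1.trans h3) hε.le |>.2

end StageOneGeneral

section Signed
open Classical

/-- No vertex of `B` is joined to the complement of `bl R` by nonzero vertices. -/
def Cut (B : Finset V) (R : ℕ) (h : V → ℤ) : Prop := ∀ x ∈ B, ¬ Expl (bl R) (· ≠ 0) h x

/-- The conditional probability of `E` given the cluster of the complement of `bl R`, on the event
`Cut B R`. It is a function of `|h|` only. -/
def cutF (E : (V → ℤ) → Prop) (B : Finset V) (R : ℕ) (a : V → ℕ) : ℝ :=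
  pr (Hom (Unr ∅ (bl R) (· ≠ 0) a) 0) E * ind (∀ x ∈ B, ¬ Expl (bl R) (· ≠ 0) a x)

lemma Rev_abs {K : Finset V} {h : V → ℤ} : Rev ∅ K (· ≠ 0) (absf h) = Rev ∅ K (· ≠ 0) h := by
  ext v; simp only [Rev, Set.mem_ofPred_eq, expl_abs]

lemma Unr_abs {K : Finset V} {h : V → ℤ} : Unr ∅ K (· ≠ 0) (absf h) = Unr ∅ K (· ≠ 0) h := by
  ext v; rw [mem_Unr, mem_Unr, Rev_abs]

lemma cutF_abs (E : (V → ℤ) → Prop) (B : Finset V) (R : ℕ) (h : V → ℤ) :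
    cutF E B R (absf h) = pr (Hom (Unr ∅ (bl R) (· ≠ 0) h) 0) E * ind (Cut B R h) := by
  rw [cutF, Unr_abs]
  congr 2
  simp only [Cut, expl_abs]

lemma cutF_nonneg (E : (V → ℤ) → Prop) (B : Finset V) (R : ℕ) (a : V → ℕ) : 0 ≤ cutF E B R a :=
  mul_nonneg (pr_nonneg _) (ind_nonneg _)

lemma cutF_le_one (E : (V → ℤ) → Prop) (B : Finset V) (R : ℕ) (a : V → ℕ) : cutF E B R a ≤ 1 :=
  mul_le_one₀ (pr_le_one _) (ind_nonneg _) (ind_le_one _)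

lemma expl_loc {α : Type*} {K : Finset V} {p : α → Prop} {a b : V → α} (h : ∀ v ∈ K, a v = b v)
    (v : V) : Expl K p a v ↔ Expl K p b v :=
  ⟨fun hv => Expl_mono_in (fun v hK hp => by rwa [← h v hK]) hv,
    fun hv => Expl_mono_in (fun v hK hp => by rwa [h v hK]) hv⟩

lemma cutF_loc (E : (V → ℤ) → Prop) (B : Finset V) (R : ℕ) {a b : V → ℕ}
    (h : ∀ v ∈ bl R, a v = b v) : cutF E B R a = cutF E B R b := by
  have e := expl_loc (p := (· ≠ 0)) h
  have e2 : Unr ∅ (bl R) (· ≠ 0) a = Unr ∅ (bl R) (· ≠ 0) b := by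
    ext v; simp only [mem_Unr, Rev, Set.mem_ofPred_eq, e]
  rw [cutF, cutF, e2]
  simp only [e]

lemma Hom_zero_nonempty {Λ C : Finset V} {h₀ : V → ℤ} (hC : C ⊆ Λ) (h0 : h₀ ∈ Hom Λ 0)
    (hb : ∀ u ∈ C, ∀ v, v ∉ C → gr.Adj u v → h₀ v = (0 : V → ℤ) v) : (Hom C 0).Nonempty :=
  ⟨_, Hom_override hb ((Hom_restrict hC h0).2 ⟨h0, fun _ _ => rfl⟩)⟩

/-- On `Cut B R`, the unexplored domain is bordered by zeros, so conditionally on the explored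
cluster the height function inside it is uniform with zero boundary values. -/
lemma cut_prob {Λ B : Finset V} {R : ℕ} (hR : bl R ⊆ Λ) {E : (V → ℤ) → Prop}
    (hE : ∀ f g : V → ℤ, (∀ v ∈ B, f v = g v) → E f → E g) :
    pr (Hom Λ 0) (fun h => E h ∧ Cut B R h) = ex (Hom Λ 0) fun h => cutF E B R (absf h) := by
  have key : ∀ s : ℝ, 0 ≤ ex (Hom Λ 0) fun h => s * (ind (E h ∧ Cut B R h) - cutF E B R (absf h)) := by
    intro s
    refine explore_single ∅ hR (· ≠ 0) _ fun h₀ h0 => le_of_eq ?_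
    set C := Unr ∅ (bl R) (· ≠ 0) h₀ with hC
    have hCΛ : C ⊆ Λ := Unr_subset.trans hR
    have hn : (Hom C h₀).Nonempty := ⟨h₀, (Hom_restrict hCΛ h0).2 ⟨h0, fun _ _ => rfl⟩⟩
    have hcl : ∀ f ∈ Hom C h₀, ∀ v ∈ Rev ∅ (bl R) (· ≠ 0) h₀, f v = h₀ v := fun f hf v hv =>
      (mem_Hom.1 hf).1 v (by rw [hC, mem_Unr, not_not]; exact hv)
    have hb : ∀ u ∈ C, ∀ v, v ∉ C → gr.Adj u v → h₀ v = (0 : V → ℤ) v := fun u hu v hv huv => by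
      rcases Unr_boundary hu hv huv with h | h
      · exact absurd h (Set.notMem_empty v)
      · exact not_not.1 h.1
    have hcut : ∀ f ∈ Hom C h₀, ind (Cut B R f) = ind (Cut B R h₀) := fun f hf => ind_congr (by
      simp only [Cut, Expl_congr (hcl f hf)])
    have hunr : ∀ f ∈ Hom C h₀, Unr ∅ (bl R) (· ≠ 0) f = C := fun f hf => by
      ext v; rw [hC, mem_Unr, mem_Unr, Rev_congr (hcl f hf)]
    have e1 : (ex (Hom C h₀) fun h => s * (ind (E h ∧ Cut B R h) - cutF E B R (absf h))) =
        s * ((pr (Hom C h₀) E - pr (Hom C 0) E) * ind (Cut B R h₀)) := by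
      have : (ex (Hom C h₀) fun h => s * (ind (E h ∧ Cut B R h) - cutF E B R (absf h))) =
          ex (Hom C h₀) fun h => s * (ind (E h) * ind (Cut B R h₀) -
            pr (Hom C 0) E * ind (Cut B R h₀)) := by
        refine ex_congr fun f hf => ?_
        rw [ind_and, cutF_abs, hcut f hf, hunr f hf]
      rw [this, ex_mul_left, ex_sub, ex_mul_right, ex_const hn, sub_mul]
      rfl
    rw [e1]
    by_cases hc : Cut B R h₀
    swap
    · rw [ind_false hc]; ring
    have hz : ∀ v ∈ B, v ∉ C → h₀ v = 0 := by
      intro v hv hvC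
      rw [hC, mem_Unr, not_not] at hvC
      rcases hvC with h | h | ⟨u, hu, huv⟩
      · exact absurd h (Set.notMem_empty v)
      · exact absurd h (hc v hv)
      · by_contra hne
        exact hc v hv (.step u v hu huv hne)
    have e2 : ∀ ξ : V → ℤ, (∀ v ∈ B, v ∉ C → ξ v = 0) → pr (Hom C ξ) E =
        ex (Hom C ξ) fun f => ind (E fun v => if v ∈ C then f v else 0) := by
      intro ξ hξ
      rw [pr_def]
      refine ex_congr fun f hf => ind_congr ?_
      have : ∀ v ∈ B, f v = if v ∈ C then f v else 0 := fun v hv => by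
        by_cases hvC : v ∈ C
        · rw [if_pos hvC]
        · rw [if_neg hvC, (mem_Hom.1 hf).1 v hvC, hξ v hv hvC]
      exact ⟨hE _ _ this, hE _ _ fun v hv => (this v hv).symm⟩
    rw [e2 h₀ hz, e2 0 fun _ _ _ => rfl, ex_override hb]
    · ring
    · intro f g hfg
      refine congrArg (fun F => ind (E F)) ?_
      ext v
      by_cases hv : v ∈ C <;> simp [hv, hfg]
  have k1 := key 1
  have k2 := key (-1)
  rw [ex_mul_left, ex_sub] at k1 k2
  rw [pr_def]
  linarith

/-- Asymptotic invariance of the signed height function under symmetries of the lattice, uniformly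
over the events determined by a fixed window. -/
lemma inv_signed {c : ℝ} (hc : 0 < c) (h : ∀ N, c ≤ p0 N) {φ : V ≃ V} (hφ : Sym φ) (B : Finset V)
    {ε : ℝ} (hε : 0 < ε) :
    ∃ N₀, ∀ N ≥ N₀, ∀ E : (V → ℤ) → Prop, (∀ f g : V → ℤ, (∀ v ∈ B, f v = g v) → E f → E g) →
      |pr (HN N) (fun f => E (f ∘ φ)) - pr (HN N) E| ≤ ε := by
  set δ := ε / 4 / (B.card + 1) with hδ
  have hδ0 : 0 < δ := by positivity
  choose j hj using fun x => stage1 hc h x hδ0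
  set R := B.sup j with hR
  obtain ⟨K, hK⟩ := hφ.dist
  obtain ⟨N₀, hN₀⟩ := inv_abs hc h hφ (bl R) (show 0 < ε / 4 by positivity)
  refine ⟨N₀ + K + R, fun N hN E hE => ?_⟩
  have s1 : bl R ⊆ bl (2 * N) := bl_mono (by omega)
  have s2 : bl R ⊆ pull φ (bl (2 * N)) := by
    obtain ⟨m, rfl⟩ : ∃ m, N = m + K := ⟨N - K, by omega⟩
    exact (bl_mono (by omega)).trans (pull_sub hK m).1
  have c1 := cut_prob s1 hE
  have c2 := cut_prob s2 hE
  have i1 := hN₀ N (by omega) (cutF E B R) (cutF_nonneg E B R) (cutF_le_one E B R)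
    fun a b hab => cutF_loc E B R hab
  rw [← c2] at i1
  have c1' : (ex (HN N) fun h => cutF E B R (absf h)) = pr (HN N) fun h => E h ∧ Cut B R h := c1.symm
  rw [c1'] at i1
  have z1 : pr (HN N) (fun h => ¬ Cut B R h) ≤ ε / 4 := by
    have : pr (HN N) (fun h => ¬ Cut B R h) ≤ pr (HN N) fun h => ∃ x ∈ B, Expl (bl (j x)) (· ≠ 0) h x := by
      refine pr_mono fun f _ hf => ?_
      simp only [Cut] at hf
      push Not at hf
      obtain ⟨x, hx, hf⟩ := hf
      exact ⟨x, hx, Expl_mono (bl_mono (Finset.le_sup (f := j) hx)) (fun _ h => h) hf⟩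
    refine this.trans ((pr_exists_le B _).trans ?_)
    calc _ ≤ ∑ _u ∈ B, δ := Finset.sum_le_sum fun u _ => hj u N
      _ = ε / 4 * (B.card / (B.card + 1)) := by rw [Finset.sum_const, nsmul_eq_mul]; ring
      _ ≤ ε / 4 * 1 := by
          refine mul_le_mul_of_nonneg_left ?_ (by positivity)
          rw [div_le_one (by positivity)]
          linarith
      _ = ε / 4 := mul_one _
  have z2 : pr (Hom (pull φ (bl (2 * N))) 0) (fun h => ¬ Cut B R h) ≤ ε / 4 + ε / 4 := by
    have i2 := hN₀ N (by omega) (fun a => ind (¬ ∀ x ∈ B, ¬ Expl (bl R) (· ≠ 0) a x))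
      (fun _ => ind_nonneg _) (fun _ => ind_le_one _)
      fun a b hab => by simp only [expl_loc (p := (· ≠ 0)) hab]
    simp only [expl_abs] at i2
    have i3 := (abs_le.1 i2).2
    have : (ex (HN N) fun h => ind (¬ ∀ x ∈ B, ¬ Expl (bl R) (· ≠ 0) h x)) ≤ ε / 4 := z1
    have e : pr (Hom (pull φ (bl (2 * N))) 0) (fun h => ¬ Cut B R h) =
      (ex (Hom (pull φ (bl (2 * N))) 0) fun h => ind (¬ ∀ x ∈ B, ¬ Expl (bl R) (· ≠ 0) h x)) := rfl
    linarith
  have t1 := pr_split (H := HN N) E (Cut B R)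
  have t2 := pr_split (H := Hom (pull φ (bl (2 * N))) 0) E (Cut B R)
  have u1 : pr (HN N) (fun h => E h ∧ ¬ Cut B R h) ≤ pr (HN N) (fun h => ¬ Cut B R h) :=
    pr_mono fun _ _ h => h.2
  have u2 : pr (Hom (pull φ (bl (2 * N))) 0) (fun h => E h ∧ ¬ Cut B R h) ≤
    pr (Hom (pull φ (bl (2 * N))) 0) (fun h => ¬ Cut B R h) := pr_mono fun _ _ h => h.2
  have v1 : 0 ≤ pr (HN N) (fun h => E h ∧ ¬ Cut B R h) := pr_nonneg _
  have v2 : 0 ≤ pr (Hom (pull φ (bl (2 * N))) 0) (fun h => E h ∧ ¬ Cut B R h) := pr_nonneg _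
  have e : pr (HN N) (fun f => E (f ∘ φ)) = pr (Hom (pull φ (bl (2 * N))) 0) E :=
    (ex_pull hφ (bl (2 * N)) fun f => ind (E f)).symm
  rw [e]
  rw [abs_le] at i1 ⊢
  constructor <;> linarith [i1.1, i1.2]

/-- Although `rho` exchanges the two parities, conjugation by `rho` keeps them. -/
lemma rho_conj {φ : V ≃ V} (hφ : Sym φ) : Sym ((rho.trans φ).trans rho) := by
  obtain ⟨K, hK⟩ := hφ.dist
  have hr : ∀ v : V, nrm (rho v) ≤ nrm v + 1 := fun v => by
    rw [rho_apply]; unfold nrm; simp only; omega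
  refine ⟨fun u v => ?_, fun v => ?_, K + 2, fun v => ?_⟩
  · simp only [Equiv.trans_apply, rho_adj, hφ.adj]
  · have h1 := hφ.par (rho v)
    rw [Equiv.trans_apply, Equiv.trans_apply, rho_apply (φ (rho v))]
    rw [rho_apply] at *
    simp only at *
    omega
  · rw [Equiv.trans_apply, Equiv.trans_apply]
    have a1 := hr v
    have a2 := hr (φ (rho v))
    have a3 := hr (rho v)
    have a4 := hr (rho (φ (rho v)))
    rw [rho_rho] at a3 a4
    have := hK (rho v)
    omega

/-- The set where the sum of one height function and a reflected shifted copy of another one is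
nonnegative. -/
def ob2 (b : (V → ℤ) × (V → ℤ)) : Set V := {v | 0 ≤ b.1 v + flip (-1) b.2 v}

lemma ob2_mono : Monotone ob2 := fun a b hab v hv => by
  have h1 : a.1 v ≤ b.1 v := hab.1 v
  have h2 : a.2 (rho v) ≤ b.2 (rho v) := hab.2 (rho v)
  simp only [ob2, Set.mem_ofPred_eq, flip] at *
  omega

lemma pair_lattice (N : ℕ) : ∀ a ∈ HN N ×ˢ HN N, ∀ b ∈ HN N ×ˢ HN N,
    a ⊓ b ∈ HN N ×ˢ HN N ∧ a ⊔ b ∈ HN N ×ˢ HN N := fun a ha b hb => by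
  rw [Finset.mem_product] at ha hb
  have h1 := Hom_lattice a.1 ha.1 b.1 hb.1
  have h2 := Hom_lattice a.2 ha.2 b.2 hb.2
  exact ⟨Finset.mem_product.2 ⟨h1.1, h2.1⟩, Finset.mem_product.2 ⟨h1.2, h2.2⟩⟩

/-- Positive association is the FKG inequality on a product lattice. For the invariance,
`inv_signed` is applied to the first copy with `φ` and to the second one with its conjugate by
`rho`. -/
lemma PM_two {c : ℝ} (hc : 0 < c) (h : ∀ N, c ≤ p0 N) :
    PM fun E => ulim fun N => pr (HN N ×ˢ HN N) fun b => ob2 b ∈ E := by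
  refine PM_of (fun N => (HN_nonempty N).product (HN_nonempty N)) ob2 (fun N A B hA hB => ?_)
    fun φ hφ E ⟨B, hB⟩ ε hε => ?_
  · exact pr_fkg (pair_lattice N) (fun a b hab h => hA (ob2_mono hab) h)
      fun a b hab h => hB (ob2_mono hab) h
  set φ' := (rho.trans φ).trans rho with hφ'
  obtain ⟨N₁, h1⟩ := inv_signed hc h hφ B (half_pos hε)
  obtain ⟨N₂, h2⟩ := inv_signed hc h (rho_conj hφ) (B.image rho) (half_pos hε)
  refine ⟨max N₁ N₂, fun N hN => ?_⟩
  have hpre : ∀ b : (V → ℤ) × (V → ℤ), φ ⁻¹' ob2 b = ob2 (b.1 ∘ φ, b.2 ∘ φ') := fun b => by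
    ext v
    simp only [ob2, flip, Set.mem_preimage, Set.mem_ofPred_eq, Function.comp, hφ', Equiv.trans_apply,
      rho_rho]
  simp only [hpre, pr_def]
  rw [ex_prod, ex_prod]
  have b1 : ∀ g : V → ℤ, |(ex (HN N) fun f => ind (ob2 (f ∘ φ, g) ∈ E)) -
      ex (HN N) fun f => ind (ob2 (f, g) ∈ E)| ≤ ε / 2 := fun g =>
    h1 N (le_of_max_le_left hN) (fun f => ob2 (f, g) ∈ E) fun f f' hf => (hB _ _ fun v hv => by
      simp only [ob2, Set.mem_ofPred_eq, hf v hv]).1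
  have b2 : ∀ f : V → ℤ, |(ex (HN N) fun g => ind (ob2 (f, g ∘ φ') ∈ E)) -
      ex (HN N) fun g => ind (ob2 (f, g) ∈ E)| ≤ ε / 2 := fun f =>
    h2 N (le_of_max_le_right hN) (fun g => ob2 (f, g) ∈ E) fun g g' hg => (hB _ _ fun v hv => by
      simp only [ob2, flip, Set.mem_ofPred_eq, hg (rho v) (Finset.mem_image_of_mem _ hv)]).1
  have d1 : |(ex (HN N) fun f => (ex (HN N) fun g => ind (ob2 (f ∘ φ, g ∘ φ') ∈ E)) -
      ex (HN N) fun g => ind (ob2 (f ∘ φ, g) ∈ E))| ≤ ε / 2 := by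
    refine (ex_abs_le _).trans ((ex_mono fun f _ => b2 (f ∘ φ)).trans ?_)
    rw [ex_const (HN_nonempty N)]
  have d2 : |(ex (HN N) fun g => (ex (HN N) fun f => ind (ob2 (f ∘ φ, g) ∈ E)) -
      ex (HN N) fun f => ind (ob2 (f, g) ∈ E))| ≤ ε / 2 := by
    refine (ex_abs_le _).trans ((ex_mono fun g _ => b1 g).trans ?_)
    rw [ex_const (HN_nonempty N)]
  rw [ex_sub] at d1 d2
  rw [ex_comm (HN N) fun g f => ind (ob2 (f ∘ φ, g) ∈ E),
    ex_comm (HN N) fun g f => ind (ob2 (f, g) ∈ E)] at d2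
  rw [abs_le] at *
  constructor <;> linarith [d1.1, d1.2, d2.1, d2.2]

end Signed

/-! ### Stage two: two independent copies -/

section StageTwo
open Classical

/-- Exploration of two independent copies, the second one reflected. -/
lemma explore2 {N : ℕ} {K : Finset V} (Γ : Set V) (hK : K ⊆ bl (2 * N)) (hK' : K ⊆ pull rho (bl (2 * N)))
    (p : ℤ × ℤ → Prop) (F : (V → ℤ) × (V → ℤ) → ℝ)
    (h : ∀ f₀ ∈ HN N, ∀ g₀ ∈ Hom (pull rho (bl (2 * N))) (flip (-1) 0),
      0 ≤ ex (Hom (Unr Γ K p fun v => (f₀ v, g₀ v)) f₀ ×ˢ Hom (Unr Γ K p fun v => (f₀ v, g₀ v)) g₀) F) :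
    0 ≤ ex (HN N ×ˢ HN N) fun b => F (b.1, flip (-1) b.2) := by
  have h1 := explore_pair Γ hK hK' p F h
  rw [ex_prod] at h1 ⊢
  refine h1.trans (le_of_eq (ex_congr fun f _ => ?_))
  exact ex_flip (by norm_num) (bl (2 * N)) 0 fun g => F (f, g)

lemma Hom_refl {C : Finset V} {s : ℤ} (hs : s % 2 = 0) {g₀ g : V → ℤ} (hg : g ∈ Hom C g₀) :
    (fun v => s - g v) ∈ Hom C fun v => s - g₀ v := by
  rw [mem_Hom] at *
  refine ⟨fun v hv => by simp only [hg.1 v hv], fun v hv => ?_, fun u hu v huv => ?_⟩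
  · have := hg.2.1 v hv
    simp only
    omega
  · have := hg.2.2 u hu v huv
    simp only
    omega

lemma ex_refl {C : Finset V} {s : ℤ} (hs : s % 2 = 0) (g₀ : V → ℤ) (F : (V → ℤ) → ℝ) :
    ex (Hom C fun v => s - g₀ v) F = ex (Hom C g₀) fun g => F fun v => s - g v :=
  ex_bij (fun (g : V → ℤ) (v : V) => s - g v) (fun (g : V → ℤ) (v : V) => s - g v) (fun _ hg => Hom_refl hs hg)
    (fun g hg => by
      have : (fun v => s - g v) ∈ Hom C fun v => s - (s - g₀ v) := Hom_refl hs hg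
      simpa only [sub_sub_cancel] using this)
    (fun g _ => by simp) (fun g _ => by simp) F

/-- Compare `f` with the reflected function `s - g` by monotonicity in the boundary values. -/
lemma pair_bd {C : Finset V} {f₀ g₀ : V → ℤ} {s : ℤ} (hs : s % 2 = 0) (hf : f₀ ∈ Hom C f₀)
    (hg : g₀ ∈ Hom C g₀) {x : V} (hx : x ∈ C) :
    ((∀ u ∈ C, ∀ v, v ∉ C → gr.Adj u v → s ≤ f₀ v + g₀ v) →
      (s : ℝ) ≤ ex (Hom C f₀ ×ˢ Hom C g₀) fun b => ((b.1 x : ℝ) + b.2 x)) ∧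
    ((∀ u ∈ C, ∀ v, v ∉ C → gr.Adj u v → f₀ v + g₀ v ≤ s) →
      (ex (Hom C f₀ ×ˢ Hom C g₀) fun b => ((b.1 x : ℝ) + b.2 x)) ≤ s) := by
  have e : (ex (Hom C f₀ ×ˢ Hom C g₀) fun b => ((b.1 x : ℝ) + b.2 x)) =
      (ex (Hom C f₀) fun f => (f x : ℝ)) + ex (Hom C g₀) fun g => (g x : ℝ) := by
    rw [ex_prod]
    have : ∀ f : V → ℤ, (ex (Hom C g₀) fun g => ((f x : ℝ) + g x)) =
        (f x : ℝ) + ex (Hom C g₀) fun g => (g x : ℝ) := fun f => by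
      rw [ex_add, ex_const ⟨_, hg⟩]
    simp only [this]
    rw [ex_add, ex_const ⟨_, hf⟩]
  have r : (ex (Hom C fun v => s - g₀ v) fun g => (g x : ℝ)) = s - ex (Hom C g₀) fun g => (g x : ℝ) := by
    rw [ex_refl hs]
    push_cast
    rw [ex_sub, ex_const ⟨_, hg⟩]
  have hn : (Hom C fun v => s - g₀ v).Nonempty := ⟨_, Hom_refl hs hg⟩
  rw [e]
  constructor
  · intro h
    have := bc_mono hn ⟨_, hf⟩ (fun u hu v hv huv => by have := h u hu v hv huv; omega) hx
    rw [r] at this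
    linarith
  · intro h
    have := bc_mono ⟨_, hf⟩ hn (fun u hu v hv huv => by have := h u hu v hv huv; omega) hx
    rw [r] at this
    linarith

/-- The value at the origin of the sum of a height function and a reflected shifted one. -/
def dd (b : (V → ℤ) × (V → ℤ)) : ℝ := (b.1 0 : ℝ) + flip (-1) b.2 0

lemma dd_eq (b : (V → ℤ) × (V → ℤ)) : dd b = (b.1 0 : ℝ) + b.2 (1, 0) - 1 := by
  have : rho 0 = (1, 0) := by rw [rho_apply]; simp
  rw [dd, flip, this]
  push_cast
  ring

/-- The mean of `dd` is `-1`, also on events determined far away: only nonzero clusters reaching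
far contribute, and these are negligible by `stage1_abs`. -/
lemma D_mix {c : ℝ} (hc : 0 < c) (h : ∀ N, c ≤ p0 N) {ε : ℝ} (hε : 0 < ε) :
    ∃ l, ∀ N ≥ l, ∀ B : (V → ℤ) × (V → ℤ) → Prop,
      (∀ b b' : (V → ℤ) × (V → ℤ), (∀ v ∉ bl l, b.1 v = b'.1 v) → (∀ v ∉ bl l, b.2 v = b'.2 v) →
        B b → B b') →
      |(ex (HN N ×ˢ HN N) fun b => dd b * ind (B b)) + pr (HN N ×ˢ HN N) B| ≤ ε := by
  obtain ⟨l₁, h₁⟩ := stage1_abs hc h 0 (half_pos hε)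
  obtain ⟨l₂, h₂⟩ := stage1_abs hc h (1, 0) (half_pos hε)
  set l := max l₁ l₂ with hl
  have up : ∀ (N l' : ℕ) (x : V), l' ≤ l → (ex (HN N) fun f => |(f x : ℝ)| * ind (Expl (bl l) (· ≠ 0) f x)) ≤
      ex (HN N) fun f => |(f x : ℝ)| * ind (Expl (bl l') (· ≠ 0) f x) := fun N l' x hl' =>
    ex_mono fun f _ => mul_le_mul_of_nonneg_left
      (ind_mono fun hf => Expl_mono (bl_mono hl') (fun _ h => h) hf) (abs_nonneg _)
  refine ⟨l, fun N hN B hB => ?_⟩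
  have hK : bl l ⊆ bl (2 * N) := bl_mono (by omega)
  have e : (ex (HN N ×ˢ HN N) fun b => dd b * ind (B b)) + pr (HN N ×ˢ HN N) B =
      (ex (HN N ×ˢ HN N) fun b => (b.1 0 : ℝ) * ind (B b)) +
        ex (HN N ×ˢ HN N) fun b => (b.2 (1, 0) : ℝ) * ind (B b) := by
    rw [pr_def, ← ex_add, ← ex_add]
    refine ex_congr fun b _ => ?_
    rw [dd_eq]
    ring
  have d1 : |ex (HN N ×ˢ HN N) fun b => (b.1 0 : ℝ) * ind (B b)| ≤ ε / 2 := by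
    rw [ex_prod, ex_comm]
    refine (ex_abs_le _).trans ((ex_mono fun g _ => ?_).trans (le_of_eq (ex_const (HN_nonempty N) (ε / 2))))
    exact (ex_event_le hK 0 (fun f => B (f, g)) fun f f' hf => hB _ _ hf fun _ _ => rfl).trans
      ((up N l₁ 0 (le_max_left _ _)).trans (h₁ N))
  have d2 : |ex (HN N ×ˢ HN N) fun b => (b.2 (1, 0) : ℝ) * ind (B b)| ≤ ε / 2 := by
    rw [ex_prod]
    refine (ex_abs_le _).trans ((ex_mono fun f _ => ?_).trans (le_of_eq (ex_const (HN_nonempty N) (ε / 2))))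
    exact (ex_event_le hK (1, 0) (fun g => B (f, g)) fun f f' hf => hB _ _ (fun _ _ => rfl) hf).trans
      ((up N l₂ (1, 0) (le_max_right _ _)).trans (h₂ N))
  rw [e]
  exact (abs_add_le _ _).trans (by linarith)

/-- The set `Q M` as a finite set. -/
def QF (M : ℕ) : Finset V := (Q_finite M).toFinset

lemma mem_QF {M : ℕ} {v : V} : v ∈ QF M ↔ v.1.natAbs ≤ M ∧ v.2.natAbs ≤ M := by
  rw [QF, Set.Finite.mem_toFinset, mem_Q]

lemma QF_sub {M N : ℕ} (h : M < N) : QF M ⊆ bl (2 * N) := fun v hv => by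
  rw [mem_QF] at hv
  rw [mem_bl, nrm]
  omega

lemma QF_sub' {M N : ℕ} (h : M + 1 < N) : QF M ⊆ pull rho (bl (2 * N)) := fun v hv => by
  rw [mem_QF] at hv
  rw [mem_pull, mem_bl, nrm, rho_apply]
  simp only
  omega

/-- An arm exists exactly when the exploration from outside reveals a vertex of the ball. -/
lemma arm_iff {n M : ℕ} (hn : n < M) (b : (V → ℤ) × (V → ℤ)) :
    ob2 b ∉ Arm (ball 0 n) (Q M) 0 {b | b.1.natAbs = M ∨ b.2.natAbs = M} ↔
      ∀ x ∈ ball 0 n, x ∉ Rev ∅ (QF M) (fun a : ℤ × ℤ => 0 ≤ a.1 + a.2)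
        fun v => (b.1 v, flip (-1) b.2 v) := by
  have hQ : Q M ⊆ (QF M : Set V) := fun v hv => by
    rw [Finset.mem_coe, mem_QF]; exact hv
  constructor
  · intro h x hx hxR
    have hbQ : ∀ y ∈ ball 0 n, y ∈ Q M := fun y hy => by
      rw [mem_ball] at hy
      rw [mem_Q]
      simp only [Prod.fst_zero, Prod.snd_zero, sub_zero] at hy
      omega
    have c0 : Conn ((ob2 b ∪ ball 0 n) ∩ Q M) 0 x :=
      (ball_conn hx).symm.mono fun y hy => ⟨.inr hy, hbQ y hy⟩
    have cm : ∀ {y z}, Conn ({x | 0 ≤ b.1 x + flip (-1) b.2 x} ∩ Q M) y z →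
        Conn ((ob2 b ∪ ball 0 n) ∩ Q M) y z := fun hc => hc.mono fun y hy => ⟨.inl hy.1, hy.2⟩
    rcases hxR with h' | h' | ⟨u, hu, hux⟩
    · exact h'
    · obtain ⟨y, hy, hc⟩ := expl_conn hQ h' (hbQ x hx)
      exact h ⟨y, hy, c0.trans (cm hc)⟩
    · have huQ : u ∈ Q M := by
        have hx' := hx
        rw [mem_ball] at hx'
        simp only [Prod.fst_zero, Prod.snd_zero, sub_zero] at hx'
        rw [gr_adj] at hux
        rw [mem_Q]
        omega
      obtain ⟨y, hy, hc⟩ := expl_conn hQ hu huQ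
      exact h ⟨y, hy, c0.trans (.cons x u y ⟨.inr hx, hbQ x hx⟩ hux.symm (cm hc))⟩
  · rintro h ⟨z, hz, hc⟩
    have key : ∀ a, Conn ((ob2 b ∪ ball 0 n) ∩ Q M) a z →
        Expl (QF M) (fun a : ℤ × ℤ => 0 ≤ a.1 + a.2) (fun v => (b.1 v, flip (-1) b.2 v)) a := by
      intro a ha
      clear hc
      induction ha with
      | nil z hzA =>
        obtain ⟨w, hw, hwz⟩ : ∃ w, w ∉ QF M ∧ gr.Adj w z := by
          simp only [mem_QF, gr_adj]
          rcases hz with hz | hz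
          · rcases le_or_gt 0 z.1 with h0 | h0
            · exact ⟨(z.1 + 1, z.2), by simp only; omega, by simp only; omega⟩
            · exact ⟨(z.1 - 1, z.2), by simp only; omega, by simp only; omega⟩
          · rcases le_or_gt 0 z.2 with h0 | h0
            · exact ⟨(z.1, z.2 + 1), by simp only; omega, by simp only; omega⟩
            · exact ⟨(z.1, z.2 - 1), by simp only; omega, by simp only; omega⟩
        rcases hzA.1 with h' | h'
        · exact .step _ _ (.out w hw) hwz h'
        · exact absurd (.inr (.inr ⟨w, .out w hw, hwz⟩)) (h z h')
      | cons a a' z haA haa _ ih =>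
        rcases haA.1 with h' | h'
        · exact .step _ _ (ih hz) haa.symm h'
        · exact absurd (.inr (.inr ⟨a', ih hz, haa.symm⟩)) (h a h')
    exact h 0 (by rw [mem_ball]; simp) (.inr (.inl (key 0 hc)))

lemma Hom_sum_even {N : ℕ} {f g : V → ℤ} (hf : f ∈ HN N)
    (hg : g ∈ Hom (pull rho (bl (2 * N))) (flip (-1) 0)) {v : V} (h1 : v ∈ bl (2 * N))
    (h2 : v ∈ pull rho (bl (2 * N))) : (f v + g v) % 2 = 0 := by
  have a1 := (mem_Hom.1 hf).2.1 v h1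
  have a2 := (mem_Hom.1 hg).2.1 v h2
  omega

/-- Explore the vertices where the sum of the two functions is nonnegative. If the ball is not
reached, the sum, being even everywhere, is at most `-2` on the boundary of the unexplored domain.
This event `O` thus contributes at most `-2 P(O)` to the mean of `dd`, whereas `D_mix` gives about
`-P(O)`; hence `P(O)` is small. -/
lemma arms2 {c : ℝ} (hc : 0 < c) (h : ∀ N, c ≤ p0 N) {ε : ℝ} (hε : 0 < ε) :
    ∃ n, ∀ M : ℕ, n < M → 1 - ε ≤ ulim fun N => pr (HN N ×ˢ HN N) fun b => ob2 b ∈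
      Arm (ball 0 n) (Q M) 0 {b | b.1.natAbs = M ∨ b.2.natAbs = M} := by
  obtain ⟨l, hl⟩ := D_mix hc h hε
  refine ⟨l + 1, fun M hM => ulim_ge (a := 0) (b := 1) (N₀ := M + 2 + l) (fun _ => pr_nonneg _)
    (fun _ => pr_le_one _) fun N hN => ?_⟩
  set A := Arm (ball 0 (l + 1)) (Q M) 0 {b | b.1.natAbs = M ∨ b.2.natAbs = M} with hA
  set p : ℤ × ℤ → Prop := fun a => 0 ≤ a.1 + a.2 with hp
  have hne : (HN N ×ˢ HN N).Nonempty := (HN_nonempty N).product (HN_nonempty N)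
  have h1 := hl N (by omega) (fun b => ob2 b ∉ A) fun b b' h1 h2 hb => by
    have e : ob2 b ∪ ball 0 (l + 1) = ob2 b' ∪ ball 0 (l + 1) := by
      ext v
      by_cases hv : v ∈ ball 0 (l + 1)
      · simp [hv]
      · have hv' : l + 1 < nrm v := by
          rw [mem_ball] at hv
          simp only [Prod.fst_zero, Prod.snd_zero, sub_zero] at hv
          unfold nrm
          omega
        have e1 := h1 v (by rw [mem_bl]; omega)
        have e2 := h2 (rho v) (by
          rw [mem_bl, rho_apply]; unfold nrm at *; simp only; omega)
        simp only [Set.mem_union, hv, or_false, ob2, flip, Set.mem_ofPred_eq, e1, e2]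
    rw [hA] at hb ⊢
    simpa only [Arm, Set.mem_ofPred_eq, e] using hb
  have s1 : QF M ⊆ bl (2 * N) := QF_sub (by omega)
  have s2 : QF M ⊆ pull rho (bl (2 * N)) := QF_sub' (by omega)
  have h2 := explore2 (N := N) (K := QF M) ∅ s1 s2 p
    (fun b => -(((b.1 0 : ℝ) + b.2 0 + 2) *
      ind (∀ x ∈ ball 0 (l + 1), x ∉ Rev ∅ (QF M) p fun v => (b.1 v, b.2 v)))) fun f₀ hf g₀ hg => by
    set C := Unr ∅ (QF M) p fun v => (f₀ v, g₀ v) with hC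
    have c1 : C ⊆ bl (2 * N) := Unr_subset.trans s1
    have c2 : C ⊆ pull rho (bl (2 * N)) := Unr_subset.trans s2
    have m1 : f₀ ∈ Hom C f₀ := (Hom_restrict c1 hf).2 ⟨hf, fun _ _ => rfl⟩
    have m2 : g₀ ∈ Hom C g₀ := (Hom_restrict c2 hg).2 ⟨hg, fun _ _ => rfl⟩
    have hR : ∀ b ∈ Hom C f₀ ×ˢ Hom C g₀, Rev ∅ (QF M) p (fun v => (b.1 v, b.2 v)) =
        Rev ∅ (QF M) p fun v => (f₀ v, g₀ v) := fun b hb => by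
      rw [Finset.mem_product] at hb
      refine Rev_congr fun v hv => ?_
      have hv' : v ∉ C := by rw [hC, mem_Unr, not_not]; exact hv
      rw [(mem_Hom.1 hb.1).1 v hv', (mem_Hom.1 hb.2).1 v hv']
    by_cases hO : ∀ x ∈ ball 0 (l + 1), x ∉ Rev ∅ (QF M) p fun v => (f₀ v, g₀ v)
    · have h0 : (0 : V) ∈ C := by rw [hC, mem_Unr]; exact hO 0 (by rw [mem_ball]; simp)
      have := (pair_bd (s := -2) (by norm_num) m1 m2 h0).2 fun u hu v hv huv => by
        rcases Unr_boundary hu hv huv with h' | ⟨h', h''⟩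
        · exact absurd h' (Set.notMem_empty v)
        · have hvK : v ∈ QF M := by
            by_contra hvK
            exact h'' (.out v hvK)
          have := Hom_sum_even hf hg (s1 hvK) (s2 hvK)
          simp only [hp] at h'
          omega
      have e : (ex (Hom C f₀ ×ˢ Hom C g₀) fun b => -(((b.1 0 : ℝ) + b.2 0 + 2) *
          ind (∀ x ∈ ball 0 (l + 1), x ∉ Rev ∅ (QF M) p fun v => (b.1 v, b.2 v)))) =
          ex (Hom C f₀ ×ˢ Hom C g₀) fun b => -(((b.1 0 : ℝ) + b.2 0) + 2) := ex_congr fun b hb => by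
        rw [hR b hb, ind_true hO, mul_one]
      rw [e, ex_neg, ex_add, ex_const (Finset.Nonempty.product ⟨_, m1⟩ ⟨_, m2⟩)]
      push_cast at this
      linarith
    · refine ex_nonneg fun b hb => ?_
      rw [hR b hb, ind_false hO]
      simp
  have e : (ex (HN N ×ˢ HN N) fun b => -(((b.1 0 : ℝ) + flip (-1) b.2 0 + 2) *
      ind (∀ x ∈ ball 0 (l + 1), x ∉ Rev ∅ (QF M) p fun v => (b.1 v, flip (-1) b.2 v)))) =
      -((ex (HN N ×ˢ HN N) fun b => dd b * ind (ob2 b ∉ A)) +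
        2 * pr (HN N ×ˢ HN N) fun b => ob2 b ∉ A) := by
    rw [pr_def, ← ex_mul_left, ← ex_add, ← ex_neg]
    refine ex_congr fun b _ => ?_
    rw [← ind_congr (arm_iff hM b), dd]
    ring
  have h2' : 0 ≤ -((ex (HN N ×ˢ HN N) fun b => dd b * ind (ob2 b ∉ A)) +
        2 * pr (HN N ×ˢ HN N) fun b => ob2 b ∉ A) := e ▸ h2
  have h3 := pr_not hne fun b => ob2 b ∈ A
  have h4 := (abs_le.1 h1).1
  linarith

end StageTwo

/-! ### Stage two: the origin is rarely at height zero -/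

section StageTwoEnd
open Classical

lemma ex_prod_mul {β γ : Type*} {H : Finset β} {H' : Finset γ} (F : β → ℝ) (G : γ → ℝ) :
    ex (H ×ˢ H') (fun b => F b.1 * G b.2) = ex H F * ex H' G := by
  rw [ex_prod]
  simp only [ex_mul_left]
  rw [ex_mul_right]

lemma pr_prod_mul {β γ : Type*} {H : Finset β} {H' : Finset γ} (P : β → Prop) (R : γ → Prop) :
    pr (H ×ˢ H') (fun b => P b.1 ∧ R b.2) = pr H P * pr H' R := by
  simp only [pr_def, ind_and]
  exact ex_prod_mul (fun f => ind (P f)) fun g => ind (R g)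

lemma HN_lattice (N : ℕ) : ∀ a ∈ HN N, ∀ b ∈ HN N, a ⊓ b ∈ HN N ∧ a ⊔ b ∈ HN N :=
  fun a ha b hb => Hom_lattice a ha b hb

/-- Two sets which are each of constant sign prefer to have the same sign. -/
lemma same_sign (N : ℕ) (A B : Set V) :
    pr (HN N) (fun f => (∀ y ∈ A, 0 < f y) ∧ ∀ y ∈ B, f y < 0) ≤
      pr (HN N) fun f => (∀ y ∈ A, 0 < f y) ∧ ∀ y ∈ B, 0 < f y := by
  set ps : Set V → (V → ℤ) → Prop := fun A f => ∀ y ∈ A, 0 < f y with hps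
  set ng : Set V → (V → ℤ) → Prop := fun A f => ∀ y ∈ A, f y < 0 with hng
  have hneg : ∀ A f, ps A (-f) ↔ ng A f := fun A f => by
    simp only [hps, hng, Pi.neg_apply]
    exact ⟨fun h y hy => by have := h y hy; omega, fun h y hy => by have := h y hy; omega⟩
  have hneg' : ∀ A f, ng A (-f) ↔ ps A f := fun A f => by rw [← hneg, neg_neg]
  have mps : ∀ A, Monotone (ps A) := fun A f g hfg hf y hy => by
    have h1 : f y ≤ g y := hfg y
    have := hf y hy
    omega
  have mng : ∀ A f g, f ≤ g → ng A g → ng A f := fun A f g hfg hf y hy => by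
    have h1 : f y ≤ g y := hfg y
    have := hf y hy
    omega
  set X : Set V → (V → ℤ) → ℝ := fun A f => ind (ps A f) - ind (ng A f) + 1 with hX
  have hX0 : ∀ A f, 0 ≤ X A f := fun A f => by
    have h1 := ind_nonneg (ps A f)
    have h2 := ind_le_one (ng A f)
    simp only [hX]
    linarith
  have hXm : ∀ A, Monotone (X A) := fun A f g hfg => by
    have h1 := ind_mono (mps A hfg)
    have h2 := ind_mono (mng A f g hfg)
    simp only [hX]
    linarith
  have hX1 : ∀ A, ex (HN N) (X A) = 1 := fun A => by
    simp only [hX]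
    rw [ex_add, ex_sub, ex_const (HN_nonempty N)]
    have : ex (HN N) (fun f => ind (ps A f)) = ex (HN N) fun f => ind (ng A f) := by
      rw [ex_HN_neg]
      simp only [hneg]
    linarith
  have hf := fkg_gen (HN N) (HN_lattice N) (X A) (X B) (hX0 A) (hX0 B) (hXm A) (hXm B)
  have hc : 0 < ((HN N).card : ℝ) := by exact_mod_cast Finset.card_pos.2 (HN_nonempty N)
  have h1 : 1 ≤ ex (HN N) fun f => X A f * X B f := by
    have a1 := hX1 A
    have a2 := hX1 B
    rw [ex, div_eq_one_iff_eq hc.ne'] at a1 a2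
    rw [a1, a2] at hf
    rw [ex, le_div_iff₀ hc, one_mul]
    exact le_of_mul_le_mul_left hf hc
  have h2 : (ex (HN N) fun f => X A f * X B f) = (ex (HN N) fun f =>
      (ind (ps A f ∧ ps B f) + ind (ng A f ∧ ng B f) - (ind (ps A f ∧ ng B f) + ind (ng A f ∧ ps B f))) +
        (X A f + X B f - 1)) := ex_congr fun f _ => by
    simp only [hX, ind_and]
    ring
  rw [h2, ex_add, ex_sub, ex_sub, ex_add, ex_add, ex_add, hX1, hX1, ex_const (HN_nonempty N)] at h1
  have s1 : ex (HN N) (fun f => ind (ng A f ∧ ng B f)) = ex (HN N) fun f => ind (ps A f ∧ ps B f) := by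
    rw [ex_HN_neg]
    simp only [hneg']
  have s2 : ex (HN N) (fun f => ind (ng A f ∧ ps B f)) = ex (HN N) fun f => ind (ps A f ∧ ng B f) := by
    rw [ex_HN_neg]
    simp only [hneg', hneg]
  rw [s1, s2] at h1
  rw [pr_def, pr_def]
  linarith

/-- A ball around `(c, 0)` together with the reflection of the ball around `(-c, 0)`. -/
def half (r : ℕ) (c : ℤ) : Set V := {v | v ∈ ball (c, 0) r ∨ rho v ∈ ball (-c, 0) r}

lemma half_conn {r : ℕ} {c : ℤ} {v : V} (hv : v ∈ half r c) : Conn (half r c) v (c, 0) := by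
  rcases hv with h | h
  · exact (ball_conn h).mono fun _ h => .inl h
  · have h1 := (ball_conn h).map rho (B := half r c) (fun u v h => (rho_adj u v).2 h) fun u hu =>
      .inr (by rwa [rho_rho])
    rw [rho_rho] at h1
    refine h1.snoc ?_ (.inl ?_)
    · rw [gr_adj, rho_apply]; simp only; omega
    · rw [mem_ball]; simp

/-- The union of a gate and its reflection. -/
def XX (r d : ℕ) : Set V := half r (-d) ∪ half r d

lemma mem_XX {r d : ℕ} {v : V} : v ∈ XX r d ↔ v ∈ gate r d ∨ rho v ∈ gate r d := by
  simp only [XX, half, gate, Set.mem_union, Set.mem_ofPred_eq, neg_neg]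
  tauto

lemma rho_XX {r d : ℕ} {v : V} : rho v ∈ XX r d ↔ v ∈ XX r d := by
  rw [mem_XX, mem_XX, rho_rho]; tauto

lemma XX_sub {r d : ℕ} {v : V} (hv : v ∈ XX r d) : v ∈ gate (r + 1) d := by
  rw [mem_XX] at hv
  simp only [gate, Set.mem_union, mem_ball, rho_apply] at *
  omega

/-- On each of the two connected halves the sign is constant, and among the four sign patterns the
positive one is at least as likely as any other by `same_sign`. -/
lemma XX_pos {N r d : ℕ} :
    pr (HN N) (fun f => ∀ y ∈ XX r d, f y ≠ 0) ≤ 4 * pr (HN N) fun f => ∀ y ∈ XX r d, 0 < f y := by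
  set A := half r (-d) with hA
  set B := half r d with hB
  have h1 := same_sign N A B
  have hsg : ∀ f ∈ HN N, ∀ c : ℤ, (∀ y ∈ half r c, f y ≠ 0) → (∀ y ∈ half r c, 0 < f y) ∨
      ∀ y ∈ half r c, f y < 0 := fun f hf c hc => by
    by_cases h0 : 0 < f (c, 0)
    · exact .inl fun y hy => (sign_const hf hc (half_conn hy)).2 h0
    · refine .inr fun y hy => ?_
      have a1 : ¬ 0 < f y := fun h => h0 ((sign_const hf hc (half_conn hy)).1 h)
      have a2 := hc y hy
      omega
  have hU : ∀ p : V → Prop, (∀ y ∈ XX r d, p y) ↔ (∀ y ∈ A, p y) ∧ ∀ y ∈ B, p y := fun p => by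
    simp only [XX, Set.mem_union, hA, hB]
    exact ⟨fun h => ⟨fun y hy => h y (.inl hy), fun y hy => h y (.inr hy)⟩,
      fun h y hy => hy.elim (h.1 y) (h.2 y)⟩
  set P : (V → ℤ) → Prop := fun f => (∀ y ∈ A, 0 < f y) ∧ ∀ y ∈ B, 0 < f y with hP
  set R : (V → ℤ) → Prop := fun f => (∀ y ∈ A, 0 < f y) ∧ ∀ y ∈ B, f y < 0 with hR
  have hneg : ∀ S : (V → ℤ) → Prop, pr (HN N) (fun f => S (-f)) = pr (HN N) S := fun S =>
    (ex_HN_neg fun f => ind (S f)).symm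
  have h2 : pr (HN N) (fun f => ∀ y ∈ XX r d, f y ≠ 0) ≤
      pr (HN N) fun f => (P f ∨ P (-f)) ∨ (R f ∨ R (-f)) := by
    refine pr_mono fun f hf h => ?_
    rw [hU] at h
    have e1 : ∀ (A : Set V), (∀ y ∈ A, f y < 0) → ∀ y ∈ A, 0 < (-f) y := fun A h y hy => by
      have := h y hy; simp only [Pi.neg_apply]; omega
    have e2 : ∀ (A : Set V), (∀ y ∈ A, 0 < f y) → ∀ y ∈ A, (-f) y < 0 := fun A h y hy => by
      have := h y hy; simp only [Pi.neg_apply]; omega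
    rcases hsg f hf _ h.1 with a | a <;> rcases hsg f hf _ h.2 with b | b
    · exact .inl (.inl ⟨a, b⟩)
    · exact .inr (.inl ⟨a, b⟩)
    · exact .inr (.inr ⟨e1 _ a, e2 _ b⟩)
    · exact .inl (.inr ⟨e1 _ a, e1 _ b⟩)
  have h3 := pr_or_le (H := HN N) (fun f => P f ∨ P (-f)) fun f => R f ∨ R (-f)
  have h4 := pr_or_le (H := HN N) P fun f => P (-f)
  have h5 := pr_or_le (H := HN N) R fun f => R (-f)
  rw [hneg] at h4 h5
  simp only [hU]
  change _ ≤ 4 * pr (HN N) P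
  have h1' : pr (HN N) R ≤ pr (HN N) P := h1
  simp only [hU] at h2
  linarith

/-- By the symmetry `h ↦ -h`. -/
lemma le_zero_prob (N : ℕ) (x : V) : 1 / 2 ≤ pr (HN N) fun f => f x ≤ 0 := by
  have h1 := pr_not (HN_nonempty N) fun f => f x ≤ 0
  have h2 : pr (HN N) (fun f => ¬ f x ≤ 0) ≤ pr (HN N) fun f => (-f) x ≤ 0 :=
    pr_mono fun f _ h => by simp only [Pi.neg_apply]; omega
  have h3 : pr (HN N) (fun f => (-f) x ≤ 0) = pr (HN N) fun f => f x ≤ 0 :=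
    (ex_HN_neg fun f => ind (f x ≤ 0)).symm
  linarith

/-- With probability at least `1/4` the first copy is nonpositive at `0` and the second one at
`(1, 0)`; then the sum at the origin is at most `-1`. -/
lemma ob2_zero (N : ℕ) : pr (HN N ×ˢ HN N) (fun b => (0 : V) ∈ ob2 b) ≤ 3 / 4 := by
  have h1 := pr_not ((HN_nonempty N).product (HN_nonempty N)) fun b => (0 : V) ∈ ob2 b
  have h2 : pr (HN N ×ˢ HN N) (fun b => b.1 0 ≤ 0 ∧ b.2 (rho 0) ≤ 0) ≤
      pr (HN N ×ˢ HN N) fun b => ¬ (0 : V) ∈ ob2 b :=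
    pr_mono fun b _ h => by
      simp only [ob2, flip, Set.mem_ofPred_eq]
      omega
  rw [pr_prod_mul (fun f : V → ℤ => f 0 ≤ 0) fun g : V → ℤ => g (rho 0) ≤ 0] at h2
  nlinarith [le_zero_prob N 0, le_zero_prob N (rho 0)]

/-- The gate and its reflection are positive for both functions. -/
def GG (r d : ℕ) (b : (V → ℤ) × (V → ℤ)) : Prop :=
  (∀ y ∈ XX r d, 0 < b.1 y) ∧ ∀ y ∈ XX r d, 0 < b.2 y

lemma GG_iff {r d : ℕ} {b : (V → ℤ) × (V → ℤ)} : GG r d b ↔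
    (∀ y ∈ XX r d, 0 < b.1 y) ∧ ∀ y ∈ XX r d, 0 ≤ flip (-1) b.2 y := by
  refine and_congr Iff.rfl ⟨fun h y hy => ?_, fun h y hy => ?_⟩
  · have := h _ (rho_XX.2 hy)
    simp only [flip]
    omega
  · have := h _ (rho_XX.2 hy)
    simp only [flip, rho_rho] at this
    omega

/-- In addition, the origin is not revealed by exploring the negative vertices from far away. -/
def GV (r d W : ℕ) (b : (V → ℤ) × (V → ℤ)) : Prop :=
  ((∀ y ∈ XX r d, 0 < b.1 y) ∧ ∀ y ∈ XX r d, 0 ≤ b.2 y) ∧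
    (0 : V) ∉ Rev (XX r d) (QF W) (fun a : ℤ × ℤ => a.1 + a.2 < 0) fun v => (b.1 v, b.2 v)

/-- Explore the vertices where the sum is negative, with the gates and their reflections revealed
in advance. On `GV` the sum is nonnegative on the boundary of the unexplored domain, so `pair_bd`
makes the conditional mean nonnegative. -/
lemma GV_ge {N r d W : ℕ} (hN : W + 1 < N) :
    0 ≤ ex (HN N ×ˢ HN N) fun b => dd b * ind (GV r d W (b.1, flip (-1) b.2)) := by
  set p : ℤ × ℤ → Prop := fun a => a.1 + a.2 < 0 with hp
  have s1 : QF W ⊆ bl (2 * N) := QF_sub (by omega)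
  have s2 : QF W ⊆ pull rho (bl (2 * N)) := QF_sub' (by omega)
  refine explore2 (N := N) (K := QF W) (XX r d) s1 s2 p
    (fun b => ((b.1 0 : ℝ) + b.2 0) * ind (GV r d W b)) fun f₀ hf g₀ hg => ?_
  set C := Unr (XX r d) (QF W) p fun v => (f₀ v, g₀ v) with hC
  have c1 : C ⊆ bl (2 * N) := Unr_subset.trans s1
  have c2 : C ⊆ pull rho (bl (2 * N)) := Unr_subset.trans s2
  have m1 : f₀ ∈ Hom C f₀ := (Hom_restrict c1 hf).2 ⟨hf, fun _ _ => rfl⟩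
  have m2 : g₀ ∈ Hom C g₀ := (Hom_restrict c2 hg).2 ⟨hg, fun _ _ => rfl⟩
  have hXC : ∀ y ∈ XX r d, y ∉ C := fun y hy => by
    rw [hC, mem_Unr, not_not]
    exact .inl hy
  have hR : ∀ b ∈ Hom C f₀ ×ˢ Hom C g₀, (GV r d W b ↔ GV r d W (f₀, g₀)) := fun b hb => by
    rw [Finset.mem_product] at hb
    have e1 : ∀ v ∉ C, b.1 v = f₀ v := fun v hv => (mem_Hom.1 hb.1).1 v hv
    have e2 : ∀ v ∉ C, b.2 v = g₀ v := fun v hv => (mem_Hom.1 hb.2).1 v hv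
    have e3 : Rev (XX r d) (QF W) p (fun v => (b.1 v, b.2 v)) =
        Rev (XX r d) (QF W) p fun v => (f₀ v, g₀ v) :=
      Rev_congr fun v hv => by
        have hv' : v ∉ C := by rw [hC, mem_Unr, not_not]; exact hv
        rw [e1 v hv', e2 v hv']
    rw [GV, GV, e3]
    refine and_congr (and_congr ?_ ?_) Iff.rfl
    · exact forall₂_congr fun y hy => by rw [e1 y (hXC y hy)]
    · exact forall₂_congr fun y hy => by rw [e2 y (hXC y hy)]
  by_cases hO : GV r d W (f₀, g₀)
  · have h0 : (0 : V) ∈ C := by rw [hC, mem_Unr]; exact hO.2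
    have := (pair_bd (s := 0) (by norm_num) m1 m2 h0).1 fun u hu v hv huv => by
      rcases Unr_boundary hu hv huv with h' | ⟨h', -⟩
      · have a1 := hO.1.1 v h'
        have a2 := hO.1.2 v h'
        simp only at a1 a2
        omega
      · simp only [hp] at h'
        omega
    refine le_of_le_of_eq (by exact_mod_cast this) (ex_congr fun b hb => ?_)
    rw [ind_true ((hR b hb).2 hO), mul_one, Int.cast_add]
  · refine ex_nonneg fun b hb => ?_
    rw [ind_false fun h => hO ((hR b hb).1 h), mul_zero]

/-- The enclosing set consists of vertices where the sum is nonnegative, so it blocks the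
exploration. -/
lemma enc_GV {r d W : ℕ} (hd : r + 1 < d) {b : (V → ℤ) × (V → ℤ)} (hE : ob2 b ∈ Enc {0} r d W)
    (hG : GG r d b) : GV r d W (b.1, flip (-1) b.2) := by
  obtain ⟨T, hT1, hT2, hT3, hT4, hT5⟩ := hE
  rw [GG_iff] at hG
  refine ⟨hG, ?_⟩
  have hQ : Q W ⊆ (QF W : Set V) := fun v hv => by
    rw [Finset.mem_coe, mem_QF]; exact hv
  have esc : ∀ v, Expl (QF W) (fun a : ℤ × ℤ => a.1 + a.2 < 0) (fun v => (b.1 v, flip (-1) b.2 v)) v →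
      ∃ w, w ∉ Q W ∧ Conn Tᶜ v w := fun v hv => by
    refine expl_escape (T := T) (W := W) (fun x hx => ?_) (fun x hx => hQ (hT1 hx).2) hQ hv
    rcases (hT1 hx).1 with h' | h'
    · simp only [ob2, Set.mem_ofPred_eq] at h'
      simp only
      omega
    · have a1 := hG.1 x (mem_XX.2 (.inl h'))
      have a2 := hG.2 x (mem_XX.2 (.inl h'))
      simp only
      omega
  have h0 : (0 : V) ∈ Tᶜ := fun h => hT3 0 h rfl
  rintro (h | h | ⟨u, hu, hu0⟩)
  · have := XX_sub h
    simp only [gate, Set.mem_union, mem_ball, Prod.fst_zero, Prod.snd_zero] at this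
    omega
  · obtain ⟨w, hw, hc⟩ := esc 0 h
    exact hT5 w hw hc
  · obtain ⟨w, hw, hc⟩ := esc u hu
    exact hT5 w hw (.cons 0 u w h0 hu0.symm hc)

/-- The probabilities of `h 0 = 0` are not bounded away from zero. On the event `GG` that the
gates are positive for both functions, `D_mix` gives mean of `dd` about `-P(GG)`. Given `GG`, by
FKG the event `GV` is likely; there the contribution is nonnegative by `GV_ge`, and the remainder
is small by Cauchy-Schwarz and `Phi_mix`, a contradiction. -/
lemma p0_not_bounded {c : ℝ} (hc : 0 < c) (h : ∀ N, c ≤ p0 N) : False := by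
  have hbd := PhiN_bdd hc h
  set Φ : ℝ := ⨆ N, PhiN N with hΦ
  have hle : ∀ N, PhiN N ≤ Φ := le_ciSup hbd
  have hΦ0 : 0 ≤ Φ := (ex_nonneg fun h _ => Phi_nonneg _).trans (hle 0)
  have happ : ∀ δ : ℝ, 0 < δ → ∃ l, Φ - δ < PhiN l := fun δ hδ =>
    exists_lt_of_lt_ciSup (show Φ - δ < ⨆ N, PhiN N by linarith)
  choose κ hκ hgate using gate_prob
  choose l hl using fun r => happ (κ (r + 1)) (hκ _)
  choose m hm using fun r => D_mix hc h (ε := (κ (r + 1) / 4) ^ 2 / 2) (by have := hκ (r + 1); positivity)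
  set C : ℝ := 3 * (8 * (Φ + 1) + 1) with hC
  have hC0 : 0 < C := by positivity
  set η : ℝ := 1 / (32 * C) with hη
  have hη0 : 0 < η := by positivity
  obtain ⟨r, d, W, hF, hd2, hW, hE⟩ := enc_likely (PM_two hc h) (fun ε hε => arms2 hc h hε)
    (S := {0}) (s := 0) (fun x hx => by rw [Set.mem_singleton_iff.1 hx]; simp [nrm])
    (Set.mem_singleton _) (fun x y hxy => by
      simp only [Set.mem_singleton_iff, Prod.mk_eq_zero] at hxy ⊢; omega)
    (c := 1 / 4) (by norm_num) (by
      rw [le_sub_comm]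
      refine ulim_le (a := 0) (b := 1) (N₀ := 0) (fun _ => pr_nonneg _) (fun _ => pr_le_one _)
        fun N _ => ?_
      have := ob2_zero N
      simp only [Set.mem_ofPred_eq, Set.mem_singleton_iff, exists_eq_left]
      linarith) hη0 (fun r => 2 * l r + 2 * m r + r + 4)
  obtain ⟨N, hN, hEN⟩ := ulim_frequently (a := 0) (b := 1) (x := 1 - 2 * η) (fun _ => pr_nonneg _)
    (fun _ => pr_le_one _) (show _ < _ by linarith) (W + r + d + l r + m r + 4)
  set H := HN N ×ˢ HN N with hH
  have hgt := hgate (r + 1) d N hd2 (by omega)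
  set PX := pr (HN N) fun f => ∀ y ∈ XX r d, f y ≠ 0 with hPX
  set Pp := pr (HN N) fun f => ∀ y ∈ XX r d, 0 < f y with hPp
  have hκX : κ (r + 1) ≤ PX := hgt.trans (pr_mono fun f _ hf y hy => hf y (XX_sub hy))
  have hX4 : PX ≤ 4 * Pp := XX_pos
  have hκp : 0 < κ (r + 1) := hκ _
  have hPp0 : 0 < Pp := by linarith
  -- second moments near the origin on the event that the gates are positive
  have hPhi : (ex (HN N) fun f => Phi (absf f) * ind (∀ y ∈ XX r d, 0 < f y)) ≤ 4 * (Φ + 1) * Pp := by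
    have h1 := Phi_mix (l := l r) (N := N) (X := XX r d) (by omega)
      fun v hv => ball_gate_disj (by omega) (XX_sub hv)
    have h2 : (ex (HN N) fun f => Phi (absf f) * ind (∀ y ∈ XX r d, 0 < f y)) ≤
        ex (HN N) fun f => Phi (absf f) * ind (∀ y ∈ XX r d, f y ≠ 0) :=
      ex_mono fun f _ => mul_le_mul_of_nonneg_left (ind_mono fun hf y hy => (hf y hy).ne') (Phi_nonneg _)
    have h3 : PhiN (l r) * PX ≤ Φ * PX := mul_le_mul_of_nonneg_right (hle _) (hκp.le.trans hκX)
    have h4 := hle N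
    have h5 := hl r
    nlinarith
  have hPG : pr H (GG r d) = Pp ^ 2 := by
    rw [sq]
    exact pr_prod_mul (fun f : V → ℤ => ∀ y ∈ XX r d, 0 < f y) fun f : V → ℤ => ∀ y ∈ XX r d, 0 < f y
  have hDG : (ex H fun b => dd b ^ 2 * ind (GG r d b)) ≤ C * Pp ^ 2 := by
    have h1 : (ex H fun b => dd b ^ 2 * ind (GG r d b)) ≤ ex H fun b =>
        3 * ((Phi (absf b.1) * ind (∀ y ∈ XX r d, 0 < b.1 y)) * ind (∀ y ∈ XX r d, 0 < b.2 y) +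
          ind (∀ y ∈ XX r d, 0 < b.1 y) * (Phi (absf b.2) * ind (∀ y ∈ XX r d, 0 < b.2 y)) +
          ind (GG r d b)) := by
      refine ex_mono fun b _ => ?_
      have e : ind (GG r d b) = ind (∀ y ∈ XX r d, 0 < b.1 y) * ind (∀ y ∈ XX r d, 0 < b.2 y) := by
        rw [GG, ind_and]
      rw [e]
      have i0 : 0 ≤ ind (∀ y ∈ XX r d, 0 < b.1 y) * ind (∀ y ∈ XX r d, 0 < b.2 y) :=
        mul_nonneg (ind_nonneg _) (ind_nonneg _)
      have q : dd b ^ 2 ≤ 3 * (Phi (absf b.1) + Phi (absf b.2) + 1) := by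
        rw [dd_eq, Phi, Phi, absf_sq, absf_sq, absf_sq, absf_sq]
        nlinarith [sq_nonneg ((b.1 0 : ℝ) - b.2 (1, 0)), sq_nonneg ((b.1 0 : ℝ) + 1),
          sq_nonneg ((b.2 (1, 0) : ℝ) + 1), sq_nonneg (b.1 (1, 0) : ℝ), sq_nonneg (b.2 0 : ℝ)]
      nlinarith [mul_le_mul_of_nonneg_right q i0]
    rw [ex_mul_left, ex_add, ex_add] at h1
    have e1 := ex_prod_mul (H := HN N) (H' := HN N)
      (fun f => Phi (absf f) * ind (∀ y ∈ XX r d, 0 < f y)) fun f => ind (∀ y ∈ XX r d, 0 < f y)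
    have e2 := ex_prod_mul (H := HN N) (H' := HN N)
      (fun f => ind (∀ y ∈ XX r d, 0 < f y)) fun f => Phi (absf f) * ind (∀ y ∈ XX r d, 0 < f y)
    have e3 : (ex H fun b => ind (GG r d b)) = Pp ^ 2 := hPG
    have e4 : (ex (HN N) fun f => ind (∀ y ∈ XX r d, 0 < f y)) = Pp := rfl
    rw [e4] at e1 e2
    rw [e1, e2, e3] at h1
    have h2 := mul_le_mul_of_nonneg_right hPhi hPp0.le
    rw [hC]
    nlinarith
  set GV' : (V → ℤ) × (V → ℤ) → Prop := fun b => GV r d W (b.1, flip (-1) b.2) with hGV'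
  have hVG : ∀ b, GV' b → GG r d b := fun b hb => GG_iff.2 hb.1
  have hbad : pr H (fun b => GG r d b ∧ ¬ GV' b) ≤ 2 * η * Pp ^ 2 := by
    have f1 : pr H (fun b => ob2 b ∈ Enc {0} r d W) * pr H (GG r d) ≤
        pr H fun b => ob2 b ∈ Enc {0} r d W ∧ GG r d b :=
      pr_fkg (pair_lattice N) (fun a b hab h => Enc_upper _ _ _ _ (ob2_mono hab) h)
        fun a b hab hG => ⟨fun y hy => by
            have a1 : a.1 y ≤ b.1 y := hab.1 y
            have := hG.1 y hy
            omega, fun y hy => by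
            have a1 : a.2 y ≤ b.2 y := hab.2 y
            have := hG.2 y hy
            omega⟩
    have f2 : pr H (fun b => ob2 b ∈ Enc {0} r d W ∧ GG r d b) ≤ pr H fun b => GG r d b ∧ GV' b :=
      pr_mono fun b _ hb => ⟨hb.2, enc_GV (by omega) hb.1 hb.2⟩
    have f3 := pr_split (H := H) (GG r d) GV'
    rw [hPG] at f1 f3
    have f4 := mul_le_mul_of_nonneg_right hEN.le (sq_nonneg Pp)
    nlinarith
  have hcs : |ex H fun b => dd b * ind (GG r d b ∧ ¬ GV' b)| ≤ Pp ^ 2 / 4 := by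
    have g1 := ex_cs_ind (H := H) dd fun b => GG r d b ∧ ¬ GV' b
    have g2 : (ex H fun b => dd b ^ 2 * ind (GG r d b ∧ ¬ GV' b)) ≤ C * Pp ^ 2 :=
      (ex_mono fun b _ => mul_le_mul_of_nonneg_left (ind_mono fun hb => hb.1) (sq_nonneg _)).trans hDG
    have g3 := mul_le_mul g2 hbad (pr_nonneg _) (by positivity)
    refine abs_le_of_sq_le_sq (g1.trans (g3.trans (le_of_eq ?_))) (by positivity)
    rw [hη]
    field_simp
    norm_num
  have hneg := hm r N (by omega) (GG r d) fun b b' h1 h2 hb => by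
    have hout : ∀ y ∈ XX r d, y ∉ bl (m r) := fun y hy h' =>
      ball_gate_disj (l := m r) (by omega) (XX_sub hy) (bl_mono (by omega) h')
    exact ⟨fun y hy => h1 y (hout y hy) ▸ hb.1 y hy, fun y hy => h2 y (hout y hy) ▸ hb.2 y hy⟩
  have hpos : 0 ≤ ex H fun b => dd b * ind (GV' b) := GV_ge (by omega)
  have hsp : (ex H fun b => dd b * ind (GG r d b)) = (ex H fun b => dd b * ind (GV' b)) +
      ex H fun b => dd b * ind (GG r d b ∧ ¬ GV' b) := by
    rw [← ex_add]
    refine ex_congr fun b _ => ?_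
    rw [ind_split (GG r d b) (GV' b), ind_congr (show GG r d b ∧ GV' b ↔ GV' b from
      ⟨fun h => h.2, fun h => ⟨hVG b h, h⟩⟩)]
    ring
  rw [hPG] at hneg
  have z1 := (abs_le.1 hneg).2
  have z2 := (abs_le.1 hcs).1
  have z3 : (κ (r + 1) / 4) ^ 2 ≤ Pp ^ 2 := pow_le_pow_left₀ (by positivity) (by linarith) 2
  have z4 : 0 < Pp ^ 2 := by positivity
  linarith

/-- The sequence is decreasing and nonnegative, so it converges, and its limit cannot be positive.
-/
lemma p0_tendsto : Filter.Tendsto p0 Filter.atTop (nhds 0) := by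
  have hb : BddBelow (Set.range p0) := ⟨0, by rintro _ ⟨N, rfl⟩; exact pr_nonneg _⟩
  have h1 := tendsto_atTop_ciInf (fun _ _ h => p0_anti h) hb
  have h0 : 0 ≤ ⨅ N, p0 N := le_ciInf fun N => pr_nonneg _
  rcases h0.eq_or_lt with h | h
  · rwa [← h] at h1
  · exact (p0_not_bounded h fun N => ciInf_le hb N).elim

end StageTwoEnd

/-! ### Translation to the statement -/

section Translation
open Classical

lemma mem_Lam {N : ℕ} {v : V} : v ∈ Lam (2 * N) ↔ nrm v ≤ 2 * N := by
  simp only [Lam, Set.mem_ofPred_eq, nrm, Int.abs_eq_natAbs]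
  omega

lemma adj2_iff {u v : V} : adj2 u v ↔ gr.Adj u v := by
  rw [adj2, gr_adj, Int.abs_eq_natAbs, Int.abs_eq_natAbs]
  omega

lemma Lam_bd {N : ℕ} {v : V} : (v ∈ Lam (2 * N) ∧ ∃ w, w ∉ Lam (2 * N) ∧ adj2 v w) ↔ nrm v = 2 * N := by
  simp only [mem_Lam, adj2_iff]
  constructor
  · rintro ⟨h, w, hw, hvw⟩
    rw [gr_adj] at hvw
    unfold nrm at *
    omega
  · intro h
    refine ⟨h.le, ?_⟩
    rcases le_or_gt 0 v.1 with h0 | h0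
    · refine ⟨(v.1 + 1, v.2), ?_, ?_⟩
      · unfold nrm at *; simp only; omega
      · rw [gr_adj]; simp only; omega
    · refine ⟨(v.1 - 1, v.2), ?_, ?_⟩
      · unfold nrm at *; simp only; omega
      · rw [gr_adj]; simp only; omega

/-- Extension of a configuration on the ball by zero. -/
def ext0 (N : ℕ) (h : ↥(Lam (2 * N)) → ℤ) : V → ℤ :=
  fun v => if hv : v ∈ Lam (2 * N) then h ⟨v, hv⟩ else 0

lemma ext0_mem {N : ℕ} {h : ↥(Lam (2 * N)) → ℤ} (hh : h ∈ HF (2 * N)) : ext0 N h ∈ HN N := by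
  obtain ⟨h1, h2, h3⟩ := hh
  have hin : ∀ v (hv : v ∈ Lam (2 * N)), ext0 N h v = h ⟨v, hv⟩ := fun v hv => dif_pos hv
  have hlip : ∀ u ∈ bl (2 * N), ∀ v, gr.Adj u v → (ext0 N h u - ext0 N h v).natAbs = 1 := by
    intro u hu v huv
    have hu' : u ∈ Lam (2 * N) := mem_Lam.2 (mem_bl.1 hu).le
    have hv' : v ∈ Lam (2 * N) := by
      rw [mem_bl] at hu
      rw [mem_Lam]
      rw [gr_adj] at huv
      unfold nrm at *
      omega
    have := h1 ⟨u, hu'⟩ ⟨v, hv'⟩ (adj2_iff.2 huv)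
    rw [hin u hu', hin v hv']
    rw [Int.abs_eq_natAbs] at this
    exact_mod_cast this
  have hev : ∀ v, (v.1 + v.2) % 2 = 0 → ext0 N h v % 2 = 0 := by
    intro v hv
    by_cases hL : v ∈ Lam (2 * N)
    · rw [hin v hL]
      exact Int.even_iff.1 (h2 ⟨v, hL⟩ (Int.even_iff.2 hv))
    · rw [ext0, dif_neg hL]; rfl
  refine mem_Hom.2 ⟨fun v hv => ?_, fun v hv => ?_, hlip⟩
  · by_cases hL : v ∈ Lam (2 * N)
    · rw [hin v hL]
      refine h3 ⟨v, hL⟩ (Lam_bd.2 ?_).2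
      rw [mem_bl] at hv
      rw [mem_Lam] at hL
      show nrm v = 2 * N
      omega
    · exact dif_neg hL
  · rcases Int.emod_two_eq_zero_or_one (v.1 + v.2) with hp | hp
    · have := hev v hp
      omega
    · have a1 := hlip v hv (v.1 + 1, v.2) (by rw [gr_adj]; simp only; omega)
      have a2 := hev (v.1 + 1, v.2) (by simp only; omega)
      omega

lemma restrict_mem {N : ℕ} {f : V → ℤ} (hf : f ∈ HN N) :
    (fun v : ↥(Lam (2 * N)) => f v.1) ∈ HF (2 * N) := by
  refine ⟨fun u v huv => ?_, fun v hv => ?_, fun v hv => ?_⟩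
  · have hu := mem_Lam.1 u.2
    have hv := mem_Lam.1 v.2
    rw [adj2_iff] at huv
    by_cases hub : u.1 ∈ bl (2 * N)
    · have := (mem_Hom.1 hf).2.2 u.1 hub v.1 huv
      simp only [Int.abs_eq_natAbs]
      omega
    · have hvb : v.1 ∈ bl (2 * N) := by
        rw [mem_bl] at *
        rw [gr_adj] at huv
        unfold nrm at *
        omega
      have := (mem_Hom.1 hf).2.2 v.1 hvb u.1 huv.symm
      simp only [Int.abs_eq_natAbs]
      omega
  · exact Int.even_iff.2 (HN_even hf (Int.even_iff.1 hv))
  · have := Lam_bd.1 ⟨v.2, hv⟩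
    exact (mem_Hom.1 hf).1 v.1 (by rw [mem_bl]; omega)

/-- Height functions on the closed ball vanishing on its boundary are the same as height functions
on the open ball with zero values outside. -/
def HFequiv (N : ℕ) : ↥(HF (2 * N)) ≃ {f // f ∈ HN N} where
  toFun h := ⟨ext0 N h.1, ext0_mem h.2⟩
  invFun f := ⟨fun v => f.1 v.1, restrict_mem f.2⟩
  left_inv h := by
    ext v
    exact dif_pos v.2
  right_inv f := by
    ext v
    simp only [ext0]
    by_cases hv : v ∈ Lam (2 * N)
    · rw [dif_pos hv]
    · rw [dif_neg hv, (mem_Hom.1 f.2).1 v (by rw [mem_Lam] at hv; rw [mem_bl]; omega)]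
      rfl

lemma tsum_HF (N : ℕ) (G : ℤ → ℝ) :
    ∑' h : ↥(HF (2 * N)), G (heightAt (2 * N) h) = ∑ f ∈ HN N, G (f 0) := by
  rw [← Finset.tsum_subtype (HN N) fun f => G (f 0), ← (HFequiv N).tsum_eq]
  refine tsum_congr fun h => congrArg G ?_
  show h.1 ⟨(0, 0), _⟩ = ext0 N h.1 (0, 0)
  rw [ext0, dif_pos (origin_mem (2 * N))]

lemma probMod3_eq (N : ℕ) (i : ZMod 3) :
    probMod3 (2 * N) i = pr (HN N) fun f => ((f 0 : ℤ) : ZMod 3) = i := by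
  have h1 : total (2 * N) = (HN N).card := by
    have := tsum_HF N fun _ => 1
    rw [total, this, Finset.sum_const, nsmul_eq_mul, mul_one]
  have h2 := tsum_HF N fun k => if ((k : ℤ) : ZMod 3) = i then 1 else 0
  rw [probMod3, h1, pr, ex]
  congr 1
  refine Eq.trans (tsum_congr fun h => ?_) (h2.trans (Finset.sum_congr rfl fun f _ => ?_))
  · split_ifs <;> rfl
  · split_ifs <;> rfl

/-- The class `0` is controlled by `mod3_bound`; the classes `1` and `2` have equal probabilities
by `h ↦ -h`. -/
lemma probMod3_bound (N : ℕ) (i : ZMod 3) : |probMod3 (2 * N) i - 1 / 3| ≤ p0 N := by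
  have z : ∀ k j : ℤ, ((k : ℤ) : ZMod 3) = (j : ZMod 3) ↔ k % 3 = j % 3 := fun k j =>
    ZMod.intCast_eq_intCast_iff' k j 3
  have hn := HN_nonempty N
  have hc : 0 < ((HN N).card : ℝ) := by exact_mod_cast Finset.card_pos.2 hn
  have hp : 0 ≤ p0 N := pr_nonneg _
  set q : ℤ → ℝ := fun j => pr (HN N) fun f => f 0 % 3 = j with hq
  have h0 : |3 * q 0 - 1| ≤ 2 * p0 N := by
    have h := mod3_bound N
    have e : q 0 = (((HN N).filter fun h => h 0 % 3 = 0).card : ℝ) / (HN N).card := by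
      rw [Finset.card_filter]
      push_cast
      simp only [hq, pr, ex]
      congr 1
      exact Finset.sum_congr rfl fun f _ => by by_cases h : f 0 % 3 = 0 <;> simp [h]
    rw [e, p0_eq]
    have e2 : 3 * ((((HN N).filter fun h => h 0 % 3 = 0).card : ℝ) / (HN N).card) - 1 =
        (3 * (((HN N).filter fun h => h 0 % 3 = 0).card : ℝ) - (HN N).card) / (HN N).card := by
      field_simp
    rw [e2, abs_div, abs_of_pos hc, ← mul_div_assoc]
    exact div_le_div_of_nonneg_right h hc.le
  have h12 : q 1 = q 2 := by
    have : q 1 = pr (HN N) fun f => (-f) 0 % 3 = 1 := ex_HN_neg fun f => ind (f 0 % 3 = 1)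
    rw [this]
    refine pr_congr fun f _ => ?_
    simp only [Pi.neg_apply]
    omega
  have hsum : q 0 + q 1 + q 2 = 1 := by
    rw [← ex_const hn (1 : ℝ)]
    simp only [hq, pr_def]
    rw [← ex_add, ← ex_add]
    refine ex_congr fun f _ => ?_
    have : f 0 % 3 = 0 ∨ f 0 % 3 = 1 ∨ f 0 % 3 = 2 := by omega
    rcases this with h | h | h <;> simp [ind, h]
  have key : ∀ j : ℤ, j = 0 ∨ j = 1 ∨ j = 2 → |q j - 1 / 3| ≤ p0 N := by
    intro j hj
    rw [abs_le] at h0 ⊢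
    rcases hj with rfl | rfl | rfl <;> constructor <;> linarith [h0.1, h0.2]
  rw [probMod3_eq]
  obtain ⟨j, hj, rfl⟩ : ∃ j : ℤ, (j = 0 ∨ j = 1 ∨ j = 2) ∧ (j : ZMod 3) = i := by
    fin_cases i
    · exact ⟨0, by simp, rfl⟩
    · exact ⟨1, by simp, rfl⟩
    · exact ⟨2, by simp, rfl⟩
  have e : (pr (HN N) fun f => ((f 0 : ℤ) : ZMod 3) = (j : ZMod 3)) = q j :=
    pr_congr fun f _ => by rw [z]; omega
  rw [e]
  exact key j hj

end Translation

/-- **Asymptotic uniformity of the height modulo 3.**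
If `h_L` is uniform on homomorphism height functions on `Λ(L) ⊂ ℤ²` with zero boundary
values, then for each `i`, `P(h_L(0,0) ≡ i (mod 3)) → 1/3` as `L → ∞` along even `L`. -/
theorem mod_three_uniform (i : ZMod 3) :
    Filter.Tendsto (fun L : ℕ => probMod3 L i)
      (Filter.atTop ⊓ Filter.principal {L : ℕ | Even L})
      (nhds (1 / 3 : ℝ)) := by
  have h1 : Filter.Tendsto (fun L : ℕ => p0 (L / 2)) Filter.atTop (nhds 0) :=
    p0_tendsto.comp (Nat.tendsto_div_const_atTop two_ne_zero)
  rw [← tendsto_sub_nhds_zero_iff]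
  refine squeeze_zero_norm' ?_ (h1.mono_left inf_le_left)
  rw [Filter.eventually_inf_principal]
  filter_upwards with L hL
  obtain ⟨N, rfl⟩ := even_iff_two_dvd.1 hL
  rw [Nat.mul_div_cancel_left N two_pos, Real.norm_eq_abs]
  exact probMod3_bound N i

end Stmt6
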